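/- For all integers j with 0 ≤ j ≤ 8 and all integers k ≤ 2, the space S_{j,k}(Γ₂[2]) of Siegel cusp forms of degree 2 and weight (j,k) on Γ₂[2] is zero. -/

import Mathlib

noncomputable section

open Matrix Complex Filter Topology

/-- The standard symplectic form matrix of size 4. -/
def J4 : Matrix (Fin 4) (Fin 4) ℤ := !![0,0,1,0; 0,0,0,1; -1,0,0,0; 0,-1,0,0]

/-- The Siegel modular group `Γ₂ = Sp(4,ℤ)`, as a set of 4×4 integer matrices. -/
def Sp4Z : Set (Matrix (Fin 4) (Fin 4) ℤ) := {γ | γᵀ * J4 * γ = J4}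

/-- The principal congruence subgroup `Γ₂[2]` of level 2. -/
def Sp4Z2 : Set (Matrix (Fin 4) (Fin 4) ℤ) :=
  {γ | γ ∈ Sp4Z ∧ ∀ i j, ((γ i j : ZMod 2) = if i = j then 1 else 0)}

/-- The Siegel upper half space of degree 2: symmetric 2×2 complex matrices with
positive definite imaginary part (encoded as functions `Fin 2 → Fin 2 → ℂ`). -/
def H2 : Set (Fin 2 → Fin 2 → ℂ) :=
  {τ | (Matrix.of τ).IsSymm ∧ (Matrix.of fun i j => (τ i j).im).PosDef}

/-- The four 2×2 blocks of a 4×4 integer matrix, as complex matrices. -/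
def blk (γ : Matrix (Fin 4) (Fin 4) ℤ) (r s : Fin 2) : Matrix (Fin 2) (Fin 2) ℂ :=
  Matrix.of fun i j =>
    ((γ ⟨2 * (r : ℕ) + (i : ℕ), by have h1 := r.isLt; have h2 := i.isLt; omega⟩
        ⟨2 * (s : ℕ) + (j : ℕ), by have h1 := s.isLt; have h2 := j.isLt; omega⟩ : ℤ) : ℂ)

/-- The factor `cτ + d`. -/
def den (γ : Matrix (Fin 4) (Fin 4) ℤ) (τ : Fin 2 → Fin 2 → ℂ) : Matrix (Fin 2) (Fin 2) ℂ :=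
  blk γ 1 0 * Matrix.of τ + blk γ 1 1

/-- The action `γ·τ = (aτ+b)(cτ+d)⁻¹` of `Sp(4)` on the Siegel upper half space. -/
def moeb (γ : Matrix (Fin 4) (Fin 4) ℤ) (τ : Fin 2 → Fin 2 → ℂ) : Fin 2 → Fin 2 → ℂ :=
  fun i j => ((blk γ 0 0 * Matrix.of τ + blk γ 0 1) * (den γ τ)⁻¹) i j

/-- Matrix coefficients of the `j`-th symmetric power of the standard representation of
`GL(2,ℂ)`, in the basis `x₁^(j-i) x₂^i`. -/
def symCoeff (j : ℕ) (m : Matrix (Fin 2) (Fin 2) ℂ) (l i : Fin (j + 1)) : ℂ :=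
  (((Polynomial.C (m 0 0) + Polynomial.C (m 1 0) * Polynomial.X) ^ (j - (l : ℕ)) *
    (Polynomial.C (m 0 1) + Polynomial.C (m 1 1) * Polynomial.X) ^ (l : ℕ)).coeff i)

/-- The `j`-th symmetric power `Sym^j(m)` acting on coordinate vectors. -/
def symAct (j : ℕ) (m : Matrix (Fin 2) (Fin 2) ℂ) (v : Fin (j + 1) → ℂ) : Fin (j + 1) → ℂ :=
  fun i => ∑ l, symCoeff j m l i * v l

lemma symAct_add (j : ℕ) (m : Matrix (Fin 2) (Fin 2) ℂ) (v w : Fin (j + 1) → ℂ) :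
    symAct j m (v + w) = symAct j m v + symAct j m w := by
  funext i
  simp [symAct, mul_add, Finset.sum_add_distrib]

lemma symAct_smul (j : ℕ) (m : Matrix (Fin 2) (Fin 2) ℂ) (a : ℂ) (v : Fin (j + 1) → ℂ) :
    symAct j m (a • v) = a • symAct j m v := by
  funext i
  simp only [symAct, Pi.smul_apply, smul_eq_mul, Finset.mul_sum]
  exact Finset.sum_congr rfl fun l _ => by ring

lemma symAct_zero (j : ℕ) (m : Matrix (Fin 2) (Fin 2) ℂ) : symAct j m 0 = 0 := by
  funext i; simp [symAct]

/-- The weight `(j,k)` automorphy action `Sym^j(m) ⊗ det(m)^k`. -/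
def wt (j : ℕ) (k : ℤ) (m : Matrix (Fin 2) (Fin 2) ℂ) (v : Fin (j + 1) → ℂ) :
    Fin (j + 1) → ℂ :=
  (m.det ^ k) • symAct j m v

lemma wt_add (j : ℕ) (k : ℤ) (m : Matrix (Fin 2) (Fin 2) ℂ) (v w : Fin (j + 1) → ℂ) :
    wt j k m (v + w) = wt j k m v + wt j k m w := by
  simp [wt, symAct_add, smul_add]

lemma wt_smul (j : ℕ) (k : ℤ) (m : Matrix (Fin 2) (Fin 2) ℂ) (a : ℂ) (v : Fin (j + 1) → ℂ) :
    wt j k m (a • v) = a • wt j k m v := by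
  rw [wt, wt, symAct_smul, smul_comm]

lemma wt_zero (j : ℕ) (k : ℤ) (m : Matrix (Fin 2) (Fin 2) ℂ) : wt j k m 0 = 0 := by
  simp [wt, symAct_zero]

/-- The slash operation `(F|γ)(τ) = Sym^j(cτ+d)⁻¹ det(cτ+d)⁻ᵏ F(γ·τ)`. -/
def slashS (j : ℕ) (k : ℤ) (γ : Matrix (Fin 4) (Fin 4) ℤ)
    (F : (Fin 2 → Fin 2 → ℂ) → (Fin (j + 1) → ℂ)) (τ : Fin 2 → Fin 2 → ℂ) :
    Fin (j + 1) → ℂ :=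
  ((den γ τ).det ^ (-k)) • symAct j ((den γ τ)⁻¹) (F (moeb γ τ))

lemma slashS_add (j : ℕ) (k : ℤ) (γ : Matrix (Fin 4) (Fin 4) ℤ)
    (F G : (Fin 2 → Fin 2 → ℂ) → (Fin (j + 1) → ℂ)) (τ : Fin 2 → Fin 2 → ℂ) :
    slashS j k γ (F + G) τ = slashS j k γ F τ + slashS j k γ G τ := by
  simp [slashS, symAct_add, smul_add]

lemma slashS_smul (j : ℕ) (k : ℤ) (γ : Matrix (Fin 4) (Fin 4) ℤ) (a : ℂ)
    (F : (Fin 2 → Fin 2 → ℂ) → (Fin (j + 1) → ℂ)) (τ : Fin 2 → Fin 2 → ℂ) :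
    slashS j k γ (a • F) τ = a • slashS j k γ F τ := by
  simp only [slashS, Pi.smul_apply, symAct_smul]
  rw [smul_comm]

lemma slashS_zero (j : ℕ) (k : ℤ) (γ : Matrix (Fin 4) (Fin 4) ℤ) (τ : Fin 2 → Fin 2 → ℂ) :
    slashS j k γ (0 : (Fin 2 → Fin 2 → ℂ) → (Fin (j + 1) → ℂ)) τ = 0 := by
  simp [slashS, symAct_zero]

/-- The diagonal point `diag(τ₁,τ₂)` of the Siegel upper half space. -/
def diagH (τ₁ τ₂ : ℂ) : Fin 2 → Fin 2 → ℂ :=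
  fun i j => if i = j then (if i = 0 then τ₁ else τ₂) else 0

/-- `F` is a Siegel cusp form of degree 2 and weight `(j,k)` on `Γ`, with character `χ`:
holomorphic on `ℍ₂`, transforming by `F(γ·τ) = χ(γ) Sym^j(cτ+d) det(cτ+d)^k F(τ)` for `γ ∈ Γ`,
with `(F|γ)(diag(τ₁,it)) → 0` as `t → ∞` for every `γ ∈ Γ₂`, and (normalization) vanishing
off `ℍ₂`. -/
def IsSiegelCuspForm (j : ℕ) (k : ℤ) (Γ : Set (Matrix (Fin 4) (Fin 4) ℤ))
    (χ : Matrix (Fin 4) (Fin 4) ℤ → ℂ)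
    (F : (Fin 2 → Fin 2 → ℂ) → (Fin (j + 1) → ℂ)) : Prop :=
  DifferentiableOn ℂ F H2 ∧
  (∀ γ ∈ Γ, ∀ τ ∈ H2, F (moeb γ τ) = χ γ • wt j k (den γ τ) (F τ)) ∧
  (∀ γ ∈ Sp4Z, ∀ τ₁ : ℂ, 0 < τ₁.im →
    Tendsto (fun t : ℝ => slashS j k γ F (diagH τ₁ (t * Complex.I))) atTop (𝓝 0)) ∧
  (∀ τ, τ ∉ H2 → F τ = 0)

/-- The space `S_{j,k}(Γ, χ)` of Siegel cusp forms of degree 2 and weight `(j,k)` on `Γ`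
with character `χ`, as a complex vector space. -/
def SiegelCusp (j : ℕ) (k : ℤ) (Γ : Set (Matrix (Fin 4) (Fin 4) ℤ))
    (χ : Matrix (Fin 4) (Fin 4) ℤ → ℂ) :
    Submodule ℂ ((Fin 2 → Fin 2 → ℂ) → (Fin (j + 1) → ℂ)) where
  carrier := {F | IsSiegelCuspForm j k Γ χ F}
  add_mem' := by
    rintro F G hF hG
    refine ⟨hF.1.add hG.1, ?_, ?_, ?_⟩
    · intro γ hγ τ hτ
      show F (moeb γ τ) + G (moeb γ τ) = χ γ • wt j k (den γ τ) (F τ + G τ)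
      rw [wt_add, smul_add, hF.2.1 γ hγ τ hτ, hG.2.1 γ hγ τ hτ]
    · intro γ hγ τ₁ hτ
      have h := (hF.2.2.1 γ hγ τ₁ hτ).add (hG.2.2.1 γ hγ τ₁ hτ)
      rw [add_zero] at h
      exact h.congr fun t => (slashS_add j k γ F G _).symm
    · intro τ hτ
      show F τ + G τ = 0
      rw [hF.2.2.2 τ hτ, hG.2.2.2 τ hτ, add_zero]
  zero_mem' := by
    refine ⟨?_, ?_, ?_, ?_⟩
    · exact differentiableOn_const 0
    · intro γ hγ τ hτ
      show (0 : Fin (j + 1) → ℂ) = χ γ • wt j k (den γ τ) 0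
      rw [wt_zero, smul_zero]
    · intro γ hγ τ₁ hτ
      have : (fun t : ℝ => slashS j k γ (0 : (Fin 2 → Fin 2 → ℂ) → (Fin (j + 1) → ℂ))
          (diagH τ₁ (t * Complex.I))) = fun _ => 0 := by
        funext t; exact slashS_zero j k γ _
      rw [this]
      exact tendsto_const_nhds
    · intro τ _; rfl
  smul_mem' := by
    rintro a F hF
    refine ⟨hF.1.const_smul a, ?_, ?_, ?_⟩
    · intro γ hγ τ hτ
      show a • F (moeb γ τ) = χ γ • wt j k (den γ τ) (a • F τ)
      rw [hF.2.1 γ hγ τ hτ, wt_smul, smul_comm]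
    · intro γ hγ τ₁ hτ
      have h := (hF.2.2.1 γ hγ τ₁ hτ).const_smul a
      rw [smul_zero] at h
      exact h.congr fun t => (slashS_smul j k γ a F _).symm
    · intro τ hτ
      show a • F τ = 0
      rw [hF.2.2.2 τ hτ, smul_zero]

/-- `ε` is (on `Γ₂`) the unique nontrivial homomorphism `Γ₂ → {±1}`. -/
def IsEps (ε : Matrix (Fin 4) (Fin 4) ℤ → ℂ) : Prop :=
  (∀ γ ∈ Sp4Z, ε γ = 1 ∨ ε γ = -1) ∧
  (∀ γ ∈ Sp4Z, ∀ δ ∈ Sp4Z, ε (γ * δ) = ε γ * ε δ) ∧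
  (∃ γ ∈ Sp4Z, ε γ ≠ 1)

/-!
Let `F` be a cusp form and `G = F|γ` one of its slash translates, with components `G_i(τ, z, w)`
at the point `(τ z; z w)`. By induction on `a`, the component `G_i` vanishes along `z = 0` to order
`a - min(i, j - i)`: let `c_i` be its Taylor coefficient of that order.

As functions of `w`, the `c_i` are the coefficients of a polynomial in one variable which transforms
under `SL(2, ℤ)`, up to permuting the translates, and `Γ(2)` acts trivially. A Fourier-Jacobi
coefficient of low index vanishes, because its index bounds the number of its zeros; this makes the
`c_i` decay exponentially at every cusp. If the weight is small compared with that decay, then the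
valence bound on the product of the six translates forces `c_i = 0`. Otherwise, substitute for the
variable of the polynomial the quasimodular form `φ` of level `Γ₀(2)` built from `E₂`: the value and
the derivative at `φ` are genuine modular forms, of too small a weight for their decay, so they
vanish. The polynomial then has a double zero at each of the three conjugates of `φ`, more zeros
than its degree allows.

Thus `G` vanishes to infinite order along `z = 0`, whence `F = 0`.
-/

open UpperHalfPlane (upperHalfPlaneSet isOpen_upperHalfPlaneSet atImInfty ofComplex)
open scoped MatrixGroups UpperHalfPlane

local notation "ℍₒ" => upperHalfPlaneSet

/-! ### The modular group and the valence bound -/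

/-- Reduction of `SL(2, ℤ)` modulo 2. -/
def modTwo : SL(2, ℤ) →* SL(2, ZMod 2) := Matrix.SpecialLinearGroup.map (Int.castRingHom (ZMod 2))

lemma modTwo_apply (σ : SL(2, ℤ)) (i j : Fin 2) : modTwo σ i j = (σ i j : ZMod 2) := by
  simp [modTwo]

lemma even_iff_modTwo (σ : SL(2, ℤ)) (i j : Fin 2) : Even (σ i j) ↔ modTwo σ i j = 0 := by
  rw [modTwo_apply, ZMod.intCast_zmod_eq_zero_iff_dvd]
  exact even_iff_two_dvd

lemma modTwo_surjective : Function.Surjective modTwo := by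
  have lift : ∀ a b c d : ZMod 2, a * d - b * c = 1 →
      ∃ A ∈ Finset.Icc (-1 : ℤ) 1, ∃ B ∈ Finset.Icc (-1 : ℤ) 1, ∃ C ∈ Finset.Icc (-1 : ℤ) 1,
        ∃ D ∈ Finset.Icc (-1 : ℤ) 1, A * D - B * C = 1 ∧
          (A : ZMod 2) = a ∧ (B : ZMod 2) = b ∧ (C : ZMod 2) = c ∧ (D : ZMod 2) = d := by
    decide
  intro s
  have hdet := s.det_coe
  rw [Matrix.det_fin_two] at hdet
  obtain ⟨A, -, B, -, C, -, D, -, h, hA, hB, hC, hD⟩ := lift _ _ _ _ hdet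
  refine ⟨⟨!![A, B; C, D], by rw [Matrix.det_fin_two_of, h]⟩, ?_⟩
  ext i j
  fin_cases i <;> fin_cases j <;> assumption

/-- The factor of automorphy `cτ + d` of `σ = (a b; c d)`. -/
def autFactor (σ : SL(2, ℤ)) (τ : ℂ) : ℂ := (σ 1 0 : ℂ) * τ + (σ 1 1 : ℂ)

/-- The fractional linear action `(aτ + b) / (cτ + d)` of `σ = (a b; c d)`, as a function of a
complex number; off the upper half plane it may take the junk value `x / 0 = 0`. -/
def mobius (σ : SL(2, ℤ)) (τ : ℂ) : ℂ := ((σ 0 0 : ℂ) * τ + (σ 0 1 : ℂ)) / autFactor σ τ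

lemma autFactor_coe (σ : SL(2, ℤ)) (τ : ℍ) : autFactor σ τ = UpperHalfPlane.denom σ τ := by
  rw [ModularGroup.denom_apply]
  rfl

lemma mobius_coe (σ : SL(2, ℤ)) (τ : ℍ) : mobius σ τ = ((σ • τ : ℍ) : ℂ) := by
  rw [UpperHalfPlane.specialLinearGroup_apply]
  simp [mobius, autFactor]

lemma autFactor_ne_zero (σ : SL(2, ℤ)) {τ : ℂ} (hτ : 0 < τ.im) : autFactor σ τ ≠ 0 := by
  lift τ to ℍ using hτ
  rw [autFactor_coe]
  exact UpperHalfPlane.denom_ne_zero _ _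

lemma mobius_im_pos (σ : SL(2, ℤ)) {τ : ℂ} (hτ : 0 < τ.im) : 0 < (mobius σ τ).im := by
  lift τ to ℍ using hτ
  rw [mobius_coe]
  exact UpperHalfPlane.im_pos _

lemma autFactor_mul (ρ σ : SL(2, ℤ)) {τ : ℂ} (hτ : 0 < τ.im) :
    autFactor (ρ * σ) τ = autFactor ρ (mobius σ τ) * autFactor σ τ := by
  have hσ : autFactor σ τ ≠ 0 := autFactor_ne_zero σ hτ
  have hmobius : mobius σ τ * autFactor σ τ = σ 0 0 * τ + σ 0 1 := div_mul_cancel₀ _ hσ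
  simp only [autFactor, Matrix.SpecialLinearGroup.coe_mul, Matrix.mul_apply, Fin.sum_univ_two,
    Int.cast_add, Int.cast_mul] at hmobius ⊢
  linear_combination (-(ρ 1 0 : ℂ)) * hmobius

lemma mobius_mul (ρ σ : SL(2, ℤ)) {τ : ℂ} (hτ : 0 < τ.im) :
    mobius (ρ * σ) τ = mobius ρ (mobius σ τ) := by
  lift τ to ℍ using hτ
  rw [mobius_coe, mobius_coe, mobius_coe, mul_smul]

lemma discriminant_smul (σ : SL(2, ℤ)) (τ : ℍ) :
    ModularForm.discriminant (σ • τ) = autFactor σ τ ^ (12 : ℤ) * ModularForm.discriminant τ := by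
  rw [autFactor_coe]
  exact SlashInvariantForm.slash_action_eqn'' CuspForm.discriminant
    (γ := Matrix.SpecialLinearGroup.mapGL ℝ σ)
    (show _ ∈ (Matrix.SpecialLinearGroup.mapGL (n := Fin 2) (R := ℤ) ℝ).range from ⟨σ, rfl⟩) τ

section LevelOne

variable {w : ℤ} {V : ℕ} {N : ℂ → ℂ}

/-- The quotient `N² / Δ^V`; since `Δ ~ exp (2πiτ)` while the decay of `N` is measured in powers of
`exp (-π Im τ)`, it is the square of `N` that is divided. -/
def sqDivDiscriminant (V : ℕ) (N : ℂ → ℂ) (τ : ℍ) : ℂ := N τ ^ 2 / ModularForm.discriminant τ ^ V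

lemma sqDivDiscriminant_slash (hN : ∀ σ τ, 0 < τ.im → N (mobius σ τ) = autFactor σ τ ^ w * N τ)
    (σ : SL(2, ℤ)) :
    SlashAction.map (2 * w - 12 * (V : ℤ)) σ (sqDivDiscriminant V N) = sqDivDiscriminant V N := by
  ext τ
  have hJ : autFactor σ τ ≠ 0 := autFactor_ne_zero σ τ.im_pos
  have hexp : w * (2 : ℕ) - 12 * (V : ℤ) + -(2 * w - 12 * (V : ℤ)) = 0 := by push_cast; ring
  rw [ModularForm.SL_slash_apply, ← autFactor_coe, sqDivDiscriminant, ← mobius_coe,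
    hN σ τ τ.im_pos, discriminant_smul, mul_pow, mul_pow, mul_div_mul_comm, mul_right_comm,
    ← zpow_natCast, ← zpow_natCast, ← _root_.zpow_mul, ← _root_.zpow_mul, ← zpow_sub₀ hJ,
    ← zpow_add₀ hJ, hexp, zpow_zero, one_mul, sqDivDiscriminant]

lemma sqDivDiscriminant_isBoundedAtImInfty
    (hN : (fun τ : ℍ ↦ N τ) =O[atImInfty] fun τ ↦ Real.exp (-(Real.pi * V * τ.im))) :
    UpperHalfPlane.IsBoundedAtImInfty (sqDivDiscriminant V N) := by
  have hsq : (fun τ : ℍ ↦ N τ ^ 2) =O[atImInfty] fun τ ↦ ModularForm.discriminant τ ^ V := by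
    refine (hN.pow 2).trans ((ModularForm.exp_isBigO_discriminant.pow V).congr_left fun τ ↦ ?_)
    rw [← Real.exp_nat_mul, ← Real.exp_nat_mul]
    congr 1
    push_cast
    ring
  exact (Asymptotics.div_isBoundedUnder_of_isBigO hsq).isBigO_one ℝ

lemma eq_zero_of_levelOne_decay (hol : DifferentiableOn ℂ N ℍₒ)
    (hN : ∀ σ τ, 0 < τ.im → N (mobius σ τ) = autFactor σ τ ^ w * N τ)
    (hO : (fun τ : ℍ ↦ N τ) =O[atImInfty] fun τ ↦ Real.exp (-(Real.pi * V * τ.im)))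
    (hwV : w < 6 * V) {τ : ℂ} (hτ : 0 < τ.im) : N τ = 0 := by
  let f : ModularForm 𝒮ℒ (2 * w - 12 * (V : ℤ)) :=
    { toFun := sqDivDiscriminant V N
      slash_action_eq' := fun _ ⟨γ, hγ⟩ ↦ hγ ▸ sqDivDiscriminant_slash hN γ
      holo' := by
        rw [UpperHalfPlane.mdifferentiable_iff]
        have hΔ := UpperHalfPlane.mdifferentiable_iff.1 CuspForm.discriminant.holo'
        refine ((hol.pow 2).div (hΔ.pow V) fun z _ ↦
          pow_ne_zero _ (ModularForm.discriminant_ne_zero _)).congr fun z hz ↦ ?_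
        simp only [Function.comp, Pi.div_apply, Pi.pow_apply,
          UpperHalfPlane.ofComplex_apply_of_im_pos hz]
        rfl
      bdd_at_cusps' := by
        intro c hc
        rw [Subgroup.IsArithmetic.isCusp_iff_isCusp_SL2Z] at hc
        rw [OnePoint.isBoundedAt_iff_forall_SL2Z hc]
        intro γ _
        rw [sqDivDiscriminant_slash hN γ]
        exact sqDivDiscriminant_isBoundedAtImInfty hO }
  have hf : sqDivDiscriminant V N = 0 :=
    ModularFormClass.levelOne_neg_weight_eq_zero (by linarith) f
  have hq : N τ ^ 2 / ModularForm.discriminant ⟨τ, hτ⟩ ^ V = 0 := congrFun hf ⟨τ, hτ⟩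
  rw [div_eq_zero_iff, or_iff_left (pow_ne_zero _ (ModularForm.discriminant_ne_zero _))] at hq
  exact eq_zero_of_pow_eq_zero hq

end LevelOne

lemma exists_eqOn_zero_of_prod_eq_zero {ι : Type*} {U : Set ℂ} (hU : IsPreconnected U)
    (hne : U.Nonempty) {f : ι → ℂ → ℂ} {s : Finset ι} (hf : ∀ i, AnalyticOnNhd ℂ (f i) U)
    (h : ∀ z ∈ U, ∏ i ∈ s, f i z = 0) : ∃ i, ∀ z ∈ U, f i z = 0 := by
  classical
  induction s using Finset.induction_on with
  | empty =>
    obtain ⟨z, hz⟩ := hne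
    exact absurd (h z hz) one_ne_zero
  | insert a s ha ih =>
    simp only [Finset.prod_insert ha] at h
    rcases AnalyticOnNhd.eq_zero_or_eq_zero_of_mul_eq_zero (hf a)
      (Finset.analyticOnNhd_fun_prod s fun i _ ↦ hf i) h hU with h0 | h0
    · exact ⟨a, h0⟩
    · exact ih h0

lemma prod_isBigO_exp {ι : Type*} [Fintype ι] {f : ι → ℂ → ℂ} {v : ι → ℕ}
    (hb : ∀ c, ∃ C Y : ℝ, ∀ τ : ℂ, 0 < τ.im → Y ≤ τ.im →
      ‖f c τ‖ ≤ C * Real.exp (-(Real.pi * v c * τ.im))) :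
    (fun τ : ℍ ↦ ∏ c, f c τ) =O[atImInfty]
      fun τ ↦ Real.exp (-(Real.pi * (∑ c, v c : ℕ) * τ.im)) := by
  choose C Y hCY using hb
  have hfactor : ∀ c ∈ (Finset.univ : Finset ι), (fun τ : ℍ ↦ f c τ) =O[atImInfty]
      fun τ ↦ Real.exp (-(Real.pi * v c * τ.im)) := by
    refine fun c _ ↦ Asymptotics.IsBigO.of_bound (C c) ?_
    rw [Filter.eventually_iff, UpperHalfPlane.atImInfty_mem]
    refine ⟨Y c, fun τ hτ ↦ ?_⟩
    simpa [abs_of_pos (Real.exp_pos _)] using hCY c τ τ.im_pos hτ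
  refine (Asymptotics.IsBigO.finsetProd hfactor).congr_right fun τ ↦ ?_
  rw [← Real.exp_sum, Nat.cast_sum, Finset.mul_sum, Finset.sum_mul, Finset.sum_neg_distrib]

/-- The translates `g σ = g 1 |_w σ` of a holomorphic function on the upper half plane which is
invariant of weight `w` under the kernel of `φ`. -/
structure IsSlashOrbit {H : Type*} [Group H] (φ : SL(2, ℤ) →* H) (w : ℤ)
    (g : SL(2, ℤ) → ℂ → ℂ) : Prop where
  differentiableOn : ∀ σ, DifferentiableOn ℂ (g σ) ℍₒ
  slash : ∀ ρ σ τ, 0 < τ.im → g (ρ * σ) τ = autFactor σ τ ^ (-w) * g ρ (mobius σ τ)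
  eq_of_map_eq : ∀ ρ σ, φ ρ = φ σ → ∀ τ, 0 < τ.im → g ρ τ = g σ τ

namespace IsSlashOrbit

variable {H : Type*} [Group H] [Fintype H] {φ : SL(2, ℤ) →* H} {w : ℤ} {g : SL(2, ℤ) → ℂ → ℂ}

lemma prod_mobius (hg : IsSlashOrbit φ w g) {s : H → SL(2, ℤ)} (hs : ∀ c, φ (s c) = c)
    (σ : SL(2, ℤ)) {τ : ℂ} (hτ : 0 < τ.im) :
    ∏ c, g (s c) (mobius σ τ) = autFactor σ τ ^ (Fintype.card H * w) * ∏ c, g (s c) τ := by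
  have hJ : autFactor σ τ ≠ 0 := autFactor_ne_zero σ hτ
  have hperm : ∏ c, g (s c) τ = ∏ c, autFactor σ τ ^ (-w) * g (s c) (mobius σ τ) := by
    rw [← Equiv.prod_comp (Equiv.mulRight (φ σ))]
    refine Finset.prod_congr rfl fun c _ ↦ ?_
    rw [← hg.slash _ _ _ hτ]
    exact hg.eq_of_map_eq _ _ (by simp [hs]) _ hτ
  rw [hperm, Finset.prod_mul_distrib, Finset.prod_const, Finset.card_univ, ← mul_assoc,
    ← zpow_natCast, ← _root_.zpow_mul, ← zpow_add₀ hJ,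
    show (Fintype.card H : ℤ) * w + -w * Fintype.card H = 0 by ring, zpow_zero, one_mul]

/-- The product over all translates has level one, weight `|H| * w`, and decay `∑ v`. -/
lemma eq_zero_of_valence (hg : IsSlashOrbit φ w g) (hφ : Function.Surjective φ) (v : H → ℕ)
    (hb : ∀ σ, ∃ C Y : ℝ, ∀ τ : ℂ, 0 < τ.im → Y ≤ τ.im →
      ‖g σ τ‖ ≤ C * Real.exp (-(Real.pi * v (φ σ) * τ.im)))
    (hV : Fintype.card H * w < 6 * ∑ c, (v c : ℤ)) (σ : SL(2, ℤ)) {τ : ℂ} (hτ : 0 < τ.im) :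
    g σ τ = 0 := by
  have hs : ∀ c, φ (Function.surjInv hφ c) = c := Function.surjInv_eq hφ
  have hprod : ∀ z ∈ ℍₒ, ∏ c, g (Function.surjInv hφ c) z = 0 := fun z hz ↦
    eq_zero_of_levelOne_decay (DifferentiableOn.fun_finsetProd fun _ _ ↦ hg.differentiableOn _)
      (fun σ τ hτ ↦ hg.prod_mobius hs σ hτ)
      (prod_isBigO_exp fun c ↦ by simpa only [hs] using hb (Function.surjInv hφ c))
      (by exact_mod_cast hV) hz
  obtain ⟨c, hc⟩ := exists_eqOn_zero_of_prod_eq_zero (convex_halfSpace_im_gt 0).isPreconnected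
    ⟨I, by simp⟩ (fun c ↦ (hg.differentiableOn _).analyticOnNhd isOpen_upperHalfPlaneSet) hprod
  have hslash := hg.slash (Function.surjInv hφ c) ((Function.surjInv hφ c)⁻¹ * σ) τ hτ
  rwa [mul_inv_cancel_left, hc _ (mobius_im_pos _ hτ), mul_zero] at hslash

end IsSlashOrbit

/-! ### A quasimodular function of level two -/

/-- The value at `i∞` of `scaledE2`. -/
def scaledE2AtInfty : ℂ := -(Real.pi * I / 6)

/-- The Eisenstein series `E₂`, scaled such that its transformation law has the integral correction
term `-c (cτ + d)`; see `scaledE2_mobius`. -/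
def scaledE2 (τ : ℂ) : ℂ := scaledE2AtInfty * EisensteinSeries.E2 (ofComplex τ)

lemma scaledE2AtInfty_ne_zero : scaledE2AtInfty ≠ 0 := by
  simp [scaledE2AtInfty, Real.pi_ne_zero]

lemma differentiableOn_scaledE2 : DifferentiableOn ℂ scaledE2 ℍₒ :=
  (UpperHalfPlane.mdifferentiable_iff.1 E2_mdifferentiable).const_mul _

lemma E2_smul (σ : SL(2, ℤ)) (τ : ℍ) :
    EisensteinSeries.E2 (σ • τ) = autFactor σ τ ^ 2 * EisensteinSeries.E2 τ
      - 6 * I / Real.pi * σ 1 0 * autFactor σ τ := by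
  have hJ : autFactor σ τ ≠ 0 := autFactor_ne_zero σ τ.im_pos
  have hπ : (Real.pi : ℂ) ≠ 0 := by exact_mod_cast Real.pi_ne_zero
  have hslash := congrFun (EisensteinSeries.E2_slash_action σ) τ
  simp only [ModularForm.SL_slash_apply, EisensteinSeries.D2, Pi.sub_apply, Pi.smul_apply,
    riemannZeta_two, smul_eq_mul, ← autFactor_coe] at hslash
  rw [_root_.zpow_neg, zpow_ofNat, ← div_eq_mul_inv, div_eq_iff (pow_ne_zero 2 hJ)] at hslash
  rw [hslash]
  field_simp

lemma scaledE2_mobius (σ : SL(2, ℤ)) {τ : ℂ} (hτ : 0 < τ.im) :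
    scaledE2 (mobius σ τ) = autFactor σ τ ^ 2 * scaledE2 τ - σ 1 0 * autFactor σ τ := by
  have hπ : (Real.pi : ℂ) ≠ 0 := by exact_mod_cast Real.pi_ne_zero
  lift τ to ℍ using hτ
  rw [mobius_coe, scaledE2, scaledE2, UpperHalfPlane.ofComplex_apply,
    UpperHalfPlane.ofComplex_apply, E2_smul, scaledE2AtInfty]
  field_simp
  linear_combination ((σ 1 0 : ℂ) * 6 * autFactor σ τ) * I_sq

lemma scaledE2_div {a b c d : ℤ} (hdet : a * d - b * c = 1) {τ : ℂ} (hτ : 0 < τ.im) :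
    scaledE2 ((a * τ + b) / (c * τ + d)) = (c * τ + d) ^ 2 * scaledE2 τ - c * (c * τ + d) := by
  simpa [mobius, autFactor] using
    scaledE2_mobius ⟨!![a, b; c, d], by simp [Matrix.det_fin_two, hdet]⟩ hτ

lemma norm_tsum_mul_pow_le {a : ℕ → ℂ} {q₀ : ℝ} (hq₀ : 0 < q₀)
    (ha : Summable fun n : ℕ+ ↦ ‖a n‖ * q₀ ^ (n : ℕ)) {q : ℂ} (hq : ‖q‖ ≤ q₀) :
    ‖∑' n : ℕ+, a n * q ^ (n : ℕ)‖ ≤ ‖q‖ * q₀⁻¹ * ∑' n : ℕ+, ‖a n‖ * q₀ ^ (n : ℕ) := by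
  rw [← tsum_mul_left]
  refine tsum_of_norm_bounded (ha.mul_left _).hasSum fun n ↦ ?_
  obtain ⟨m, hm⟩ : ∃ m : ℕ, (n : ℕ) = m + 1 := ⟨n.natPred, by simp⟩
  rw [hm, norm_mul, norm_pow, pow_succ, pow_succ]
  calc ‖a (m + 1)‖ * (‖q‖ ^ m * ‖q‖) ≤ ‖a (m + 1)‖ * (q₀ ^ m * ‖q‖) := by gcongr
    _ = ‖q‖ * q₀⁻¹ * (‖a (m + 1)‖ * (q₀ ^ m * q₀)) := by field_simp

lemma exists_norm_scaledE2_sub_le : ∃ C, 0 ≤ C ∧ ∀ τ : ℂ, 1 ≤ τ.im →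
    ‖scaledE2 τ - scaledE2AtInfty‖ ≤ C * Real.exp (-(2 * Real.pi * τ.im)) := by
  have hnorm (τ : ℍ) : ‖cexp (2 * Real.pi * I * τ)‖ = Real.exp (-(2 * Real.pi * τ.im)) := by
    rw [Complex.norm_exp]
    congr 1
    simp [mul_assoc]
  set q₀ := Real.exp (-(2 * Real.pi))
  have hsum := (EisensteinSeries.summable_sigma_mul_cexp_pow (k := 2) one_le_two
    UpperHalfPlane.I).norm.comp_injective PNat.coe_injective
  simp only [Function.comp_def, norm_mul, norm_pow, hnorm, UpperHalfPlane.I_im, mul_one,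
    Nat.add_one_sub_one] at hsum
  set A := ∑' n : ℕ+, ‖(ArithmeticFunction.sigma 1 (n : ℕ) : ℂ)‖ * q₀ ^ (n : ℕ)
  refine ⟨‖scaledE2AtInfty‖ * (24 * (q₀⁻¹ * A)), by positivity, fun τ hτ ↦ ?_⟩
  lift τ to ℍ using by linarith
  set q := cexp (2 * Real.pi * I * τ)
  have hq : ‖q‖ = Real.exp (-(2 * Real.pi * τ.im)) := hnorm τ
  have hqle : ‖q‖ ≤ q₀ := by
    rw [hq, Real.exp_le_exp]
    nlinarith [Real.pi_pos, show 1 ≤ τ.im from hτ]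
  have htail := norm_tsum_mul_pow_le (a := fun n ↦ (ArithmeticFunction.sigma 1 n : ℂ))
    (Real.exp_pos _) hsum hqle
  rw [scaledE2, UpperHalfPlane.ofComplex_apply, EisensteinSeries.E2_eq_tsum_cexp]
  calc _ = ‖scaledE2AtInfty‖ * (24 * ‖∑' n : ℕ+, (ArithmeticFunction.sigma 1 n : ℂ) * q ^ (n : ℕ)‖)
        := by
        rw [← Complex.norm_ofNat 24, ← norm_mul, ← norm_mul, ← norm_neg]
        congr 1
        ring
    _ ≤ ‖scaledE2AtInfty‖ * (24 * (‖q‖ * q₀⁻¹ * A)) := by gcongr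
    _ = ‖scaledE2AtInfty‖ * (24 * (q₀⁻¹ * A)) * ‖q‖ := by ring
    _ = _ := by rw [hq]; rfl

/-- The translate by `σ` of the quasimodular function `4 L (2τ) - L τ` of weight two and level
`Γ₀(2)`, where `L` is `scaledE2`. -/
def quasiE2 (σ : SL(2, ℤ)) (τ : ℂ) : ℂ :=
  (4 * scaledE2 (2 * mobius σ τ) - scaledE2 (mobius σ τ) + σ 1 0 * autFactor σ τ)
    / autFactor σ τ ^ 2

lemma quasiE2_mobius (ρ σ : SL(2, ℤ)) {τ : ℂ} (hτ : 0 < τ.im) :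
    quasiE2 ρ (mobius σ τ) = autFactor σ τ ^ 2 * quasiE2 (ρ * σ) τ - σ 1 0 * autFactor σ τ := by
  have hσ := autFactor_ne_zero σ hτ
  have hρ := autFactor_ne_zero ρ (mobius_im_pos σ hτ)
  have hdet : (σ 0 0 : ℂ) * σ 1 1 - σ 0 1 * σ 1 0 = 1 := by
    exact_mod_cast (Matrix.det_fin_two _).symm.trans σ.det_coe
  have hmobius : mobius σ τ * autFactor σ τ = σ 0 0 * τ + σ 0 1 := div_mul_cancel₀ _ hσ
  have hlower : (ρ 1 0 : ℂ) = (ρ * σ) 1 0 * autFactor σ τ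
      - σ 1 0 * (autFactor ρ (mobius σ τ) * autFactor σ τ) := by
    simp only [autFactor, Matrix.SpecialLinearGroup.coe_mul, Matrix.mul_apply, Fin.sum_univ_two,
      Int.cast_add, Int.cast_mul] at hmobius ⊢
    linear_combination (ρ 1 0 : ℂ) * σ 1 0 * hmobius - (ρ 1 0 : ℂ) * hdet
  rw [quasiE2, quasiE2, mobius_mul _ _ hτ, autFactor_mul _ _ hτ, hlower]
  field_simp
  ring

lemma quasiE2_of_even {σ : SL(2, ℤ)} (hc : Even (σ 1 0)) {τ : ℂ} (hτ : 0 < τ.im) :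
    quasiE2 σ τ = 4 * scaledE2 (2 * τ) - scaledE2 τ := by
  have hJ := autFactor_ne_zero σ hτ
  have hdet := (Matrix.det_fin_two _).symm.trans σ.det_coe
  obtain ⟨c, hc⟩ := hc
  have hL := scaledE2_div (a := σ 0 0) (b := 2 * σ 0 1) (c := c) (d := σ 1 1)
    (by linear_combination hdet + σ 0 1 * hc) (τ := 2 * τ) (by simpa using hτ)
  have hden : (c : ℂ) * (2 * τ) + σ 1 1 = autFactor σ τ := by
    rw [autFactor, hc]
    push_cast
    ring
  have hnum : ((σ 0 0 : ℂ) * (2 * τ) + (2 * σ 0 1 : ℤ)) / autFactor σ τ = 2 * mobius σ τ := by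
    rw [mobius]
    push_cast
    ring
  rw [hden, hnum] at hL
  rw [quasiE2, hL, scaledE2_mobius σ hτ, hc]
  push_cast
  field_simp
  ring

lemma quasiE2_of_odd_of_even {σ : SL(2, ℤ)} (hd : Even (σ 1 1)) {τ : ℂ} (hτ : 0 < τ.im) :
    quasiE2 σ τ = scaledE2 (τ / 2) - scaledE2 τ := by
  have hJ := autFactor_ne_zero σ hτ
  have hdet := (Matrix.det_fin_two _).symm.trans σ.det_coe
  obtain ⟨d, hd⟩ := hd
  have hL := scaledE2_div (a := 2 * σ 0 0) (b := σ 0 1) (c := σ 1 0) (d := d)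
    (by linear_combination hdet - σ 0 0 * hd) (τ := τ / 2) (by simpa using hτ)
  have hden : (σ 1 0 : ℂ) * (τ / 2) + d = autFactor σ τ / 2 := by
    rw [autFactor, hd]
    push_cast
    ring
  have hnum : (((2 * σ 0 0 : ℤ) : ℂ) * (τ / 2) + σ 0 1) / (autFactor σ τ / 2) = 2 * mobius σ τ := by
    rw [mobius]
    push_cast
    field_simp
  rw [hden, hnum] at hL
  rw [quasiE2, hL, scaledE2_mobius σ hτ]
  field_simp
  ring

lemma quasiE2_of_odd_of_odd {σ : SL(2, ℤ)} (hc : ¬ Even (σ 1 0)) (hd : ¬ Even (σ 1 1)) {τ : ℂ}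
    (hτ : 0 < τ.im) : quasiE2 σ τ = scaledE2 ((τ + 1) / 2) - scaledE2 τ := by
  have hJ := autFactor_ne_zero σ hτ
  have hdet := (Matrix.det_fin_two _).symm.trans σ.det_coe
  obtain ⟨d, hd⟩ := (Int.not_even_iff_odd.1 hd).sub_odd (Int.not_even_iff_odd.1 hc)
  rw [sub_eq_iff_eq_add] at hd
  have hL := scaledE2_div (a := 2 * σ 0 0) (b := σ 0 1 - σ 0 0) (c := σ 1 0) (d := d)
    (by linear_combination hdet - σ 0 0 * hd) (τ := (τ + 1) / 2) (by simpa using hτ)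
  have hden : (σ 1 0 : ℂ) * ((τ + 1) / 2) + d = autFactor σ τ / 2 := by
    rw [autFactor, hd]
    push_cast
    ring
  have hnum : (((2 * σ 0 0 : ℤ) : ℂ) * ((τ + 1) / 2) + (σ 0 1 - σ 0 0 : ℤ)) / (autFactor σ τ / 2)
      = 2 * mobius σ τ := by
    rw [mobius]
    push_cast
    field_simp
    ring
  rw [hden, hnum] at hL
  rw [quasiE2, hL, scaledE2_mobius σ hτ]
  field_simp
  ring

lemma quasiE2_eq_of_modTwo_eq {ρ σ : SL(2, ℤ)} (h : modTwo ρ = modTwo σ) {τ : ℂ} (hτ : 0 < τ.im) :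
    quasiE2 ρ τ = quasiE2 σ τ := by
  have hparity (i j : Fin 2) : Even (ρ i j) ↔ Even (σ i j) := by
    rw [even_iff_modTwo, even_iff_modTwo, h]
  by_cases hc : Even (σ 1 0)
  · rw [quasiE2_of_even ((hparity 1 0).2 hc) hτ, quasiE2_of_even hc hτ]
  by_cases hd : Even (σ 1 1)
  · rw [quasiE2_of_odd_of_even ((hparity 1 1).2 hd) hτ, quasiE2_of_odd_of_even hd hτ]
  · rw [quasiE2_of_odd_of_odd (mt (hparity 1 0).1 hc) (mt (hparity 1 1).1 hd) hτ,
      quasiE2_of_odd_of_odd hc hd hτ]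

lemma differentiableOn_quasiE2 (σ : SL(2, ℤ)) : DifferentiableOn ℂ (quasiE2 σ) ℍₒ := by
  have comp (f : ℂ → ℂ) (hf : Differentiable ℂ f) (him : Set.MapsTo f ℍₒ ℍₒ) :
      DifferentiableOn ℂ (fun z ↦ scaledE2 (f z)) ℍₒ :=
    differentiableOn_scaledE2.comp hf.differentiableOn him
  by_cases hc : Even (σ 1 0)
  · exact (((comp (2 * ·) (by fun_prop) fun z ↦ by simp).const_mul 4).sub
      differentiableOn_scaledE2).congr fun z hz ↦ quasiE2_of_even hc hz
  by_cases hd : Even (σ 1 1)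
  · exact ((comp (· / 2) (by fun_prop) fun z ↦ by simp).sub differentiableOn_scaledE2).congr
      fun z hz ↦ quasiE2_of_odd_of_even hd hz
  · exact ((comp (fun z ↦ (z + 1) / 2) (by fun_prop) fun z ↦ by simp).sub
      differentiableOn_scaledE2).congr fun z hz ↦ quasiE2_of_odd_of_odd hc hd hz

lemma exists_norm_quasiE2_sub_le : ∃ C, ∀ σ : SL(2, ℤ), ∀ τ : ℂ, 2 ≤ τ.im →
    ‖quasiE2 σ τ - if Even (σ 1 0) then 3 * scaledE2AtInfty else 0‖
      ≤ C * Real.exp (-(Real.pi * τ.im)) := by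
  obtain ⟨C, hC, hL⟩ := exists_norm_scaledE2_sub_le
  refine ⟨5 * C, fun σ τ hτ ↦ ?_⟩
  have hτ₀ : 0 < τ.im := by linarith
  set ε := C * Real.exp (-(Real.pi * τ.im)) with hε
  have hε₀ : 0 ≤ ε := by positivity
  have near (w : ℂ) (hw : τ.im / 2 ≤ w.im) : ‖scaledE2 w - scaledE2AtInfty‖ ≤ ε :=
    (hL w (by linarith)).trans
      (mul_le_mul_of_nonneg_left (Real.exp_le_exp.2 (by nlinarith [Real.pi_pos])) hC)
  have hnearτ := near τ (by linarith)
  have close (w : ℂ) (hw : τ.im / 2 ≤ w.im) : ‖scaledE2 w - scaledE2 τ - 0‖ ≤ 5 * ε := by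
    rw [sub_zero, ← sub_sub_sub_cancel_right _ _ scaledE2AtInfty]
    linarith [norm_sub_le (scaledE2 w - scaledE2AtInfty) (scaledE2 τ - scaledE2AtInfty), near w hw]
  rw [mul_assoc, ← hε]
  split_ifs with hc
  · have hsplit : 4 * scaledE2 (2 * τ) - scaledE2 τ - 3 * scaledE2AtInfty
        = 4 * (scaledE2 (2 * τ) - scaledE2AtInfty) - (scaledE2 τ - scaledE2AtInfty) := by ring
    have htriangle := norm_sub_le (4 * (scaledE2 (2 * τ) - scaledE2AtInfty))
      (scaledE2 τ - scaledE2AtInfty)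
    rw [norm_mul, Complex.norm_ofNat] at htriangle
    rw [quasiE2_of_even hc hτ₀, hsplit]
    linarith [near (2 * τ) (by simp; linarith)]
  by_cases hd : Even (σ 1 1)
  · rw [quasiE2_of_odd_of_even hd hτ₀]
    exact close _ (by simp)
  · rw [quasiE2_of_odd_of_odd hc hd hτ₀]
    exact close _ (by simp)

lemma tendsto_quasiE2 (σ : SL(2, ℤ)) : Tendsto (fun t : ℝ ↦ quasiE2 σ (t * I)) atTop
    (𝓝 (if Even (σ 1 0) then 3 * scaledE2AtInfty else 0)) := by
  obtain ⟨C, hb⟩ := exists_norm_quasiE2_sub_le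
  rw [tendsto_iff_norm_sub_tendsto_zero]
  have hexp : Tendsto (fun t : ℝ ↦ C * Real.exp (-(Real.pi * t))) atTop (𝓝 (C * 0)) :=
    (Real.tendsto_exp_neg_atTop_nhds_zero.comp
      (tendsto_id.const_mul_atTop Real.pi_pos)).const_mul C
  rw [mul_zero] at hexp
  refine squeeze_zero' (.of_forall fun _ ↦ norm_nonneg _) ?_ hexp
  filter_upwards [eventually_ge_atTop 2] with t ht
  simpa using hb σ (t * I) (by simpa using ht)

lemma not_quasiE2_sub_eq_zero {ρ σ : SL(2, ℤ)} (hρ : Even (ρ 1 0)) (hσ : ¬ Even (σ 1 0)) :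
    ¬ ∀ τ : ℂ, 0 < τ.im → quasiE2 ρ τ - quasiE2 σ τ = 0 := by
  intro h
  have hlim := (tendsto_quasiE2 ρ).sub (tendsto_quasiE2 σ)
  simp only [hρ, hσ, if_true, if_false, sub_zero] at hlim
  refine mul_ne_zero three_ne_zero scaledE2AtInfty_ne_zero
    (tendsto_nhds_unique hlim (tendsto_const_nhds.congr' ?_))
  filter_upwards [eventually_gt_atTop 0] with t ht
  exact (h _ (by simpa using ht)).symm

lemma not_quasiE2_S_sub_ST_eq_zero : ¬ ∀ τ : ℂ, 0 < τ.im →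
    quasiE2 ModularGroup.S τ - quasiE2 (ModularGroup.S * ModularGroup.T) τ = 0 := by
  intro h
  refine not_quasiE2_sub_eq_zero (ρ := ModularGroup.S * ModularGroup.S)
    (σ := ModularGroup.S * ModularGroup.T * ModularGroup.S) (by decide) (by decide) fun τ hτ ↦ ?_
  have hS := h _ (mobius_im_pos ModularGroup.S hτ)
  rw [quasiE2_mobius _ _ hτ, quasiE2_mobius _ _ hτ, sub_sub_sub_cancel_right, ← mul_sub] at hS
  exact (mul_eq_zero.1 hS).resolve_left (pow_ne_zero 2 (autFactor_ne_zero _ hτ))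

/-- `1`, `S` and `ST` represent the three cosets of `Γ₀(2)`. -/
lemma eq_zero_of_quasiE2_pairwise_ne {f : ℂ → ℂ} (hf : DifferentiableOn ℂ f ℍₒ)
    (h : ∀ τ : ℂ, 0 < τ.im → quasiE2 1 τ ≠ quasiE2 ModularGroup.S τ →
      quasiE2 1 τ ≠ quasiE2 (ModularGroup.S * ModularGroup.T) τ →
      quasiE2 ModularGroup.S τ ≠ quasiE2 (ModularGroup.S * ModularGroup.T) τ → f τ = 0)
    {τ : ℂ} (hτ : 0 < τ.im) : f τ = 0 := by
  let δ (p : SL(2, ℤ) × SL(2, ℤ)) (z : ℂ) : ℂ := quasiE2 p.1 z - quasiE2 p.2 z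
  let factor : Fin 4 → ℂ → ℂ := ![f, δ (1, ModularGroup.S),
    δ (1, ModularGroup.S * ModularGroup.T), δ (ModularGroup.S, ModularGroup.S * ModularGroup.T)]
  have hδ (p) : AnalyticOnNhd ℂ (δ p) ℍₒ :=
    ((differentiableOn_quasiE2 _).sub (differentiableOn_quasiE2 _)).analyticOnNhd
      isOpen_upperHalfPlaneSet
  have hprod (z : ℂ) (hz : z ∈ ℍₒ) : ∏ i, factor i z = 0 := by
    rw [Fin.prod_univ_four]
    by_contra hne
    obtain ⟨⟨⟨hf₀, h₁⟩, h₂⟩, h₃⟩ := by simpa only [mul_ne_zero_iff] using hne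
    exact hf₀ (h z hz (sub_ne_zero.1 h₁) (sub_ne_zero.1 h₂) (sub_ne_zero.1 h₃))
  have hfactor (i) : AnalyticOnNhd ℂ (factor i) ℍₒ :=
    match i with
    | 0 => hf.analyticOnNhd isOpen_upperHalfPlaneSet
    | 1 | 2 | 3 => hδ _
  obtain ⟨i, hi⟩ := exists_eqOn_zero_of_prod_eq_zero (convex_halfSpace_im_gt 0).isPreconnected
    ⟨I, by simp⟩ hfactor hprod
  fin_cases i
  · exact hi τ hτ
  · exact absurd hi (not_quasiE2_sub_eq_zero (by decide) (by decide))
  · exact absurd hi (not_quasiE2_sub_eq_zero (by decide) (by decide))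
  · exact absurd hi not_quasiE2_S_sub_ST_eq_zero
/-! ### Theta functions and Jacobi forms of a fixed modulus -/

/-- The `q`-Pochhammer symbol `(w; q)_∞ = ∏_{n ≥ 0} (1 - q ^ n w)`. -/
def qPochhammer (q w : ℂ) : ℂ := ∏' n : ℕ, (1 + -(q ^ n * w))

lemma summable_norm_pow_mul {q : ℂ} (hq : ‖q‖ < 1) (w : ℂ) :
    Summable fun n : ℕ ↦ ‖-(q ^ n * w)‖ := by
  simp only [norm_neg, norm_mul, norm_pow]
  exact (summable_geometric_of_lt_one (norm_nonneg _) hq).mul_right _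

lemma qPochhammer_eq_one_sub_mul {q : ℂ} (hq : ‖q‖ < 1) (w : ℂ) :
    qPochhammer q w = (1 - w) * qPochhammer q (q * w) := by
  have h := multipliable_one_add_of_summable (summable_norm_pow_mul hq (q * w))
  rw [qPochhammer, tprod_eq_zero_mul', qPochhammer]
  · simp only [pow_zero, one_mul, ← sub_eq_add_neg, pow_succ, mul_assoc]
  · simpa only [pow_succ, mul_assoc] using h

lemma qPochhammer_ne_zero {q : ℂ} (hq : ‖q‖ < 1) {w : ℂ} (h : ∀ n : ℕ, q ^ n * w ≠ 1) :
    qPochhammer q w ≠ 0 :=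
  tprod_one_add_ne_zero_of_summable
    (fun n hn ↦ h n (by linear_combination -hn)) (summable_norm_pow_mul hq w)

lemma differentiable_qPochhammer {q : ℂ} (hq : ‖q‖ < 1) : Differentiable ℂ (qPochhammer q) := by
  intro w
  have hball : IsOpen (Metric.ball (0 : ℂ) (‖w‖ + 1)) := Metric.isOpen_ball
  have hsum : Summable fun n : ℕ ↦ ‖q‖ ^ n * (‖w‖ + 1) :=
    (summable_geometric_of_lt_one (norm_nonneg _) hq).mul_right _
  have hprod := hsum.hasProdLocallyUniformlyOn_nat_one_add (f := fun n w ↦ -(q ^ n * w)) hball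
    (.of_forall fun n x hx ↦ by
      rw [norm_neg, norm_mul, norm_pow]
      have : ‖x‖ < ‖w‖ + 1 := by simpa using hx
      gcongr) (fun n ↦ by fun_prop)
  exact ((hasProdLocallyUniformlyOn_iff_tendstoLocallyUniformlyOn.1 hprod).differentiableOn
    (.of_forall fun s ↦ by fun_prop) hball).differentiableAt (hball.mem_nhds (by simp))

/-- The theta function of period lattice `ℤ + ℤ τ` with simple zeros at the lattice points, given
by the Jacobi triple product and normalised (without its constant) to have index `1 / 2`. -/
def thetaProd (τ z : ℂ) : ℂ :=
  cexp (-(Real.pi * I * z)) * qPochhammer (cexp (2 * Real.pi * I * τ)) (cexp (2 * Real.pi * I * z))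
    * qPochhammer (cexp (2 * Real.pi * I * τ)) (cexp (2 * Real.pi * I * (τ - z)))

section thetaProd

variable {τ : ℂ}

lemma norm_cexp_two_pi_I_mul_lt_one (hτ : 0 < τ.im) : ‖cexp (2 * Real.pi * I * τ)‖ < 1 := by
  rw [Complex.norm_exp, Real.exp_lt_one_iff]
  simp only [mul_assoc, mul_re, re_ofNat, ofReal_re, I_re, zero_mul, I_im, one_mul, zero_sub,
    mul_neg, ofReal_im, mul_im, sub_zero, im_ofNat, Left.neg_neg_iff]
  positivity

lemma differentiable_thetaProd (hτ : 0 < τ.im) : Differentiable ℂ (thetaProd τ) := by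
  have h := differentiable_qPochhammer (norm_cexp_two_pi_I_mul_lt_one hτ)
  unfold thetaProd
  exact (Differentiable.mul (by fun_prop) (h.comp (by fun_prop))).mul (h.comp (by fun_prop))

lemma thetaProd_add_one (z : ℂ) : thetaProd τ (z + 1) = -thetaProd τ z := by
  have hexp (w : ℂ) : cexp (2 * Real.pi * I * (w + 1)) = cexp (2 * Real.pi * I * w) := by
    rw [mul_add, mul_one, Complex.exp_add, Complex.exp_two_pi_mul_I, mul_one]
  have hneg : cexp (-(Real.pi * I * (z + 1))) = -cexp (-(Real.pi * I * z)) := by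
    rw [mul_add, neg_add, Complex.exp_add, mul_one, Complex.exp_neg (Real.pi * I),
      Complex.exp_pi_mul_I]
    ring
  rw [thetaProd, thetaProd, hexp, ← hexp (τ - (z + 1)), hneg,
    show τ - (z + 1) + 1 = τ - z by ring]
  ring

lemma thetaProd_add_self (hτ : 0 < τ.im) (z : ℂ) :
    thetaProd τ (z + τ) = -cexp (-(2 * Real.pi * I * z) - Real.pi * I * τ) * thetaProd τ z := by
  have hq := norm_cexp_two_pi_I_mul_lt_one hτ
  have hfront : cexp (-(Real.pi * I * (z + τ)))
      = cexp (-(Real.pi * I * z)) * cexp (-(Real.pi * I * τ)) := by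
    rw [← Complex.exp_add]; congr 1; ring
  have hback : cexp (2 * Real.pi * I * (τ - (z + τ))) = cexp (-(2 * Real.pi * I * z)) := by
    congr 1; ring
  have hshift : cexp (2 * Real.pi * I * (z + τ))
      = cexp (2 * Real.pi * I * τ) * cexp (2 * Real.pi * I * z) := by
    rw [← Complex.exp_add]; congr 1; ring
  have hsub : cexp (2 * Real.pi * I * (τ - z))
      = cexp (2 * Real.pi * I * τ) * cexp (-(2 * Real.pi * I * z)) := by
    rw [← Complex.exp_add]; congr 1; ring
  have hcancel : cexp (-(2 * Real.pi * I * z)) * cexp (2 * Real.pi * I * z) = 1 := by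
    rw [← Complex.exp_add]; simp
  rw [thetaProd, thetaProd, hfront, hback, hshift, hsub, sub_eq_add_neg, Complex.exp_add,
    qPochhammer_eq_one_sub_mul hq (cexp (2 * Real.pi * I * z)),
    qPochhammer_eq_one_sub_mul hq (cexp (-(2 * Real.pi * I * z)))]
  linear_combination -hcancel * cexp (-(Real.pi * I * z)) * cexp (-(Real.pi * I * τ))
    * qPochhammer (cexp (2 * Real.pi * I * τ))
      (cexp (2 * Real.pi * I * τ) * cexp (2 * Real.pi * I * z))
    * qPochhammer (cexp (2 * Real.pi * I * τ))
      (cexp (2 * Real.pi * I * τ) * cexp (-(2 * Real.pi * I * z)))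

lemma exists_eq_add_mul_of_thetaProd_eq_zero (hτ : 0 < τ.im) {z : ℂ} (hz : thetaProd τ z = 0) :
    ∃ a b : ℤ, z = a + b * τ := by
  have hq := norm_cexp_two_pi_I_mul_lt_one hτ
  have hpi : (2 * Real.pi * I : ℂ) ≠ 0 := by simp [Real.pi_ne_zero]
  have hexp (n : ℕ) (w : ℂ) : cexp (2 * Real.pi * I * τ) ^ n * cexp (2 * Real.pi * I * w) = 1 →
      ∃ m : ℤ, n * τ + w = m := by
    rw [← Complex.exp_nat_mul, ← Complex.exp_add, Complex.exp_eq_one_iff]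
    exact fun ⟨m, hm⟩ ↦ ⟨m, mul_left_cancel₀ hpi (by linear_combination hm)⟩
  by_contra hne
  rw [thetaProd, mul_eq_zero, mul_eq_zero] at hz
  obtain (h0 | hz) | hz := hz
  · exact Complex.exp_ne_zero _ h0
  · refine qPochhammer_ne_zero hq (fun n hn ↦ hne ?_) hz
    obtain ⟨m, hm⟩ := hexp n z hn
    exact ⟨m, -n, by push_cast; linear_combination hm⟩
  · refine qPochhammer_ne_zero hq (fun n hn ↦ hne ?_) hz
    obtain ⟨m, hm⟩ := hexp n (τ - z) hn
    exact ⟨-m, n + 1, by push_cast; linear_combination -hm⟩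

lemma thetaProd_zero (hτ : 0 < τ.im) : thetaProd τ 0 = 0 := by
  simp [thetaProd, qPochhammer_eq_one_sub_mul (norm_cexp_two_pi_I_mul_lt_one hτ) 1]

lemma deriv_thetaProd_zero_ne_zero (hτ : 0 < τ.im) : deriv (thetaProd τ) 0 ≠ 0 := by
  have hq := norm_cexp_two_pi_I_mul_lt_one hτ
  set q := cexp (2 * Real.pi * I * τ) with hqdef
  set G : ℂ → ℂ := fun z ↦ cexp (-(Real.pi * I * z))
    * qPochhammer q (q * cexp (2 * Real.pi * I * z))
    * qPochhammer q (cexp (2 * Real.pi * I * (τ - z))) with hG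
  have hfactor : thetaProd τ = fun z ↦ (1 - cexp (2 * Real.pi * I * z)) * G z := by
    funext z
    rw [thetaProd, ← hqdef, qPochhammer_eq_one_sub_mul hq (cexp _)]
    ring
  have hGdiff : DifferentiableAt ℂ G 0 := by
    have h := differentiable_qPochhammer hq
    exact ((Differentiable.mul (by fun_prop) (h.comp (by fun_prop))).mul
      (h.comp (by fun_prop))).differentiableAt
  have hsimple : HasDerivAt (fun z : ℂ ↦ 1 - cexp (2 * Real.pi * I * z))
      (-(2 * Real.pi * I)) 0 := by
    simpa using (((hasDerivAt_id (0 : ℂ)).const_mul (2 * Real.pi * I)).cexp).const_sub 1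
  have hq1 : qPochhammer q q ≠ 0 := by
    refine qPochhammer_ne_zero hq fun n hn ↦ ?_
    have hlt := pow_lt_one₀ (norm_nonneg q) hq n.succ_ne_zero
    rw [← norm_pow, pow_succ, hn, norm_one] at hlt
    exact lt_irrefl _ hlt
  rw [hfactor, HasDerivAt.deriv (hsimple.fun_mul hGdiff.hasDerivAt)]
  simp [hG, ← hqdef, hq1, Real.pi_ne_zero]

lemma self_isBigO_thetaProd (hτ : 0 < τ.im) : (fun z ↦ z) =O[𝓝 0] thetaProd τ := by
  have h := HasDerivAtFilter.isTheta_sub (differentiable_thetaProd hτ 0).hasDerivAt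
    (deriv_thetaProd_zero_ne_zero hτ)
  have hpair : Tendsto (fun z : ℂ ↦ (z, (0 : ℂ))) (𝓝 0) (𝓝 0 ×ˢ pure 0) :=
    tendsto_id.prodMk tendsto_const_pure
  simpa only [Function.comp_def, thetaProd_zero hτ, sub_zero] using h.2.comp_tendsto hpair

end thetaProd

lemma bddAbove_range_of_biperiodic {N : ℂ → ℝ} {ω τ : ℂ} (hω : ω ≠ 0) (hτ : 0 < τ.im)
    (hN : Continuous N) (h₁ : N.Periodic ω) (h₂ : N.Periodic (ω * τ)) :
    BddAbove (Set.range N) := by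
  have hK : IsCompact ((fun p : ℝ × ℝ ↦ ω * (p.1 + p.2 * τ)) '' Set.Icc 0 1 ×ˢ Set.Icc 0 1) :=
    (isCompact_Icc.prod isCompact_Icc).image (by fun_prop)
  obtain ⟨C, hC⟩ := hK.bddAbove_image hN.continuousOn
  refine ⟨C, ?_⟩
  rintro _ ⟨z, rfl⟩
  set y := (z / ω).im / τ.im
  set x := (z / ω).re - y * τ.re
  have hz : z = ω * (x + y * τ) := by
    suffices z / ω = x + y * τ by rw [← this, mul_div_cancel₀ z hω]
    apply Complex.ext
    · simp [x]
    · simp [y, hτ.ne']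
  have hmod : N z = N (ω * ((Int.fract x : ℝ) + (Int.fract y : ℝ) * τ)) := by
    rw [← (h₁.int_mul ⌊x⌋).sub_eq, ← (h₂.int_mul ⌊y⌋).sub_eq, hz]
    congr 1
    simp only [Int.fract, ofReal_sub, ofReal_intCast]
    ring
  rw [hmod]
  exact hC ⟨_, ⟨(Int.fract x, Int.fract y), ⟨⟨Int.fract_nonneg x, (Int.fract_lt_one x).le⟩,
    Int.fract_nonneg y, (Int.fract_lt_one y).le⟩, rfl⟩, rfl⟩

lemma isTheta_one_of_continuousAt {E 𝕜 : Type*} [TopologicalSpace E] [NormedField 𝕜] {g : E → 𝕜}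
    {z : E} (hg : ContinuousAt g z) (hz : g z ≠ 0) : g =Θ[𝓝 z] fun _ ↦ (1 : 𝕜) :=
  ((Asymptotics.isEquivalent_const_iff_tendsto hz).2 hg).isTheta.trans
    (Asymptotics.isTheta_const_const hz one_ne_zero)

/-- The invariant (Petersson) norm, for the modulus `τ` and the index `r / 2`, of a function `φ`
of the elliptic variable `z`. -/
def jacobiNorm (τ : ℂ) (r : ℤ) (φ : ℂ → ℂ) (z : ℂ) : ℝ :=
  ‖φ z‖ * Real.exp (-(Real.pi * r * z.im ^ 2 / τ.im))

lemma continuous_jacobiNorm (τ : ℂ) (r : ℤ) {φ : ℂ → ℂ} (hφ : Continuous φ) :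
    Continuous (jacobiNorm τ r φ) := by
  unfold jacobiNorm
  fun_prop

lemma jacobiNorm_isTheta (τ : ℂ) (r : ℤ) (φ : ℂ → ℂ) (z : ℂ) : jacobiNorm τ r φ =Θ[𝓝 z] φ := by
  have hcont : Continuous fun w : ℂ ↦ Real.exp (-(Real.pi * r * w.im ^ 2 / τ.im)) := by fun_prop
  have hone := isTheta_one_of_continuousAt hcont.continuousAt (Real.exp_ne_zero _) (z := z)
  have hmul := (Asymptotics.isTheta_rfl (f := fun w ↦ ‖φ w‖) (l := 𝓝 z)).mul hone
  simp only [mul_one] at hmul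
  exact hmul.of_norm_right

lemma jacobiNorm_mul_pow (τ : ℂ) (r : ℤ) (H θ : ℂ → ℂ) (m : ℕ) (z : ℂ) :
    jacobiNorm τ r (fun w ↦ H w * θ w ^ m) z
      = jacobiNorm τ (r - m) H z * jacobiNorm τ 1 θ z ^ m := by
  have hexp : Real.exp (-(Real.pi * r * z.im ^ 2 / τ.im))
      = Real.exp (-(Real.pi * (r - m : ℤ) * z.im ^ 2 / τ.im))
        * Real.exp (-(Real.pi * (1 : ℤ) * z.im ^ 2 / τ.im)) ^ m := by
    rw [← Real.exp_nat_mul, ← Real.exp_add]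
    congr 1
    push_cast
    ring
  simp only [jacobiNorm, hexp, norm_mul, norm_pow, mul_pow]
  ring

lemma jacobiNorm_thetaProd_add_one (τ : ℂ) :
    (jacobiNorm τ 1 (thetaProd τ)).Periodic 1 := by
  intro z
  simp [jacobiNorm, thetaProd_add_one]

lemma jacobiNorm_thetaProd_add_self {τ : ℂ} (hτ : 0 < τ.im) :
    (jacobiNorm τ 1 (thetaProd τ)).Periodic τ := by
  intro z
  have hexp : Real.exp (-(2 * Real.pi * I * z) - Real.pi * I * τ).re
      * Real.exp (-(Real.pi * (1 : ℤ) * (z + τ).im ^ 2 / τ.im))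
      = Real.exp (-(Real.pi * (1 : ℤ) * z.im ^ 2 / τ.im)) := by
    rw [← Real.exp_add]
    congr 1
    simp only [sub_re, neg_re, mul_re, re_ofNat, ofReal_re, im_ofNat, ofReal_im, mul_zero, sub_zero,
      I_re, mul_im, zero_mul, add_zero, I_im, mul_one, zero_sub, add_im, Int.cast_one]
    field_simp
    ring
  rw [jacobiNorm, jacobiNorm, thetaProd_add_self hτ, norm_mul, norm_neg, Complex.norm_exp, ← hexp]
  ring

lemma exists_differentiable_mul_eq {φ ψ : ℂ → ℂ} (hφ : Differentiable ℂ φ)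
    (hψ : Differentiable ℂ ψ) (hψ0 : ∀ z, ∀ᶠ w in 𝓝[≠] z, ψ w ≠ 0)
    (h : ∀ z, φ =O[𝓝 z] ψ) : ∃ H : ℂ → ℂ, Differentiable ℂ H ∧ ∀ z, φ z = H z * ψ z := by
  set f : ℂ → ℂ := fun w ↦ φ w / ψ w with hf
  set H : ℂ → ℂ := fun z ↦ limUnder (𝓝[≠] z) f
  have hHf {z : ℂ} (hz : ψ z ≠ 0) : H z = f z :=
    ((hφ.continuous.continuousAt.div hψ.continuous.continuousAt hz).tendsto.mono_left
      nhdsWithin_le_nhds).limUnder_eq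
  have hHd : Differentiable ℂ H := by
    intro z
    obtain ⟨C, hC⟩ := (h z).bound
    obtain ⟨s, hs, hsψ⟩ := ((eventually_nhdsWithin_iff.1 (hψ0 z)).and hC).exists_mem
    have hupd := Complex.differentiableOn_update_limUnder_of_bddAbove (f := f) hs
      (fun w hw ↦ ((hφ w).div (hψ w) ((hsψ w hw.1).1 hw.2)).differentiableWithinAt)
      ⟨C, by
        rintro _ ⟨w, hw, rfl⟩
        have hpos := norm_pos_iff.2 ((hsψ w hw.1).1 hw.2)
        simpa only [Function.comp_apply, hf, norm_div, div_le_iff₀ hpos] using (hsψ w hw.1).2⟩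
    refine (hupd.differentiableAt hs).congr_of_eventuallyEq ?_
    filter_upwards [hs] with w hw
    by_cases hwz : w = z
    · rw [hwz, Function.update_self]
    · rw [Function.update_of_ne hwz, hHf ((hsψ w hw).1 hwz)]
  refine ⟨H, hHd, fun z ↦ ?_⟩
  have hlim {g : ℂ → ℂ} (hg : Differentiable ℂ g) : Tendsto g (𝓝[≠] z) (𝓝 (g z)) :=
    hg.continuous.continuousAt.tendsto.mono_left nhdsWithin_le_nhds
  refine tendsto_nhds_unique (hlim hφ) ((hlim (hHd.mul hψ)).congr' ?_)
  filter_upwards [hψ0 z] with w hw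
  rw [Pi.mul_apply, hHf hw, hf, div_mul_cancel₀ _ hw]

lemma eq_zero_of_jacobiNorm_periodic {τ : ℂ} (hτ : 0 < τ.im) {r : ℤ} (hr : r < 0) {ω : ℂ}
    (hω : ω ≠ 0) {φ : ℂ → ℂ} (hφ : Differentiable ℂ φ) (h₁ : (jacobiNorm τ r φ).Periodic ω)
    (h₂ : (jacobiNorm τ r φ).Periodic (ω * τ)) (z : ℂ) : φ z = 0 := by
  obtain ⟨C, hC⟩ := bddAbove_range_of_biperiodic hω hτ
    (continuous_jacobiNorm τ r hφ.continuous) h₁ h₂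
  have hle (w : ℂ) : ‖φ w‖ ≤ C * Real.exp (-(Real.pi * -r / τ.im * w.im ^ 2)) := by
    have hw := hC ⟨w, rfl⟩
    rw [jacobiNorm, ← le_div_iff₀ (Real.exp_pos _), div_eq_mul_inv, ← Real.exp_neg] at hw
    rwa [show -(Real.pi * -r / τ.im * w.im ^ 2) = - -(Real.pi * r * w.im ^ 2 / τ.im) by ring]
  have hr' : (0 : ℝ) < -r := by exact_mod_cast neg_pos.2 hr
  have hc : 0 < Real.pi * -r / τ.im := by positivity
  have hC0 : 0 ≤ C := by simpa using (norm_nonneg _).trans (hle 0)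
  have hconst (w : ℂ) : φ z = φ w := by
    refine hφ.apply_eq_apply_of_bounded (isBounded_iff_forall_norm_le.2 ⟨C, ?_⟩) z w
    rintro _ ⟨w, rfl⟩
    refine (hle w).trans (mul_le_of_le_one_right hC0 (Real.exp_le_one_iff.2 ?_))
    exact neg_nonpos.2 (by positivity)
  have hlim : Tendsto (fun t : ℝ ↦ C * Real.exp (-(Real.pi * -r / τ.im * t ^ 2))) atTop
      (𝓝 (C * 0)) :=
    (Real.tendsto_exp_neg_atTop_nhds_zero.comp
      ((tendsto_pow_atTop two_ne_zero).const_mul_atTop hc)).const_mul C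
  rw [mul_zero] at hlim
  refine norm_le_zero_iff.1 (ge_of_tendsto' hlim fun t ↦ ?_)
  rw [hconst (t * I)]
  simpa using hle (t * I)

/-- A family of entire functions of the elliptic variable which transform, up to a permutation of
the family, like Jacobi forms of index `r / 2` for the fixed modulus `τ` under the lattice
`ℤ + ℤ τ`, and individually under `2 ℤ + 2 ℤ τ`. Only the absolute values of the factors of
automorphy are recorded, through `jacobiNorm`. -/
structure IsJacobiFamily {ι : Type*} (τ : ℂ) (r : ℤ) (φ : ι → ℂ → ℂ) : Prop where
  differentiable (γ : ι) : Differentiable ℂ (φ γ)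
  add_one (γ : ι) : ∃ γ', ∀ z, jacobiNorm τ r (φ γ') z = jacobiNorm τ r (φ γ) (z + 1)
  add_self (γ : ι) : ∃ γ', ∀ z, jacobiNorm τ r (φ γ') z = jacobiNorm τ r (φ γ) (z + τ)
  periodic_two (γ : ι) : (jacobiNorm τ r (φ γ)).Periodic 2
  periodic_two_mul_self (γ : ι) : (jacobiNorm τ r (φ γ)).Periodic (2 * τ)

lemma exists_eq_add_int_mul {ι : Type*} {N : ι → ℂ → ℝ} {s : ℂ}
    (hs : ∀ γ, ∃ γ', ∀ z, N γ' z = N γ (z + s)) (h2 : ∀ γ, (N γ).Periodic (2 * s)) (n : ℤ)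
    (γ : ι) : ∃ γ', ∀ z, N γ' z = N γ (z + n * s) := by
  obtain ⟨m, rfl | rfl⟩ := Int.even_or_odd' n
  · refine ⟨γ, fun z ↦ ?_⟩
    rw [← (h2 γ).int_mul m z]
    congr 1
    push_cast
    ring
  · obtain ⟨γ', hγ'⟩ := hs γ
    refine ⟨γ', fun z ↦ ?_⟩
    rw [hγ', ← (h2 γ).int_mul m (z + s)]
    congr 1
    push_cast
    ring

namespace IsJacobiFamily

variable {ι : Type*} {τ : ℂ} {r : ℤ} {φ : ι → ℂ → ℂ}

lemma exists_add_lattice (h : IsJacobiFamily τ r φ) (a b : ℤ) (γ : ι) :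
    ∃ γ', ∀ z, jacobiNorm τ r (φ γ') z = jacobiNorm τ r (φ γ) (z + (a + b * τ)) := by
  obtain ⟨γ₁, h₁⟩ := exists_eq_add_int_mul h.add_self h.periodic_two_mul_self b γ
  obtain ⟨γ₂, h₂⟩ := exists_eq_add_int_mul h.add_one
    (fun γ ↦ by simpa only [mul_one] using h.periodic_two γ) a γ₁
  exact ⟨γ₂, fun z ↦ by rw [h₂, h₁, mul_one, add_assoc]⟩

lemma apply_eq_apply_zero (hτ : 0 < τ.im) (h : IsJacobiFamily τ 0 φ) (γ : ι) (z : ℂ) :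
    φ γ z = φ γ 0 := by
  obtain ⟨C, hC⟩ := bddAbove_range_of_biperiodic two_ne_zero hτ
    (continuous_jacobiNorm τ 0 (h.differentiable γ).continuous) (h.periodic_two γ)
    (h.periodic_two_mul_self γ)
  refine (h.differentiable γ).apply_eq_apply_of_bounded (isBounded_iff_forall_norm_le.2 ⟨C, ?_⟩) z 0
  rintro _ ⟨w, rfl⟩
  simpa [jacobiNorm] using hC ⟨w, rfl⟩

end IsJacobiFamily

lemma jacobiNorm_thetaProd_add_lattice {τ : ℂ} (hτ : 0 < τ.im) (a b : ℤ) :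
    (jacobiNorm τ 1 (thetaProd τ)).Periodic (a + b * τ) := by
  simpa only [mul_one] using ((jacobiNorm_thetaProd_add_one τ).int_mul a).add_period
    ((jacobiNorm_thetaProd_add_self hτ).int_mul b)

lemma thetaProd_eventually_ne_zero {τ : ℂ} (hτ : 0 < τ.im) (z : ℂ) :
    ∀ᶠ w in 𝓝[≠] z, thetaProd τ w ≠ 0 := by
  have hana : AnalyticOnNhd ℂ (thetaProd τ) Set.univ :=
    (differentiable_thetaProd hτ).differentiableOn.analyticOnNhd isOpen_univ
  refine (hana z trivial).eventually_eq_zero_or_eventually_ne_zero.resolve_left fun h0 ↦ ?_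
  have heq := hana.eqOn_zero_of_preconnected_of_eventuallyEq_zero isPreconnected_univ trivial h0
  refine deriv_thetaProd_zero_ne_zero hτ ?_
  rw [show thetaProd τ = fun _ ↦ 0 from funext fun w ↦ heq trivial, deriv_const]

namespace IsJacobiFamily

variable {ι : Type*} {τ : ℂ} {r : ℤ} {φ : ι → ℂ → ℂ}

lemma isBigO_thetaProd_pow (hτ : 0 < τ.im) (h : IsJacobiFamily τ r φ) {m : ℕ}
    (h0 : ∀ γ, φ γ =O[𝓝 0] fun z ↦ z ^ m) (γ : ι) (z : ℂ) :
    φ γ =O[𝓝 z] fun w ↦ thetaProd τ w ^ m := by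
  by_cases hz : thetaProd τ z = 0
  · obtain ⟨a, b, rfl⟩ := exists_eq_add_mul_of_thetaProd_eq_zero hτ hz
    obtain ⟨γ', hγ'⟩ := h.exists_add_lattice a b γ
    have hnorm : jacobiNorm τ r (φ γ') =O[𝓝 0] fun w ↦ jacobiNorm τ 1 (thetaProd τ) w ^ m :=
      (jacobiNorm_isTheta τ r (φ γ') 0).1.trans <| (h0 γ').trans <|
        ((self_isBigO_thetaProd hτ).trans (jacobiNorm_isTheta τ 1 (thetaProd τ) 0).2).pow m
    have htrans : Tendsto (fun w : ℂ ↦ w - (a + b * τ)) (𝓝 (a + b * τ)) (𝓝 0) := by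
      simpa using (continuous_sub_right (a + b * τ)).tendsto (a + b * τ)
    have hlattice : jacobiNorm τ r (φ γ) =O[𝓝 (a + b * τ)]
        fun w ↦ jacobiNorm τ 1 (thetaProd τ) w ^ m := by
      refine (hnorm.comp_tendsto htrans).congr (fun w ↦ ?_) fun w ↦ ?_
      · rw [Function.comp_apply, hγ', sub_add_cancel]
      · rw [Function.comp_apply, (jacobiNorm_thetaProd_add_lattice hτ a b).sub_eq]
    exact (jacobiNorm_isTheta τ r (φ γ) _).2.trans <| hlattice.trans
      ((jacobiNorm_isTheta τ 1 (thetaProd τ) _).1.pow m)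
  · exact ((h.differentiable γ).continuous.continuousAt.isBigO_one ℂ).trans
      (isTheta_one_of_continuousAt ((differentiable_thetaProd hτ).continuous.pow m).continuousAt
        (pow_ne_zero m hz)).2

lemma eq_zero_of_isBigO_pow (hτ : 0 < τ.im) (h : IsJacobiFamily τ r φ) {m : ℕ} (hr : r < m)
    (h0 : ∀ γ, φ γ =O[𝓝 0] fun z ↦ z ^ m) (γ : ι) (z : ℂ) : φ γ z = 0 := by
  have hθ := differentiable_thetaProd hτ
  have hθ0 (z : ℂ) : ∀ᶠ w in 𝓝[≠] z, thetaProd τ w ≠ 0 := thetaProd_eventually_ne_zero hτ z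
  obtain ⟨H, hH, hφ⟩ := exists_differentiable_mul_eq (h.differentiable γ) (hθ.pow m)
    (fun z ↦ (hθ0 z).mono fun w hw ↦ pow_ne_zero m hw) (h.isBigO_thetaProd_pow hτ h0 γ)
  have hnorm (z : ℂ) : jacobiNorm τ r (φ γ) z
      = jacobiNorm τ (r - m) H z * jacobiNorm τ 1 (thetaProd τ) z ^ m := by
    rw [show φ γ = _ from funext hφ]
    exact jacobiNorm_mul_pow τ r H (thetaProd τ) m z
  have hperiodic {ω : ℂ} (hφω : (jacobiNorm τ r (φ γ)).Periodic ω)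
      (hθω : (jacobiNorm τ 1 (thetaProd τ)).Periodic ω) :
      (jacobiNorm τ (r - m) H).Periodic ω := by
    intro z
    have hcont := continuous_jacobiNorm τ (r - m) hH.continuous
    refine tendsto_nhds_unique_of_eventuallyEq (l := 𝓝[≠] z)
      (f := fun w ↦ jacobiNorm τ (r - m) H (w + ω)) (g := jacobiNorm τ (r - m) H)
      ((hcont.comp (continuous_add_const ω)).continuousAt.mono_left nhdsWithin_le_nhds)
      (hcont.continuousAt.mono_left nhdsWithin_le_nhds) ?_
    filter_upwards [hθ0 z] with w hw
    have hw' : jacobiNorm τ 1 (thetaProd τ) w ^ m ≠ 0 :=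
      pow_ne_zero m (mul_ne_zero (norm_ne_zero_iff.2 hw) (Real.exp_ne_zero _))
    refine mul_right_cancel₀ hw' ?_
    rw [← hnorm, ← hφω, hnorm, hθω]
  have hlattice := jacobiNorm_thetaProd_add_lattice hτ
  rw [hφ, eq_zero_of_jacobiNorm_periodic hτ (sub_neg.2 hr) two_ne_zero hH
    (hperiodic (h.periodic_two γ) (by simpa using hlattice 2 0))
    (hperiodic (h.periodic_two_mul_self γ) (by simpa using hlattice 0 2)), zero_mul]

end IsJacobiFamily
/-! ### Holomorphic parameter integrals and Fourier coefficients -/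

section ParameterIntegral

variable {U : Set ℂ} {F : ℂ → ℝ → ℂ} {a b : ℝ}

lemma aestronglyMeasurable_deriv_param (hU : IsOpen U)
    (hF : ContinuousOn (Function.uncurry F) (U ×ˢ Set.uIcc a b))
    (hd : ∀ x ∈ Set.uIcc a b, DifferentiableOn ℂ (fun z ↦ F z x) U) {z₀ : ℂ} (hz₀ : z₀ ∈ U) :
    MeasureTheory.AEStronglyMeasurable (fun x ↦ deriv (fun z ↦ F z x) z₀)
      (MeasureTheory.volume.restrict (Set.uIoc a b)) := by
  classical
  have hcont {z : ℂ} (hz : z ∈ U) : ContinuousOn (F z) (Set.uIcc a b) :=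
    hF.comp (by fun_prop : ContinuousOn (fun x ↦ (z, x)) _) fun x hx ↦ ⟨hz, hx⟩
  refine aestronglyMeasurable_of_tendsto_ae (𝓝[≠] z₀)
    (f := fun z x ↦ if z ∈ U then slope (fun z ↦ F z x) z₀ z else 0) (fun z ↦ ?_) ?_
  · by_cases hz : z ∈ U
    · simp only [hz, if_true, slope_def_field]
      exact ((((hcont hz).sub (hcont hz₀)).div_const _).mono Set.uIoc_subset_uIcc)
        |>.aestronglyMeasurable measurableSet_uIoc
    · simp only [hz, if_false]
      exact MeasureTheory.aestronglyMeasurable_const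
  · refine (MeasureTheory.ae_restrict_mem measurableSet_uIoc).mono fun x hx ↦ ?_
    have hder := ((hd x (Set.uIoc_subset_uIcc hx)).differentiableAt
      (hU.mem_nhds hz₀)).hasDerivAt.tendsto_slope
    refine hder.congr' ?_
    filter_upwards [nhdsWithin_le_nhds (hU.mem_nhds hz₀)] with z hz
    rw [if_pos hz]

lemma exists_ball_norm_deriv_param_le (hU : IsOpen U)
    (hF : ContinuousOn (Function.uncurry F) (U ×ˢ Set.uIcc a b))
    (hd : ∀ x ∈ Set.uIcc a b, DifferentiableOn ℂ (fun z ↦ F z x) U) {z₀ : ℂ} (hz₀ : z₀ ∈ U) :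
    ∃ δ > 0, ∃ M, Metric.ball z₀ δ ⊆ U ∧
      ∀ z ∈ Metric.ball z₀ δ, ∀ x ∈ Set.uIcc a b, ‖deriv (fun z ↦ F z x) z‖ ≤ M := by
  obtain ⟨R, hR, hRU⟩ := Metric.nhds_basis_closedBall.mem_iff.1 (hU.mem_nhds hz₀)
  obtain ⟨M, hM⟩ := ((isCompact_closedBall z₀ R).prod isCompact_uIcc).exists_bound_of_continuousOn
    (hF.mono (Set.prod_mono_left hRU))
  refine ⟨R / 2, by positivity, M / (R / 2),
    (Metric.ball_subset_closedBall.trans (Metric.closedBall_subset_closedBall (by linarith))).trans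
      hRU, fun z hz x hx ↦ ?_⟩
  have hsub : Metric.closedBall z (R / 2) ⊆ Metric.closedBall z₀ R :=
    Metric.closedBall_subset_closedBall' (by linarith [Metric.mem_ball.1 hz])
  exact Complex.norm_deriv_le_of_forall_mem_sphere_norm_le (by positivity)
    (((hd x hx).mono (hsub.trans hRU)).diffContOnCl_ball le_rfl)
    fun w hw ↦ hM (w, x) ⟨hsub (Metric.sphere_subset_closedBall hw), hx⟩

lemma differentiableOn_intervalIntegral_param (hU : IsOpen U)
    (hF : ContinuousOn (Function.uncurry F) (U ×ˢ Set.uIcc a b))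
    (hd : ∀ x ∈ Set.uIcc a b, DifferentiableOn ℂ (fun z ↦ F z x) U) :
    DifferentiableOn ℂ (fun z ↦ ∫ x in a..b, F z x) U := by
  intro z₀ hz₀
  obtain ⟨δ, hδ, M, hball, hM⟩ := exists_ball_norm_deriv_param_le hU hF hd hz₀
  have hcont {z : ℂ} (hz : z ∈ U) : ContinuousOn (F z) (Set.uIcc a b) :=
    hF.comp (by fun_prop : ContinuousOn (fun x ↦ (z, x)) _) fun x hx ↦ ⟨hz, hx⟩
  refine (intervalIntegral.hasDerivAt_integral_of_dominated_loc_of_deriv_le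
    (F' := fun z x ↦ deriv (fun z ↦ F z x) z) (bound := fun _ ↦ M) (Metric.ball_mem_nhds z₀ hδ)
    ?_ (hcont hz₀).intervalIntegrable (aestronglyMeasurable_deriv_param hU hF hd hz₀) ?_ (by simp)
    ?_).2.differentiableAt.differentiableWithinAt
  · filter_upwards [hU.mem_nhds hz₀] with z hz
    exact ((hcont hz).mono Set.uIoc_subset_uIcc).aestronglyMeasurable measurableSet_uIoc
  · exact .of_forall fun x hx z hz ↦ hM z hz x (Set.uIoc_subset_uIcc hx)
  · exact .of_forall fun x hx z hz ↦ ((hd x (Set.uIoc_subset_uIcc hx)).differentiableAt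
      (hU.mem_nhds (hball hz))).hasDerivAt

end ParameterIntegral

/-- The `r`-th Fourier coefficient of a `2`-periodic function, computed on the line `im w = Y`. -/
def fourierCoeffAt (r : ℤ) (Y : ℝ) (f : ℂ → ℂ) : ℂ :=
  (1 / 2) * ∫ x in (0 : ℝ)..2, f (x + Y * I) * cexp (-(Real.pi * I * r * (x + Y * I)))

lemma cexp_neg_pi_I_mul_add_two (r : ℤ) (w : ℂ) :
    cexp (-(Real.pi * I * r * (w + 2))) = cexp (-(Real.pi * I * r * w)) := by
  have : -(Real.pi * I * r * (w + 2)) = -(Real.pi * I * r * w) + (-r : ℤ) * (2 * Real.pi * I) := by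
    push_cast; ring
  rw [this, Complex.exp_add, Complex.exp_int_mul_two_pi_mul_I, mul_one]

lemma fourierCoeffAt_congr {f g : ℂ → ℂ} {r : ℤ} {Y : ℝ} (h : ∀ w : ℂ, w.im = Y → f w = g w) :
    fourierCoeffAt r Y f = fourierCoeffAt r Y g := by
  unfold fourierCoeffAt
  congr 1
  exact intervalIntegral.integral_congr fun x _ ↦ by rw [h _ (by simp)]

lemma norm_fourierCoeffAt_le {f : ℂ → ℂ} (r : ℤ) {Y M : ℝ}
    (hM : ∀ x ∈ Set.Icc (0 : ℝ) 2, ‖f (x + Y * I)‖ ≤ M) :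
    ‖fourierCoeffAt r Y f‖ ≤ M * Real.exp (Real.pi * r * Y) := by
  have hint := intervalIntegral.norm_integral_le_of_norm_le_const (a := (0 : ℝ)) (b := 2)
    (f := fun x : ℝ ↦ f (x + Y * I) * cexp (-(Real.pi * I * r * (x + Y * I))))
    (C := M * Real.exp (Real.pi * r * Y)) fun x hx ↦ by
      rw [Set.uIoc_of_le zero_le_two] at hx
      rw [norm_mul, Complex.norm_exp,
        show (-(Real.pi * I * r * (x + Y * I))).re = Real.pi * r * Y by simp]
      exact mul_le_mul_of_nonneg_right (hM x ⟨hx.1.le, hx.2⟩) (Real.exp_pos _).le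
  rw [sub_zero, abs_two] at hint
  rw [fourierCoeffAt, norm_mul, norm_div, norm_one, RCLike.norm_ofNat]
  linarith

lemma fourierCoeffAt_finset_sum {ι : Type*} (s : Finset ι) (c : ι → ℂ) (f : ι → ℂ → ℂ) (r : ℤ)
    (Y : ℝ) (hf : ∀ l ∈ s, Continuous fun x : ℝ ↦ f l (x + Y * I)) :
    fourierCoeffAt r Y (fun w ↦ ∑ l ∈ s, c l * f l w)
      = ∑ l ∈ s, c l * fourierCoeffAt r Y (f l) := by
  have hint : ∀ l ∈ s, IntervalIntegrable (fun x : ℝ ↦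
      c l * (f l (x + Y * I) * cexp (-(Real.pi * I * r * (x + Y * I)))))
      MeasureTheory.volume 0 2 := fun l hl ↦
    (continuous_const.mul ((hf l hl).mul (by fun_prop))).intervalIntegrable _ _
  simp only [fourierCoeffAt, Finset.sum_mul, mul_assoc (c _)]
  rw [intervalIntegral.integral_finsetSum hint, Finset.mul_sum]
  simp only [intervalIntegral.integral_const_mul]
  exact Finset.sum_congr rfl fun l _ ↦ mul_left_comm _ _ _

/-- Functions holomorphic and `2`-periodic on the half plane `im w > Y₀`. -/
structure IsPeriodicAbove (Y₀ : ℝ) (f : ℂ → ℂ) : Prop where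
  differentiableOn : DifferentiableOn ℂ f {w | Y₀ < w.im}
  add_two (w : ℂ) : Y₀ < w.im → f (w + 2) = f w

lemma norm_le_of_fourierCoeff_le {T : ℝ} [Fact (0 < T)] (F : C(AddCircle T, ℂ)) {v : ℤ} {A q : ℝ}
    (hq0 : 0 ≤ q) (hq1 : q < 1) (hzero : ∀ n < v, fourierCoeff F n = 0)
    (hle : ∀ m : ℕ, ‖fourierCoeff F (v + m)‖ ≤ A * q ^ m) (x : AddCircle T) :
    ‖F x‖ ≤ A * (1 - q)⁻¹ := by
  have hinj : Function.Injective fun m : ℕ ↦ v + m := fun a b hab ↦ by simpa using hab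
  have hoff : ∀ n ∉ Set.range fun m : ℕ ↦ v + m, fourierCoeff F n = 0 := fun n hn ↦
    hzero n <| by
      by_contra! hlt
      exact hn ⟨(n - v).toNat, by simp [hlt]⟩
  have hgeo : Summable fun m : ℕ ↦ A * q ^ m := (summable_geometric_of_lt_one hq0 hq1).mul_left A
  have hsummable : Summable (fourierCoeff F) :=
    (hinj.summable_iff hoff).1 (Summable.of_norm_bounded hgeo hle)
  have hsum : HasSum (fun m : ℕ ↦ fourierCoeff F (v + m) • fourier (v + m) x) (F x) := by
    refine (hinj.hasSum_iff (f := fun n ↦ fourierCoeff F n • fourier n x) fun n hn ↦ ?_).2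
      (has_pointwise_sum_fourier_series_of_summable hsummable x)
    rw [hoff n hn, zero_smul]
  have hbound := hsum.norm_le_of_bounded hgeo.hasSum fun m ↦ by
    have hunit : ‖fourier (v + m) x‖ = 1 := Circle.norm_coe _
    rw [norm_smul, hunit, mul_one]
    exact hle m
  rwa [tsum_mul_left, tsum_geometric_of_lt_one hq0 hq1] at hbound

namespace IsPeriodicAbove

variable {Y₀ : ℝ} {f : ℂ → ℂ}

lemma continuous (h : IsPeriodicAbove Y₀ f) {Y : ℝ} (hY : Y₀ < Y) :
    Continuous fun x : ℝ ↦ f (x + Y * I) :=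
  h.differentiableOn.continuousOn.comp_continuous (by fun_prop) fun x ↦ by simpa using hY

lemma sub_const (h : IsPeriodicAbove Y₀ f) (a : ℂ) : IsPeriodicAbove Y₀ fun w ↦ f w - a :=
  ⟨h.differentiableOn.sub_const a, fun w hw ↦ by rw [h.add_two w hw]⟩

lemma periodic (h : IsPeriodicAbove Y₀ f) {Y : ℝ} (hY : Y₀ < Y) :
    (fun x : ℝ ↦ f (x + Y * I)).Periodic 2 := by
  intro x
  have hadd : ((x + 2 : ℝ) : ℂ) + Y * I = (x + Y * I) + 2 := by push_cast; ring
  simp only [hadd, h.add_two _ (show Y₀ < (x + Y * I : ℂ).im by simpa)]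

lemma periodic_mul_cexp (h : IsPeriodicAbove Y₀ f) (r : ℤ) {Y : ℝ} (hY : Y₀ < Y) :
    (fun x : ℝ ↦ f (x + Y * I) * cexp (-(Real.pi * I * r * (x + Y * I)))).Periodic 2 := by
  intro x
  have hadd : ((x + 2 : ℝ) : ℂ) + Y * I = (x + Y * I) + 2 := by push_cast; ring
  simp only [hadd, cexp_neg_pi_I_mul_add_two, h.add_two _ (show Y₀ < (x + Y * I : ℂ).im by simpa)]

lemma fourierCoeffAt_eq (h : IsPeriodicAbove Y₀ f) (r : ℤ) {Y Y' : ℝ} (hY : Y₀ < Y)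
    (hY' : Y₀ < Y') : fourierCoeffAt r Y f = fourierCoeffAt r Y' f := by
  set g : ℂ → ℂ := fun w ↦ f w * cexp (-(Real.pi * I * r * w)) with hg
  have hmem {y : ℝ} (hy : y ∈ Set.uIcc Y Y') : Y₀ < y := (lt_min hY hY').trans_le hy.1
  have hrect := Complex.integral_boundary_rect_eq_zero_of_differentiableOn g (Y * I) (2 + Y' * I)
    ((h.differentiableOn.mul (by fun_prop) : DifferentiableOn ℂ g _).mono fun w hw ↦
      hmem (by simpa using hw.2))
  have hsides : ∫ y in Y..Y', g (2 + y * I) = ∫ y in Y..Y', g (y * I) :=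
    intervalIntegral.integral_congr fun y hy ↦ by
      simp only [hg]
      rw [add_comm, h.add_two _ (by simpa using hmem hy), cexp_neg_pi_I_mul_add_two]
  have hre : ((Y : ℂ) * I).re = 0 ∧ ((2 : ℂ) + Y' * I).re = 2 ∧ ((Y : ℂ) * I).im = Y
      ∧ ((2 : ℂ) + Y' * I).im = Y' := by simp
  rw [hre.1, hre.2.1, hre.2.2.1, hre.2.2.2] at hrect
  simp only [ofReal_ofNat, ofReal_zero, zero_add, hsides, add_sub_cancel_right,
    sub_eq_zero] at hrect
  exact congrArg (fun c ↦ 1 / 2 * c) hrect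

lemma fourierCoeffAt_comp_add (h : IsPeriodicAbove Y₀ f) (r : ℤ) (c : ℂ) {Y : ℝ}
    (hY : Y₀ < Y + c.im) :
    fourierCoeffAt r Y (fun w ↦ f (w + c))
      = cexp (Real.pi * I * r * c) * fourierCoeffAt r (Y + c.im) f := by
  set g : ℝ → ℂ := fun x ↦ f (x + (Y + c.im : ℝ) * I)
    * cexp (-(Real.pi * I * r * (x + (Y + c.im : ℝ) * I))) with hg
  have hgp : g.Periodic 2 := h.periodic_mul_cexp r hY
  have hshift (x : ℝ) : f ((x + Y * I) + c) * cexp (-(Real.pi * I * r * (x + Y * I)))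
      = cexp (Real.pi * I * r * c) * g (x + c.re) := by
    have harg : ((x + c.re : ℝ) : ℂ) + (Y + c.im : ℝ) * I = (x + Y * I) + c := by
      push_cast
      linear_combination Complex.re_add_im c
    simp only [hg, harg]
    rw [mul_left_comm, ← Complex.exp_add]
    congr 2
    ring
  have hint : ∫ x in (0 : ℝ)..2, g (x + c.re) = ∫ x in (0 : ℝ)..2, g x := by
    rw [intervalIntegral.integral_comp_add_right, zero_add, add_comm]
    simpa only [zero_add] using hgp.intervalIntegral_add_eq c.re 0
  rw [fourierCoeffAt, fourierCoeffAt]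
  simp only [hshift]
  rw [intervalIntegral.integral_const_mul, hint, mul_left_comm]

lemma exists_fourierCoeff_eq [Fact ((0 : ℝ) < 2)] (h : IsPeriodicAbove Y₀ f) {Y : ℝ}
    (hY : Y₀ < Y) :
    ∃ F : C(AddCircle (2 : ℝ), ℂ), (∀ x : ℝ, F x = f (x + Y * I)) ∧
      ∀ n, fourierCoeff F n = fourierCoeffAt n Y f * Real.exp (-(Real.pi * n * Y)) := by
  refine ⟨⟨(h.periodic hY).lift, (h.continuous hY).quotient_lift _⟩, fun x ↦ rfl, fun n ↦ ?_⟩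
  rw [fourierCoeff_eq_intervalIntegral _ n 0, fourierCoeffAt, mul_assoc,
    ← intervalIntegral.integral_mul_const, zero_add, Complex.real_smul]
  congr 1
  · norm_num
  · refine intervalIntegral.integral_congr fun x _ ↦ ?_
    change fourier (-n) (x : AddCircle (2 : ℝ)) • f (x + Y * I) = _
    rw [fourier_coe_apply, smul_eq_mul, mul_comm, mul_assoc (f _), ofReal_exp, ← Complex.exp_add]
    congr 2
    push_cast
    linear_combination (Real.pi * n * Y : ℂ) * I_sq

lemma norm_le_of_fourierCoeffAt_eq_zero (h : IsPeriodicAbove Y₀ f) {Y₁ M : ℝ} (hY₁ : Y₀ < Y₁)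
    (hM : ∀ x ∈ Set.Icc (0 : ℝ) 2, ‖f (x + Y₁ * I)‖ ≤ M) {v : ℤ}
    (hv : ∀ r < v, fourierCoeffAt r Y₁ f = 0) {τ : ℂ} (hτ : Y₁ + 1 ≤ τ.im) :
    ‖f τ‖ ≤ 2 * M * Real.exp (-(Real.pi * v * (τ.im - Y₁))) := by
  have : Fact ((0 : ℝ) < 2) := ⟨two_pos⟩
  have hY : Y₀ < τ.im := by linarith
  obtain ⟨F, hF, hcoeff⟩ := h.exists_fourierCoeff_eq hY
  set q := Real.exp (-(Real.pi * (τ.im - Y₁))) with hq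
  have hq2 : q ≤ 1 / 2 := by
    refine (Real.exp_le_exp.2 (by nlinarith [Real.pi_gt_three] : _ ≤ (-1 : ℝ))).trans ?_
    linarith [Real.exp_neg_one_lt_d9]
  have hM0 : 0 ≤ M := (norm_nonneg _).trans (hM 0 (by simp))
  have hle (m : ℕ) : ‖fourierCoeff F (v + m)‖
      ≤ M * Real.exp (-(Real.pi * v * (τ.im - Y₁))) * q ^ m := by
    rw [hcoeff, norm_mul, Complex.norm_real, Real.norm_of_nonneg (Real.exp_pos _).le,
      h.fourierCoeffAt_eq _ hY hY₁]
    refine (mul_le_mul_of_nonneg_right (norm_fourierCoeffAt_le _ hM)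
      (Real.exp_pos _).le).trans_eq ?_
    rw [hq, ← Real.exp_nat_mul, mul_assoc M, mul_assoc M, ← Real.exp_add, ← Real.exp_add]
    congr 2
    push_cast
    ring
  have hbound := norm_le_of_fourierCoeff_le F (Real.exp_pos _).le (by linarith)
    (fun n hn ↦ by rw [hcoeff, h.fourierCoeffAt_eq n hY hY₁, hv n hn, zero_mul]) hle τ.re
  rw [hF, Complex.re_add_im] at hbound
  have hinv : (1 - q)⁻¹ ≤ 2 := by
    rw [inv_le_comm₀ (by linarith) two_pos]
    linarith
  calc ‖f τ‖ ≤ M * Real.exp (-(Real.pi * v * (τ.im - Y₁))) * (1 - q)⁻¹ := hbound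
    _ ≤ M * Real.exp (-(Real.pi * v * (τ.im - Y₁))) * 2 := by gcongr
    _ = 2 * M * Real.exp (-(Real.pi * v * (τ.im - Y₁))) := by ring

end IsPeriodicAbove

/-- The points `(τ, z, w)` for which the matrix `(τ z; z w)` lies in the Siegel upper half space. -/
def siegelCoords : Set (ℂ × ℂ × ℂ) := {p | 0 < p.1.im ∧ p.2.1.im ^ 2 < p.1.im * p.2.2.im}

lemma mem_siegelCoords {τ z w : ℂ} :
    (τ, z, w) ∈ siegelCoords ↔ 0 < τ.im ∧ z.im ^ 2 < τ.im * w.im := Iff.rfl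

lemma mem_siegelCoords_iff_div_lt {τ z w : ℂ} (hτ : 0 < τ.im) :
    (τ, z, w) ∈ siegelCoords ↔ z.im ^ 2 / τ.im < w.im := by
  rw [mem_siegelCoords, div_lt_iff₀ hτ, mul_comm w.im, and_iff_right hτ]

lemma isOpen_siegelCoords : IsOpen siegelCoords :=
  (isOpen_lt (f := fun _ : ℂ × ℂ × ℂ ↦ (0 : ℝ)) (by fun_prop)
    (Complex.continuous_im.comp continuous_fst)).inter
  (isOpen_lt ((Complex.continuous_im.comp (continuous_fst.comp continuous_snd)).pow 2)
    ((Complex.continuous_im.comp continuous_fst).mul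
      (Complex.continuous_im.comp (continuous_snd.comp continuous_snd))))

lemma zero_mem_siegelCoords {τ w : ℂ} (hτ : 0 < τ.im) (hw : 0 < w.im) :
    (τ, 0, w) ∈ siegelCoords := by
  simpa [mem_siegelCoords, hτ] using mul_pos hτ hw

lemma swap_mem_siegelCoords {τ z w : ℂ} (h : (τ, z, w) ∈ siegelCoords) :
    (w, z, τ) ∈ siegelCoords := by
  obtain ⟨hτ, h⟩ := mem_siegelCoords.1 h
  refine mem_siegelCoords.2 ⟨pos_of_mul_pos_right ((sq_nonneg z.im).trans_lt h) hτ.le, ?_⟩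
  rwa [mul_comm]

lemma line_mem_siegelCoords {τ z : ℂ} (hτ : 0 < τ.im) {ρ Y : ℝ} (hY : ρ ^ 2 / τ.im < Y)
    (hz : ‖z‖ ≤ ρ) (x : ℝ) : (τ, z, (x : ℂ) + Y * I) ∈ siegelCoords := by
  rw [mem_siegelCoords_iff_div_lt hτ]
  have hle : z.im ^ 2 / τ.im ≤ ρ ^ 2 / τ.im := by
    rw [← sq_abs]
    gcongr
    exact (Complex.abs_im_le_norm z).trans hz
  simpa using hle.trans_lt hY

lemma im_sq_div_lt_of_norm_le {τ z : ℂ} (hτ : 0 < τ.im) {ρ Y : ℝ} (hY : ρ ^ 2 / τ.im < Y)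
    (hz : ‖z‖ ≤ ρ) : z.im ^ 2 / τ.im < Y := by
  simpa using (mem_siegelCoords_iff_div_lt hτ).1 (line_mem_siegelCoords hτ hY hz 0)

/-- The effect of the unipotent matrix with lower left entry `m`, embedded in `Sp(4)` through
the Levi factor `GL(2)`, on a vector-valued function with components `g 0, …, g j`. -/
def shear (j m : ℕ) (g : ℕ → ℂ → ℂ → ℂ → ℂ) (i : ℕ) (τ z w : ℂ) : ℂ :=
  ∑ l ∈ Finset.range (j + 1),
    (l.choose i * m ^ (l - i) : ℂ) * g l τ (z + m * τ) (w + (2 * m * z + m ^ 2 * τ))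

/-- The transformation laws satisfied by the components `G γ i` of the slash translates `F|γ`
of a cusp form `F` of weight `(j, k)` on `Γ₂[2]`, in the coordinates `(τ z; z w)`. The map `act`
is right multiplication on `Γ₂` by `SL(2, ℤ)`, embedded so that it acts on `w`. -/
structure SlashFamily (j : ℕ) (k : ℤ) {Γ : Type*} (G : Γ → ℕ → ℂ → ℂ → ℂ → ℂ)
    (act : Γ → SL(2, ℤ) → Γ) : Prop where
  differentiableOn (γ i) : DifferentiableOn ℂ (fun p ↦ G γ i p.1 p.2.1 p.2.2) siegelCoords
  eq_zero_of_lt (γ i) : j < i → ∀ τ z w, G γ i τ z w = 0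
  tendsto_cusp (γ i) (τ : ℂ) : 0 < τ.im → Tendsto (fun t : ℝ ↦ G γ i τ 0 (t * I)) atTop (𝓝 0)
  add_two_right (γ i τ z w) : (τ, z, w) ∈ siegelCoords → G γ i τ z (w + 2) = G γ i τ z w
  add_two_mid (γ i τ z w) : (τ, z, w) ∈ siegelCoords → G γ i τ (z + 2) w = G γ i τ z w
  exists_add_one_mid (γ) : ∃ γ', ∀ i τ z w, (τ, z, w) ∈ siegelCoords →
    G γ' i τ z w = G γ i τ (z + 1) w
  exists_shear_one (γ) : ∃ γ', ∀ i τ z w, (τ, z, w) ∈ siegelCoords →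
    G γ' i τ z w = shear j 1 (G γ) i τ z w
  shear_two (γ i τ z w) : (τ, z, w) ∈ siegelCoords → G γ i τ z w = shear j 2 (G γ) i τ z w
  exists_swap (γ) : ∃ γ', ∃ ε : ℂ, ε ≠ 0 ∧ ∀ i ≤ j, ∀ τ z w, (τ, z, w) ∈ siegelCoords →
    G γ' i τ z w = ε * G γ (j - i) w z τ
  act_one (γ) : act γ 1 = γ
  act_mul (γ ρ σ) : act γ (ρ * σ) = act (act γ ρ) σ
  act_congr (γ) {ρ σ} : modTwo ρ = modTwo σ → ∀ i τ z w, (τ, z, w) ∈ siegelCoords →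
    G (act γ ρ) i τ z w = G (act γ σ) i τ z w
  slash (γ) (σ : SL(2, ℤ)) (τ z w) : (τ, z, w) ∈ siegelCoords → ∀ x y : ℂ,
    ∑ i ∈ Finset.range (j + 1), G (act γ σ) i τ z w * x ^ (j - i) * y ^ i
      = autFactor σ w ^ (-k) * ∑ i ∈ Finset.range (j + 1),
        G γ i (τ - σ 1 0 * z ^ 2 / autFactor σ w) (z / autFactor σ w) (mobius σ w)
          * (x - σ 1 0 * z / autFactor σ w * y) ^ (j - i) * (y / autFactor σ w) ^ i

/-- `G γ i` vanishes to order at least `m` along the diagonal `z = 0`. -/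
def DiagOrderGE {Γ : Type*} (G : Γ → ℕ → ℂ → ℂ → ℂ → ℂ) (γ : Γ) (i m : ℕ) : Prop :=
  ∀ τ w : ℂ, 0 < τ.im → 0 < w.im → (m : ℕ∞) ≤ analyticOrderAt (fun z ↦ G γ i τ z w) 0

lemma norm_le_mul_pow_of_le_analyticOrderAt {f : ℂ → ℂ} {m : ℕ} {R M : ℝ}
    (hd : DifferentiableOn ℂ f (Metric.ball 0 R)) (hM : ∀ z ∈ Metric.ball 0 R, ‖f z‖ ≤ M)
    (ho : m ≤ analyticOrderAt f 0) {z : ℂ} (hz : z ∈ Metric.ball 0 R) :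
    ‖f z‖ ≤ M * (‖z‖ / R) ^ m := by
  have hR : 0 < R := Metric.nonempty_ball.1 ⟨z, hz⟩
  rcases m with _ | n
  · simpa using hM z hz
  obtain ⟨g, hg, hfg⟩ :=
    (natCast_le_analyticOrderAt (hd.analyticAt (Metric.ball_mem_nhds _ hR))).1 ho
  replace hfg : f =ᶠ[𝓝 0] fun z ↦ z ^ (n + 1) * g z := by simpa [Filter.EventuallyEq] using hfg
  have h0 : f 0 = 0 := by simpa using hfg.self_of_nhds
  have hlittle : f =o[𝓝 0] fun z ↦ ‖z‖ ^ n := by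
    refine (Asymptotics.IsBigO.trans_isLittleO (g := fun z : ℂ ↦ z ^ (n + 1) * 1) ?_ ?_)
    · exact hfg.trans_isBigO
        ((Asymptotics.isBigO_refl _ _).mul (hg.continuousAt.tendsto.isBigO_one ℂ))
    · simpa only [mul_one, norm_pow] using
        (Asymptotics.isLittleO_pow_pow (𝕜 := ℂ) n.lt_succ_self).norm_right
  simpa [h0] using Complex.dist_le_mul_div_pow_of_mapsTo_ball_of_isLittleO (f := f) (c := 0)
    (R₁ := R) (R₂ := M) (n := n) hd (fun w hw ↦ by simpa [h0] using hM w hw) (by simpa [h0]) hz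

namespace SlashFamily

variable {j : ℕ} {k : ℤ} {Γ : Type*} {G : Γ → ℕ → ℂ → ℂ → ℂ → ℂ} {act : Γ → SL(2, ℤ) → Γ}
  {τ z w : ℂ}

lemma differentiableAt_mid (hG : SlashFamily j k G act) (γ : Γ) (i : ℕ)
    (h : (τ, z, w) ∈ siegelCoords) : DifferentiableAt ℂ (fun z ↦ G γ i τ z w) z :=
  ((hG.differentiableOn γ i).differentiableAt (isOpen_siegelCoords.mem_nhds h)).comp
    (f := fun z ↦ (τ, z, w)) z (by fun_prop)

lemma differentiableAt_right (hG : SlashFamily j k G act) (γ : Γ) (i : ℕ)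
    (h : (τ, z, w) ∈ siegelCoords) : DifferentiableAt ℂ (fun w ↦ G γ i τ z w) w :=
  ((hG.differentiableOn γ i).differentiableAt (isOpen_siegelCoords.mem_nhds h)).comp
    (f := fun w ↦ (τ, z, w)) w (by fun_prop)

lemma isPeriodicAbove (hG : SlashFamily j k G act) (γ : Γ) (i : ℕ) (hτ : 0 < τ.im) (z : ℂ) :
    IsPeriodicAbove (z.im ^ 2 / τ.im) (G γ i τ z) where
  differentiableOn _ hw :=
    (hG.differentiableAt_right γ i
      ((mem_siegelCoords_iff_div_lt hτ).2 hw)).differentiableWithinAt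
  add_two w hw := hG.add_two_right γ i τ z w ((mem_siegelCoords_iff_div_lt hτ).2 hw)

lemma continuousOn_line (hG : SlashFamily j k G act) (γ : Γ) (i : ℕ) (hτ : 0 < τ.im) {ρ Y : ℝ}
    (hY : ρ ^ 2 / τ.im < Y) :
    ContinuousOn (fun p : ℂ × ℝ ↦ G γ i τ p.1 (p.2 + Y * I))
      (Metric.closedBall 0 ρ ×ˢ Set.univ) :=
  (hG.differentiableOn γ i).continuousOn.comp
    (f := fun p : ℂ × ℝ ↦ (τ, p.1, (p.2 : ℂ) + Y * I)) (by fun_prop)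
    fun p hp ↦ line_mem_siegelCoords hτ hY (mem_closedBall_zero_iff.1 hp.1) p.2

lemma exists_norm_le (hG : SlashFamily j k G act) (γ : Γ) (i : ℕ) (hτ : 0 < τ.im) {ρ Y : ℝ}
    (hY : ρ ^ 2 / τ.im < Y) :
    ∃ M, ∀ z : ℂ, ‖z‖ ≤ ρ → ∀ x ∈ Set.Icc (0 : ℝ) 2, ‖G γ i τ z (x + Y * I)‖ ≤ M := by
  obtain ⟨M, hM⟩ := ((isCompact_closedBall (0 : ℂ) ρ).prod
    (isCompact_Icc (a := (0 : ℝ)) (b := 2))).exists_bound_of_continuousOn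
      ((hG.continuousOn_line γ i hτ hY).mono (Set.prod_mono_right (Set.subset_univ _)))
  exact ⟨M, fun z hz x hx ↦ hM (z, x) ⟨mem_closedBall_zero_iff.2 hz, hx⟩⟩

end SlashFamily

/-! ### Fourier–Jacobi coefficients -/

lemma fourierCoeffAt_zero_const (a : ℂ) (Y : ℝ) : fourierCoeffAt 0 Y (fun _ ↦ a) = a := by
  simp [fourierCoeffAt]

lemma fourierCoeffAt_const_of_ne_zero (a : ℂ) {r : ℤ} (hr : r ≠ 0) (Y : ℝ) :
    fourierCoeffAt r Y (fun _ ↦ a) = 0 := by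
  have hper : IsPeriodicAbove (Y - 1) fun _ : ℂ ↦ a := ⟨by fun_prop, fun _ _ ↦ rfl⟩
  have him : ((r : ℂ)⁻¹).im = 0 := by simp
  have hshift := hper.fourierCoeffAt_comp_add r ((r : ℂ)⁻¹) (Y := Y) (by rw [him]; linarith)
  rw [mul_inv_cancel_right₀ (Int.cast_ne_zero.2 hr), Complex.exp_pi_mul_I, him, add_zero,
    neg_one_mul] at hshift
  exact self_eq_neg.1 hshift

namespace IsPeriodicAbove

variable {Y₀ Y : ℝ} {f : ℂ → ℂ}

lemma fourierCoeffAt_sub_const (h : IsPeriodicAbove Y₀ f) (hY : Y₀ < Y) (r : ℤ) (a : ℂ) :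
    fourierCoeffAt r Y (fun w ↦ f w - a)
      = fourierCoeffAt r Y f - fourierCoeffAt r Y (fun _ ↦ a) := by
  simp only [fourierCoeffAt, sub_mul]
  rw [intervalIntegral.integral_sub, mul_sub]
  · exact ((h.continuous hY).mul (by fun_prop)).intervalIntegrable _ _
  · exact Continuous.intervalIntegrable (by fun_prop) _ _

lemma tendsto_fourierCoeffAt_zero (h : IsPeriodicAbove Y₀ f) (hY : Y₀ < Y)
    (hneg : ∀ r < 0, fourierCoeffAt r Y f = 0) :
    Tendsto (fun t : ℝ ↦ f (t * I)) atTop (𝓝 (fourierCoeffAt 0 Y f)) := by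
  set a := fourierCoeffAt 0 Y f
  obtain ⟨M, hM⟩ := (isCompact_Icc (a := (0 : ℝ)) (b := 2)).exists_bound_of_continuousOn
    ((h.sub_const a).continuous hY).continuousOn
  have hv (r : ℤ) (hr : r < 1) : fourierCoeffAt r Y (fun w ↦ f w - a) = 0 := by
    rw [h.fourierCoeffAt_sub_const hY]
    obtain rfl | hr : r = 0 ∨ r < 0 := by omega
    · rw [fourierCoeffAt_zero_const, sub_self]
    · rw [hneg r hr, fourierCoeffAt_const_of_ne_zero a hr.ne, sub_zero]
  have hlim : Tendsto (fun t : ℝ ↦ 2 * M * Real.exp (-(Real.pi * (1 : ℤ) * (t - Y)))) atTop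
      (𝓝 (2 * M * 0)) :=
    (Real.tendsto_exp_neg_atTop_nhds_zero.comp <| Tendsto.const_mul_atTop
      (by simp [Real.pi_pos]) (tendsto_atTop_add_const_right _ _ tendsto_id)).const_mul _
  rw [mul_zero] at hlim
  refine tendsto_sub_nhds_zero_iff.1 (squeeze_zero_norm' ?_ hlim)
  filter_upwards [eventually_ge_atTop (Y + 1)] with t ht
  simpa using (h.sub_const a).norm_le_of_fourierCoeffAt_eq_zero hY hM hv (τ := t * I) (by simpa)

end IsPeriodicAbove

/-- The `r`-th Fourier coefficient of `G γ i τ z` with respect to the last variable. The height of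
the line of integration only has to exceed `(im z)² / im τ`. -/
def fourierJacobiCoeff {Γ : Type*} (G : Γ → ℕ → ℂ → ℂ → ℂ → ℂ) (τ : ℂ) (r : ℤ) (i : ℕ) (γ : Γ)
    (z : ℂ) : ℂ :=
  fourierCoeffAt r (z.im ^ 2 / τ.im + 1) (G γ i τ z)

lemma diagOrderGE_zero {Γ : Type*} (G : Γ → ℕ → ℂ → ℂ → ℂ → ℂ) (γ : Γ) (i : ℕ) :
    DiagOrderGE G γ i 0 := fun _ _ _ _ ↦ by simp

namespace SlashFamily

variable {j : ℕ} {k : ℤ} {Γ : Type*} {G : Γ → ℕ → ℂ → ℂ → ℂ → ℂ} {act : Γ → SL(2, ℤ) → Γ}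
  {τ z : ℂ} {r : ℤ} {i : ℕ}

lemma fourierJacobiCoeff_eq (hG : SlashFamily j k G act) (hτ : 0 < τ.im) (r : ℤ) (i : ℕ) (γ : Γ)
    {Y : ℝ} (hY : z.im ^ 2 / τ.im < Y) :
    fourierJacobiCoeff G τ r i γ z = fourierCoeffAt r Y (G γ i τ z) :=
  (hG.isPeriodicAbove γ i hτ z).fourierCoeffAt_eq r (lt_add_one _) hY

lemma fourierJacobiCoeff_of_lt (hG : SlashFamily j k G act) (r : ℤ) (hi : j < i) (γ : Γ) (z : ℂ) :
    fourierJacobiCoeff G τ r i γ z = 0 := by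
  simp [fourierJacobiCoeff, fourierCoeffAt, hG.eq_zero_of_lt γ i hi]

lemma differentiable_fourierJacobiCoeff (hG : SlashFamily j k G act) (hτ : 0 < τ.im) (r : ℤ)
    (i : ℕ) (γ : Γ) : Differentiable ℂ (fourierJacobiCoeff G τ r i γ) := by
  intro z₀
  set ρ := ‖z₀‖ + 1
  set Y := ρ ^ 2 / τ.im + 1
  have hY : ρ ^ 2 / τ.im < Y := lt_add_one _
  have hball : ∀ z ∈ Metric.ball (0 : ℂ) ρ, ‖z‖ ≤ ρ := fun z hz ↦ (mem_ball_zero_iff.1 hz).le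
  have hz₀ : Metric.ball (0 : ℂ) ρ ∈ 𝓝 z₀ :=
    Metric.isOpen_ball.mem_nhds (mem_ball_zero_iff.2 (lt_add_one _))
  have hdiff : DifferentiableOn ℂ (fun z ↦ fourierCoeffAt r Y (G γ i τ z)) (Metric.ball 0 ρ) := by
    refine (differentiableOn_intervalIntegral_param Metric.isOpen_ball ?_ fun x _ z hz ↦
      ((hG.differentiableAt_mid γ i (line_mem_siegelCoords hτ hY (hball z hz) x)).mul_const
        (cexp (-(Real.pi * I * r * (x + Y * I))))).differentiableWithinAt).const_mul (1 / 2)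
    exact ((hG.continuousOn_line γ i hτ hY).mono
      (Set.prod_mono Metric.ball_subset_closedBall (Set.subset_univ _))).mul (by fun_prop)
  refine (hdiff.differentiableAt hz₀).congr_of_eventuallyEq ?_
  filter_upwards [hz₀] with z hz
  exact hG.fourierJacobiCoeff_eq hτ r i γ (im_sq_div_lt_of_norm_le hτ hY (hball z hz))

lemma fourierJacobiCoeff_isBigO_pow (hG : SlashFamily j k G act) (hτ : 0 < τ.im) (r : ℤ) {γ : Γ}
    {m : ℕ} (ho : DiagOrderGE G γ i m) :
    fourierJacobiCoeff G τ r i γ =O[𝓝 0] fun z ↦ z ^ m := by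
  set Y := (1 : ℝ) ^ 2 / τ.im + 1
  have hY : (1 : ℝ) ^ 2 / τ.im < Y := lt_add_one _
  obtain ⟨M, hM⟩ := hG.exists_norm_le γ i hτ hY
  have hball : ∀ z ∈ Metric.ball (0 : ℂ) 1, ‖z‖ ≤ 1 := fun z hz ↦ (mem_ball_zero_iff.1 hz).le
  refine Asymptotics.IsBigO.of_bound (M * Real.exp (Real.pi * r * Y)) ?_
  filter_upwards [Metric.ball_mem_nhds (0 : ℂ) one_pos] with z hz
  rw [hG.fourierJacobiCoeff_eq hτ r i γ (im_sq_div_lt_of_norm_le hτ hY (hball z hz)), norm_pow,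
    mul_right_comm]
  refine norm_fourierCoeffAt_le r fun x hx ↦ ?_
  have hbound := norm_le_mul_pow_of_le_analyticOrderAt (R := 1) (M := M) (m := m)
    (f := fun z ↦ G γ i τ z (x + Y * I))
    (fun u hu ↦ (hG.differentiableAt_mid γ i
      (line_mem_siegelCoords hτ hY (hball u hu) x)).differentiableWithinAt)
    (fun u hu ↦ hM u (hball u hu) x hx) (ho τ _ hτ (by simpa using (by positivity : 0 < Y))) hz
  simpa using hbound

lemma fourierJacobiCoeff_of_eq_add (hτ : 0 < τ.im) {γ γ' : Γ} {s : ℝ}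
    (h : ∀ w, (τ, z, w) ∈ siegelCoords → G γ' i τ z w = G γ i τ (z + s) w) :
    fourierJacobiCoeff G τ r i γ' z = fourierJacobiCoeff G τ r i γ (z + s) := by
  unfold fourierJacobiCoeff
  rw [show (z + s).im = z.im by simp]
  exact fourierCoeffAt_congr fun w hw ↦
    h w ((mem_siegelCoords_iff_div_lt hτ).2 (hw ▸ lt_add_one _))

lemma jacobiNorm_fourierJacobiCoeff_of_eq_add (hτ : 0 < τ.im) {γ γ' : Γ} {s : ℝ}
    (h : ∀ w, (τ, z, w) ∈ siegelCoords → G γ' i τ z w = G γ i τ (z + s) w) :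
    jacobiNorm τ r (fourierJacobiCoeff G τ r i γ') z
      = jacobiNorm τ r (fourierJacobiCoeff G τ r i γ) (z + s) := by
  simp [jacobiNorm, fourierJacobiCoeff_of_eq_add hτ h]

lemma fourierJacobiCoeff_of_eq_shear (hG : SlashFamily j k G act) (hτ : 0 < τ.im) (hi : i ≤ j)
    (hvan : ∀ l, i < l → ∀ γ z, fourierJacobiCoeff G τ r l γ z = 0) {γ γ' : Γ} (m : ℕ)
    (h : ∀ w, (τ, z, w) ∈ siegelCoords → G γ' i τ z w = shear j m (G γ) i τ z w) :
    fourierJacobiCoeff G τ r i γ' z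
      = cexp (Real.pi * I * r * (2 * m * z + m ^ 2 * τ))
        * fourierJacobiCoeff G τ r i γ (z + m * τ) := by
  set c := 2 * m * z + m ^ 2 * τ with hc
  have hcim : (z + m * τ).im ^ 2 / τ.im = z.im ^ 2 / τ.im + c.im := by
    simp [hc, sq, mul_assoc]
    field_simp
    ring
  have hY : (z + m * τ).im ^ 2 / τ.im < z.im ^ 2 / τ.im + 1 + c.im := by
    rw [hcim]
    linarith
  have hper (l : ℕ) := hG.isPeriodicAbove γ l hτ (z + m * τ)
  have hcoeff (l : ℕ) :
      fourierCoeffAt r (z.im ^ 2 / τ.im + 1) (fun w ↦ G γ l τ (z + m * τ) (w + c))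
        = cexp (Real.pi * I * r * c) * fourierJacobiCoeff G τ r l γ (z + m * τ) := by
    rw [(hper l).fourierCoeffAt_comp_add r c hY, hG.fourierJacobiCoeff_eq hτ r l γ hY]
  have hcont (l : ℕ) : Continuous fun x : ℝ ↦
      G γ l τ (z + m * τ) (x + (z.im ^ 2 / τ.im + 1 : ℝ) * I + c) :=
    (hper l).differentiableOn.continuousOn.comp_continuous (by fun_prop) fun x ↦ by
      simpa only [Set.mem_ofPred_eq, Complex.add_im, Complex.ofReal_im, Complex.re_ofReal_mul,
        Complex.im_ofReal_mul, Complex.I_im, mul_one, zero_add] using hY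
  have hsum : fourierJacobiCoeff G τ r i γ' z = fourierCoeffAt r (z.im ^ 2 / τ.im + 1) fun w ↦
      ∑ l ∈ Finset.range (j + 1),
        (l.choose i * m ^ (l - i) : ℂ) * G γ l τ (z + m * τ) (w + c) :=
    fourierCoeffAt_congr fun w hw ↦
      h w ((mem_siegelCoords_iff_div_lt hτ).2 (hw ▸ lt_add_one _))
  rw [hsum, fourierCoeffAt_finset_sum _ (fun l ↦ (l.choose i * m ^ (l - i) : ℂ))
    (fun l w ↦ G γ l τ (z + m * τ) (w + c)) r _ fun l _ ↦ hcont l, Finset.sum_eq_single i]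
  · simp [hcoeff]
  · intro l _ hne
    rcases lt_or_gt_of_ne hne with hlt | hgt
    · simp [Nat.choose_eq_zero_of_lt hlt]
    · rw [hcoeff, hvan l hgt, mul_zero, mul_zero]
  · simp [hi]

lemma jacobiNorm_fourierJacobiCoeff_of_eq_shear (hG : SlashFamily j k G act) (hτ : 0 < τ.im)
    (hi : i ≤ j) (hvan : ∀ l, i < l → ∀ γ z, fourierJacobiCoeff G τ r l γ z = 0) {γ γ' : Γ} (m : ℕ)
    (h : ∀ w, (τ, z, w) ∈ siegelCoords → G γ' i τ z w = shear j m (G γ) i τ z w) :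
    jacobiNorm τ r (fourierJacobiCoeff G τ r i γ') z
      = jacobiNorm τ r (fourierJacobiCoeff G τ r i γ) (z + m * τ) := by
  simp only [jacobiNorm]
  rw [hG.fourierJacobiCoeff_of_eq_shear hτ hi hvan m h, norm_mul, Complex.norm_exp,
    mul_comm (Real.exp _), mul_assoc, ← Real.exp_add]
  congr 2
  simp [sq, mul_assoc]
  field_simp
  ring

lemma isJacobiFamily_fourierJacobiCoeff (hG : SlashFamily j k G act) (hτ : 0 < τ.im) (hi : i ≤ j)
    (hvan : ∀ l, i < l → ∀ γ z, fourierJacobiCoeff G τ r l γ z = 0) :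
    IsJacobiFamily τ r (fourierJacobiCoeff G τ r i) where
  differentiable := hG.differentiable_fourierJacobiCoeff hτ r i
  add_one γ := by
    obtain ⟨γ', h⟩ := hG.exists_add_one_mid γ
    refine ⟨γ', fun z ↦ ?_⟩
    simpa using jacobiNorm_fourierJacobiCoeff_of_eq_add hτ (s := 1) fun w hw ↦ by
      simpa using h i τ z w hw
  add_self γ := by
    obtain ⟨γ', h⟩ := hG.exists_shear_one γ
    refine ⟨γ', fun z ↦ ?_⟩
    simpa using hG.jacobiNorm_fourierJacobiCoeff_of_eq_shear hτ hi hvan 1 fun w hw ↦ h i τ z w hw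
  periodic_two γ z := by
    simpa using (jacobiNorm_fourierJacobiCoeff_of_eq_add hτ (γ := γ) (γ' := γ) (s := 2)
      fun w hw ↦ by simpa using (hG.add_two_mid γ i τ z w hw).symm).symm
  periodic_two_mul_self γ z := by
    simpa using (hG.jacobiNorm_fourierJacobiCoeff_of_eq_shear hτ hi hvan 2 fun w hw ↦
      hG.shear_two γ i τ z w hw).symm

lemma fourierJacobiCoeff_eq_zero_of_step (hG : SlashFamily j k G act) (hτ : 0 < τ.im) {i₀ i : ℕ}
    (step : ∀ i, i₀ ≤ i → i ≤ j → IsJacobiFamily τ r (fourierJacobiCoeff G τ r i) →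
      ∀ γ z, fourierJacobiCoeff G τ r i γ z = 0) (hi : i₀ ≤ i) (γ : Γ) (z : ℂ) :
    fourierJacobiCoeff G τ r i γ z = 0 := by
  by_cases hij : j < i
  · exact hG.fourierJacobiCoeff_of_lt r hij γ z
  · exact step i hi (not_lt.1 hij) (hG.isJacobiFamily_fourierJacobiCoeff hτ (not_lt.1 hij)
      fun l hl ↦ hG.fourierJacobiCoeff_eq_zero_of_step hτ step (hi.trans hl.le)) γ z
termination_by j + 1 - i

lemma fourierJacobiCoeff_of_neg (hG : SlashFamily j k G act) (hτ : 0 < τ.im) (hr : r < 0) (i : ℕ)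
    (γ : Γ) (z : ℂ) : fourierJacobiCoeff G τ r i γ z = 0 :=
  hG.fourierJacobiCoeff_eq_zero_of_step hτ (fun i _ _ hφ ↦ hφ.eq_zero_of_isBigO_pow hτ (m := 0)
    (by simpa using hr) fun γ ↦ hG.fourierJacobiCoeff_isBigO_pow hτ r (diagOrderGE_zero G γ i))
    (Nat.zero_le i) γ z

lemma fourierJacobiCoeff_zero_apply_zero (hG : SlashFamily j k G act) (hτ : 0 < τ.im) (i : ℕ)
    (γ : Γ) : fourierJacobiCoeff G τ 0 i γ 0 = 0 := by
  have hlim := (hG.isPeriodicAbove γ i hτ 0).tendsto_fourierCoeffAt_zero (lt_add_one _)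
    fun r hr ↦ hG.fourierJacobiCoeff_of_neg hτ hr i γ 0
  exact tendsto_nhds_unique hlim (hG.tendsto_cusp γ i τ hτ)

lemma fourierJacobiCoeff_zero (hG : SlashFamily j k G act) (hτ : 0 < τ.im) (i : ℕ) (γ : Γ)
    (z : ℂ) : fourierJacobiCoeff G τ 0 i γ z = 0 :=
  hG.fourierJacobiCoeff_eq_zero_of_step hτ (fun i _ _ hφ γ z ↦ by
    rw [hφ.apply_eq_apply_zero hτ, hG.fourierJacobiCoeff_zero_apply_zero hτ]) (Nat.zero_le i) γ z

lemma fourierJacobiCoeff_eq_zero_of_lt (hG : SlashFamily j k G act) (hτ : 0 < τ.im) {v : ℕ}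
    (ho : ∀ l, i ≤ l → l ≤ j → v ≤ 1 ∨ ∀ γ, DiagOrderGE G γ l v) (hr : r < v) (γ : Γ) (z : ℂ) :
    fourierJacobiCoeff G τ r i γ z = 0 := by
  refine hG.fourierJacobiCoeff_eq_zero_of_step hτ (fun l hil hlj hφ γ z ↦ ?_) le_rfl γ z
  rcases ho l hil hlj with hv | hord
  · obtain rfl | hr : r = 0 ∨ r < 0 := by omega
    · exact hG.fourierJacobiCoeff_zero hτ l γ z
    · exact hG.fourierJacobiCoeff_of_neg hτ hr l γ z
  · exact hφ.eq_zero_of_isBigO_pow hτ hr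
      (fun γ ↦ hG.fourierJacobiCoeff_isBigO_pow hτ r (hord γ)) γ z

lemma exists_norm_le_exp (hG : SlashFamily j k G act) (hτ : 0 < τ.im) {v : ℕ}
    (ho : ∀ l, i ≤ l → l ≤ j → v ≤ 1 ∨ ∀ γ, DiagOrderGE G γ l v) (γ : Γ) :
    ∃ C Y : ℝ, ∀ z w : ℂ, ‖z‖ ≤ 1 → Y ≤ w.im →
      (τ, z, w) ∈ siegelCoords ∧ ‖G γ i τ z w‖ ≤ C * Real.exp (-(Real.pi * v * w.im)) := by
  set Y := (1 : ℝ) ^ 2 / τ.im + 1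
  have hY : (1 : ℝ) ^ 2 / τ.im < Y := lt_add_one _
  obtain ⟨M, hM⟩ := hG.exists_norm_le γ i hτ hY
  refine ⟨2 * M * Real.exp (Real.pi * v * Y), Y + 1, fun z w hz hw ↦ ?_⟩
  have hz' : z.im ^ 2 / τ.im < Y := im_sq_div_lt_of_norm_le hτ hY hz
  refine ⟨(mem_siegelCoords_iff_div_lt hτ).2 (by linarith), ?_⟩
  refine ((hG.isPeriodicAbove γ i hτ z).norm_le_of_fourierCoeffAt_eq_zero hz' (hM z hz) (v := v)
    (fun r hr ↦ ?_) hw).trans_eq ?_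
  · rw [← hG.fourierJacobiCoeff_eq hτ r i γ hz']
    exact hG.fourierJacobiCoeff_eq_zero_of_lt hτ ho hr γ z
  · rw [mul_assoc (2 * M), ← Real.exp_add]
    congr 2
    push_cast
    ring

end SlashFamily

/-! ### Taylor coefficients along the diagonal -/

section LeadingCoefficient

variable {m : ℕ} {f : ℂ → ℂ}

lemma succ_le_analyticOrderAt_sub_iteratedDeriv (hf : AnalyticAt ℂ f 0)
    (ho : m ≤ analyticOrderAt f 0) :
    (m + 1 : ℕ) ≤ analyticOrderAt
      (fun z ↦ f z - iteratedDeriv m f 0 / m.factorial * z ^ m) 0 := by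
  rw [natCast_le_analyticOrderAt_iff_iteratedDeriv_eq_zero hf] at ho
  rw [natCast_le_analyticOrderAt_iff_iteratedDeriv_eq_zero (by fun_prop)]
  intro i hi
  rw [iteratedDeriv_fun_sub hf.contDiffAt (by fun_prop), iteratedDeriv_const_mul_field,
    iteratedDeriv_fun_pow_zero]
  obtain hi | rfl := (Nat.lt_succ_iff.1 hi).lt_or_eq
  · simp [ho i hi, hi.ne]
  · simp [Nat.factorial_ne_zero]

variable {R M : ℝ}

lemma norm_iteratedDeriv_div_factorial_le (hR : 0 < R)
    (hd : DifferentiableOn ℂ f (Metric.closedBall 0 R))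
    (hM : ∀ z ∈ Metric.closedBall 0 R, ‖f z‖ ≤ M) (m : ℕ) :
    ‖iteratedDeriv m f 0 / m.factorial‖ ≤ M / R ^ m := by
  have hle := Complex.norm_iteratedDeriv_le_of_forall_mem_sphere_norm_le m hR
    (hd.diffContOnCl_ball subset_rfl) fun z hz ↦ hM z (Metric.sphere_subset_closedBall hz)
  rwa [norm_div, Complex.norm_natCast, div_le_iff₀' (by positivity), ← mul_div_assoc]

lemma norm_div_pow_sub_iteratedDeriv_le (hR : 0 < R)
    (hd : DifferentiableOn ℂ f (Metric.closedBall 0 R))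
    (hM : ∀ z ∈ Metric.closedBall 0 R, ‖f z‖ ≤ M) (ho : m ≤ analyticOrderAt f 0) {z : ℂ}
    (hz : z ∈ Metric.ball 0 R) (hz0 : z ≠ 0) :
    ‖f z / z ^ m - iteratedDeriv m f 0 / m.factorial‖ ≤ 2 * M / R ^ (m + 1) * ‖z‖ := by
  set a := iteratedDeriv m f 0 / m.factorial
  have hle : ∀ w ∈ Metric.ball 0 R, ‖f w - a * w ^ m‖ ≤ 2 * M := fun w hw ↦ by
    have hw' : ‖w‖ ≤ R := (mem_ball_zero_iff.1 hw).le
    calc ‖f w - a * w ^ m‖ ≤ ‖f w‖ + ‖a‖ * ‖w‖ ^ m := by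
          simpa only [norm_mul, norm_pow] using norm_sub_le (f w) (a * w ^ m)
      _ ≤ M + M / R ^ m * R ^ m := by
          gcongr
          · exact hM w (Metric.ball_subset_closedBall hw)
          · exact (norm_nonneg _).trans (norm_iteratedDeriv_div_factorial_le hR hd hM m)
          · exact norm_iteratedDeriv_div_factorial_le hR hd hM m
      _ = 2 * M := by
          field_simp
          ring
  have hf : AnalyticAt ℂ f 0 := hd.analyticAt (Metric.closedBall_mem_nhds _ hR)
  have hbound := norm_le_mul_pow_of_le_analyticOrderAt
    ((hd.mono Metric.ball_subset_closedBall).sub (by fun_prop)) hle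
    (succ_le_analyticOrderAt_sub_iteratedDeriv hf ho) hz
  calc ‖f z / z ^ m - a‖ = ‖f z - a * z ^ m‖ / ‖z‖ ^ m := by
        rw [← norm_pow, ← norm_div, sub_div, mul_div_cancel_right₀ _ (pow_ne_zero m hz0)]
    _ ≤ 2 * M * (‖z‖ / R) ^ (m + 1) / ‖z‖ ^ m := by
        gcongr
        exact hbound
    _ = 2 * M / R ^ (m + 1) * ‖z‖ := by
        rw [div_pow, pow_succ ‖z‖]
        field_simp

lemma tendsto_div_pow_of_le_analyticOrderAt {α : Type*} {l : Filter α} {F : α → ℂ → ℂ}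
    {z : α → ℂ} {a : ℂ} (hR : 0 < R)
    (hd : ∀ᶠ t in l, DifferentiableOn ℂ (F t) (Metric.closedBall 0 R))
    (hM : ∀ᶠ t in l, ∀ z ∈ Metric.closedBall 0 R, ‖F t z‖ ≤ M)
    (ho : ∀ᶠ t in l, m ≤ analyticOrderAt (F t) 0) (hz : Tendsto z l (𝓝[≠] 0))
    (ha : Tendsto (fun t ↦ iteratedDeriv m (F t) 0 / m.factorial) l (𝓝 a)) :
    Tendsto (fun t ↦ F t (z t) / z t ^ m) l (𝓝 a) := by
  rw [tendsto_nhdsWithin_iff] at hz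
  have hdiff : Tendsto (fun t ↦ F t (z t) / z t ^ m - iteratedDeriv m (F t) 0 / m.factorial) l
      (𝓝 0) := by
    refine squeeze_zero_norm' ?_ (by simpa using hz.1.norm.const_mul (2 * M / R ^ (m + 1)))
    filter_upwards [hd, hM, ho, hz.1 (Metric.ball_mem_nhds 0 hR), hz.2] with t hd hM ho hzR hz0
    exact norm_div_pow_sub_iteratedDeriv_le hR hd hM ho hzR hz0
  simpa using hdiff.add ha

lemma tendsto_iteratedDeriv_of_continuousAt {X : Type*} [TopologicalSpace X] {F : X → ℂ → ℂ}
    {U : Set ℂ} {x₀ : X} (hU : IsOpen U) (hd : ∀ᶠ x in 𝓝 x₀, DifferentiableOn ℂ (F x) U)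
    (hc : ∀ z ∈ U, ContinuousAt (Function.uncurry F) (x₀, z)) (m : ℕ) {z : ℂ} (hz : z ∈ U) :
    Tendsto (fun x ↦ iteratedDeriv m (F x) z) (𝓝 x₀) (𝓝 (iteratedDeriv m (F x₀) z)) := by
  suffices h : TendstoLocallyUniformlyOn (fun x ↦ iteratedDeriv m (F x)) (iteratedDeriv m (F x₀))
      (𝓝 x₀) U from h.tendsto_at hz
  induction m with
  | zero =>
    simp only [iteratedDeriv_zero]
    rw [hU.tendstoLocallyUniformlyOn_iff_forall_tendsto]
    intro z hz
    have hlim : Tendsto (fun y : X × ℂ ↦ (F x₀ y.2, F y.1 y.2)) (𝓝 x₀ ×ˢ 𝓝 z)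
        (𝓝 (F x₀ z, F x₀ z)) := by
      rw [← nhds_prod_eq]
      exact ((hc z hz).tendsto.comp (f := fun y : X × ℂ ↦ (x₀, y.2))
        (Continuous.tendsto' (by fun_prop) _ _ rfl)).prodMk_nhds (hc z hz).tendsto
    exact hlim.mono_right (nhds_le_uniformity _)
  | succ m ih =>
    simp only [iteratedDeriv_succ]
    refine ih.deriv (hd.mono fun x hx z hz ↦ ?_) hU
    rw [iteratedDeriv_eq_iterate]
    exact ((hx.analyticAt (hU.mem_nhds hz)).iterated_deriv
      m).differentiableAt.differentiableWithinAt

end LeadingCoefficient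

/-- The coefficient of `z ^ m` in the expansion of `G γ i` along the diagonal `z = 0`. -/
def diagCoeff {Γ : Type*} (G : Γ → ℕ → ℂ → ℂ → ℂ → ℂ) (γ : Γ) (i m : ℕ) (τ w : ℂ) : ℂ :=
  iteratedDeriv m (fun z ↦ G γ i τ z w) 0 / m.factorial

namespace SlashFamily

variable {j : ℕ} {k : ℤ} {Γ : Type*} {G : Γ → ℕ → ℂ → ℂ → ℂ → ℂ} {act : Γ → SL(2, ℤ) → Γ}
  {γ : Γ} {i m : ℕ} {τ w : ℂ}

lemma exists_ball_norm_le (hG : SlashFamily j k G act) (γ : Γ) (i : ℕ) (hτ : 0 < τ.im)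
    (hw : 0 < w.im) : ∃ R > 0, ∃ M : ℝ, ∀ p ∈ Metric.ball (τ, w) R, ∀ z ∈ Metric.closedBall 0 R,
      (p.1, z, p.2) ∈ siegelCoords ∧ ‖G γ i p.1 z p.2‖ ≤ M := by
  have hmem : siegelCoords ∈ 𝓝 (τ, (0 : ℂ), w) :=
    isOpen_siegelCoords.mem_nhds (zero_mem_siegelCoords hτ hw)
  have hbdd : ∀ᶠ q : ℂ × ℂ × ℂ in 𝓝 (τ, 0, w),
      ‖G γ i q.1 q.2.1 q.2.2‖ ≤ ‖G γ i τ 0 w‖ + 1 :=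
    ((hG.differentiableOn γ i).continuousOn.continuousAt hmem).norm.eventually_le_const
      (lt_add_one _)
  obtain ⟨R, hR, hball⟩ := Metric.nhds_basis_closedBall.mem_iff.1 (inter_mem hmem hbdd)
  rw [← closedBall_prod_same, ← closedBall_prod_same] at hball
  refine ⟨R, hR, _, fun p hp z hz ↦ hball (a := (p.1, z, p.2)) ⟨?_, hz, ?_⟩⟩
  · exact (le_max_left _ _).trans (Metric.mem_ball.1 hp).le
  · exact (le_max_right _ _).trans (Metric.mem_ball.1 hp).le

lemma differentiableOn_mid (hG : SlashFamily j k G act) (γ : Γ) (i : ℕ) {s : Set ℂ}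
    (hs : ∀ z ∈ s, (τ, z, w) ∈ siegelCoords) : DifferentiableOn ℂ (fun z ↦ G γ i τ z w) s :=
  fun z hz ↦ (hG.differentiableAt_mid γ i (hs z hz)).differentiableWithinAt

lemma analyticAt_mid (hG : SlashFamily j k G act) (γ : Γ) (i : ℕ) (hτ : 0 < τ.im)
    (hw : 0 < w.im) : AnalyticAt ℂ (fun z ↦ G γ i τ z w) 0 := by
  obtain ⟨R, hR, M, hM⟩ := hG.exists_ball_norm_le γ i hτ hw
  exact (hG.differentiableOn_mid γ i fun z hz ↦
    (hM (τ, w) (Metric.mem_ball_self hR) z hz).1).analyticAt (Metric.closedBall_mem_nhds _ hR)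

lemma diagOrderGE_succ (hG : SlashFamily j k G act) (ho : DiagOrderGE G γ i m)
    (h0 : ∀ τ w : ℂ, 0 < τ.im → 0 < w.im → diagCoeff G γ i m τ w = 0) :
    DiagOrderGE G γ i (m + 1) := fun τ w hτ hw ↦ by
  have hsub := succ_le_analyticOrderAt_sub_iteratedDeriv (hG.analyticAt_mid γ i hτ hw)
    (ho τ w hτ hw)
  have hzero := h0 τ w hτ hw
  rw [diagCoeff] at hzero
  simpa only [hzero, zero_mul, sub_zero] using hsub

lemma tendsto_diagCoeff (hG : SlashFamily j k G act) (γ : Γ) (i m : ℕ) (hτ : 0 < τ.im)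
    (hw : 0 < w.im) : Tendsto (fun p : ℂ × ℂ ↦ diagCoeff G γ i m p.1 p.2) (𝓝 (τ, w))
      (𝓝 (diagCoeff G γ i m τ w)) := by
  obtain ⟨R, hR, M, hM⟩ := hG.exists_ball_norm_le γ i hτ hw
  refine (tendsto_iteratedDeriv_of_continuousAt (F := fun (p : ℂ × ℂ) z ↦ G γ i p.1 z p.2)
    (U := Metric.ball 0 R) Metric.isOpen_ball ?_ (fun z hz ↦ ?_) m
    (Metric.mem_ball_self hR)).div_const _
  · filter_upwards [Metric.ball_mem_nhds (τ, w) hR] with p hp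
    exact hG.differentiableOn_mid γ i fun z hz ↦ (hM p hp z (Metric.ball_subset_closedBall hz)).1
  · have hperm : ContinuousAt (fun q : (ℂ × ℂ) × ℂ ↦ (q.1.1, q.2, q.1.2)) ((τ, w), z) := by
      fun_prop
    refine ContinuousAt.comp (g := fun p : ℂ × ℂ × ℂ ↦ G γ i p.1 p.2.1 p.2.2) ?_ hperm
    exact (hG.differentiableOn γ i).continuousOn.continuousAt (isOpen_siegelCoords.mem_nhds
      (hM (τ, w) (Metric.mem_ball_self hR) z (Metric.ball_subset_closedBall hz)).1)

lemma tendsto_div_pow (hG : SlashFamily j k G act) (ho : DiagOrderGE G γ i m) (hτ : 0 < τ.im)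
    (hw : 0 < w.im) {α : Type*} {l : Filter α} {a b z : α → ℂ} (ha : Tendsto a l (𝓝 τ))
    (hb : Tendsto b l (𝓝 w)) (hz : Tendsto z l (𝓝[≠] 0)) :
    Tendsto (fun t ↦ G γ i (a t) (z t) (b t) / z t ^ m) l (𝓝 (diagCoeff G γ i m τ w)) := by
  obtain ⟨R, hR, M, hM⟩ := hG.exists_ball_norm_le γ i hτ hw
  have hab : Tendsto (fun t ↦ (a t, b t)) l (𝓝 (τ, w)) := ha.prodMk_nhds hb
  have hball : ∀ᶠ t in l, (a t, b t) ∈ Metric.ball (τ, w) R := hab (Metric.ball_mem_nhds _ hR)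
  have hcoeff : Tendsto (fun t ↦ diagCoeff G γ i m (a t) (b t)) l (𝓝 (diagCoeff G γ i m τ w)) := by
    simpa only [Function.comp_def] using (hG.tendsto_diagCoeff γ i m hτ hw).comp hab
  refine tendsto_div_pow_of_le_analyticOrderAt (F := fun t z ↦ G γ i (a t) z (b t)) (M := M)
    (a := diagCoeff G γ i m τ w) hR ?_ ?_ ?_ hz hcoeff
  · filter_upwards [hball] with t ht
    exact hG.differentiableOn_mid γ i fun z hz ↦ (hM _ ht z hz).1
  · filter_upwards [hball] with t ht z hz
    exact (hM _ ht z hz).2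
  · filter_upwards [ha (isOpen_upperHalfPlaneSet.mem_nhds hτ),
      hb (isOpen_upperHalfPlaneSet.mem_nhds hw)] with t hat hbt
    exact ho _ _ hat hbt

lemma differentiableOn_diagCoeff (hG : SlashFamily j k G act) (ho : DiagOrderGE G γ i m)
    (hτ : 0 < τ.im) : DifferentiableOn ℂ (diagCoeff G γ i m τ) ℍₒ := by
  intro w hw
  obtain ⟨R, hR, M, hM⟩ := hG.exists_ball_norm_le γ i hτ hw
  have hball {u : ℂ} (hu : u ∈ Metric.ball w R) : (τ, u) ∈ Metric.ball (τ, w) R := by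
    simpa [Prod.dist_eq, hR] using hu
  have him {u : ℂ} (hu : u ∈ Metric.ball w R) : 0 < u.im :=
    (swap_mem_siegelCoords (hM _ (hball hu) 0 (Metric.mem_closedBall_self hR.le)).1).1
  have hlim : TendstoUniformlyOn (fun z u ↦ G γ i τ z u / z ^ m) (diagCoeff G γ i m τ) (𝓝[≠] 0)
      (Metric.ball w R) := by
    rw [Metric.tendstoUniformlyOn_iff]
    intro ε hε
    have hsmall : ∀ᶠ z : ℂ in 𝓝[≠] 0, 2 * M / R ^ (m + 1) * ‖z‖ < ε :=
      nhdsWithin_le_nhds ((Continuous.tendsto' (by fun_prop) 0 0 (by simp)).eventually_lt_const hε)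
    filter_upwards [hsmall, nhdsWithin_le_nhds (Metric.ball_mem_nhds 0 hR), self_mem_nhdsWithin]
      with z hzε hzR hz0 u hu
    rw [dist_comm, dist_eq_norm]
    exact (norm_div_pow_sub_iteratedDeriv_le hR
      (hG.differentiableOn_mid γ i fun z hz ↦ (hM _ (hball hu) z hz).1)
      (fun z hz ↦ (hM _ (hball hu) z hz).2) (ho τ u hτ (him hu)) hzR hz0).trans_lt hzε
  refine ((hlim.tendstoLocallyUniformlyOn.differentiableOn ?_ Metric.isOpen_ball).differentiableAt
    (Metric.ball_mem_nhds w hR)).differentiableWithinAt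
  filter_upwards [nhdsWithin_le_nhds (Metric.closedBall_mem_nhds 0 hR)] with z hz u hu
  exact ((hG.differentiableAt_right γ i (hM _ (hball hu) z hz).1).div_const
    _).differentiableWithinAt

lemma exists_norm_diagCoeff_le_exp (hG : SlashFamily j k G act) (γ : Γ) (m : ℕ) (hτ : 0 < τ.im)
    {v : ℕ} (ho : ∀ l, i ≤ l → l ≤ j → v ≤ 1 ∨ ∀ γ, DiagOrderGE G γ l v) :
    ∃ C Y : ℝ, ∀ w : ℂ, Y ≤ w.im →
      ‖diagCoeff G γ i m τ w‖ ≤ C * Real.exp (-(Real.pi * v * w.im)) := by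
  obtain ⟨C, Y, hC⟩ := hG.exists_norm_le_exp hτ ho γ
  refine ⟨C, Y, fun w hw ↦ ?_⟩
  have hmem (z : ℂ) (hz : z ∈ Metric.closedBall 0 1) := hC z w (mem_closedBall_zero_iff.1 hz) hw
  simpa only [diagCoeff, one_pow, div_one] using norm_iteratedDeriv_div_factorial_le one_pos
    (hG.differentiableOn_mid γ i fun z hz ↦ (hmem z hz).1) (fun z hz ↦ (hmem z hz).2) m

end SlashFamily

/-! ### Exponential decay at the cusp -/

/-- Exponential decay of order `v` as `im τ → ∞`, measured in powers of `exp (-π * im τ)`: for a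
modular form on `Γ(2)` this is vanishing to order `v` in the local parameter of the cusp. -/
def ExpDecay (v : ℕ) (f : ℂ → ℂ) : Prop :=
  f =O[comap Complex.im atTop] fun τ ↦ Real.exp (-(Real.pi * v * τ.im))

lemma expDecay_iff {v : ℕ} {f : ℂ → ℂ} : ExpDecay v f ↔
    ∃ C Y : ℝ, ∀ τ : ℂ, Y ≤ τ.im → ‖f τ‖ ≤ C * Real.exp (-(Real.pi * v * τ.im)) := by
  simp only [ExpDecay, Asymptotics.isBigO_iff, eventually_comap, eventually_atTop,
    Real.norm_eq_abs, Real.abs_exp]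
  exact ⟨fun ⟨C, Y, h⟩ ↦ ⟨C, Y, fun τ hτ ↦ h _ hτ τ rfl⟩,
    fun ⟨C, Y, h⟩ ↦ ⟨C, Y, by rintro _ hY τ rfl; exact h τ hY⟩⟩

lemma expDecay_const (c : ℂ) : ExpDecay 0 fun _ ↦ c :=
  expDecay_iff.2 ⟨‖c‖, 0, fun τ _ ↦ by simp⟩

namespace ExpDecay

variable {f g : ℂ → ℂ} {u v : ℕ}

lemma mul (hf : ExpDecay u f) (hg : ExpDecay v g) : ExpDecay (u + v) fun τ ↦ f τ * g τ :=
  (Asymptotics.IsBigO.mul hf hg).congr_right fun τ ↦ by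
    rw [← Real.exp_add]
    push_cast
    ring_nf

lemma pow (hf : ExpDecay v f) (n : ℕ) : ExpDecay (n * v) fun τ ↦ f τ ^ n :=
  (Asymptotics.IsBigO.pow hf n).congr_right fun τ ↦ by
    rw [← Real.exp_nat_mul]
    push_cast
    ring_nf

lemma weaken (hf : ExpDecay v f) (h : u ≤ v) : ExpDecay u f := by
  refine Asymptotics.IsBigO.trans hf (.of_bound 1 ?_)
  filter_upwards [tendsto_comap.eventually_ge_atTop 0] with τ hτ
  simp only [Real.norm_eq_abs, Real.abs_exp, one_mul]
  gcongr

lemma sum {ι : Type*} {s : Finset ι} {f : ι → ℂ → ℂ} (h : ∀ i ∈ s, ExpDecay v (f i)) :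
    ExpDecay v fun τ ↦ ∑ i ∈ s, f i τ :=
  Asymptotics.IsBigO.fun_sum h

end ExpDecay

lemma expDecay_quasiE2 (σ : SL(2, ℤ)) : ExpDecay (if Even (σ 1 0) then 0 else 1) (quasiE2 σ) := by
  obtain ⟨C, h⟩ := exists_norm_quasiE2_sub_le
  have hdecay : ExpDecay 1 fun τ ↦ quasiE2 σ τ - if Even (σ 1 0) then 3 * scaledE2AtInfty else 0 :=
    expDecay_iff.2 ⟨C, 2, fun τ hτ ↦ by simpa using h σ τ hτ⟩
  split_ifs at hdecay ⊢ with hσ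
  · exact (Asymptotics.IsBigO.add (hdecay.weaken zero_le_one) (expDecay_const _)).congr_left
      fun τ ↦ sub_add_cancel _ _
  · simpa only [sub_zero] using hdecay

lemma card_SL_two_zmod_two : Fintype.card SL(2, ZMod 2) = 6 := by decide +kernel

lemma sum_ite_lower_left_eq_zero (x y : ℤ) :
    ∑ c : SL(2, ZMod 2), (if c 1 0 = 0 then x else y) = 2 * x + 4 * y := by
  have heq : (Finset.univ.filter fun c : SL(2, ZMod 2) ↦ c 1 0 = 0).card = 2 := by decide +kernel
  have hne : (Finset.univ.filter fun c : SL(2, ZMod 2) ↦ ¬ c 1 0 = 0).card = 4 := by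
    decide +kernel
  simp [Finset.sum_ite, heq, hne]

-- Of the six cosets of `Γ(2)`, two lie in `Γ₀(2)`.
lemma IsSlashOrbit.eq_zero_of_expDecay {w : ℤ} {g : SL(2, ℤ) → ℂ → ℂ}
    (hg : IsSlashOrbit modTwo w g) {x y : ℕ}
    (hdecay : ∀ σ, ExpDecay (if Even (σ 1 0) then x else y) (g σ)) (hw : w < 2 * x + 4 * y)
    (σ : SL(2, ℤ)) {τ : ℂ} (hτ : 0 < τ.im) : g σ τ = 0 := by
  refine hg.eq_zero_of_valence modTwo_surjective (fun c ↦ if c 1 0 = 0 then x else y)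
    (fun σ ↦ ?_) ?_ σ hτ
  · obtain ⟨C, Y, h⟩ := expDecay_iff.1 (hdecay σ)
    exact ⟨C, Y, fun τ _ hY ↦ by simpa only [even_iff_modTwo] using h τ hY⟩
  · push_cast
    rw [sum_ite_lower_left_eq_zero, card_SL_two_zmod_two]
    push_cast
    linarith

/-! ### Leading forms along the diagonal -/

lemma DiagOrderGE.mono {Γ : Type*} {G : Γ → ℕ → ℂ → ℂ → ℂ → ℂ} {γ : Γ} {i m n : ℕ}
    (h : DiagOrderGE G γ i m) (hn : n ≤ m) : DiagOrderGE G γ i n :=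
  fun τ w hτ hw ↦ (Nat.cast_le.2 hn).trans (h τ w hτ hw)

/-- The order of vanishing along the diagonal that the `a`-th step of the induction establishes for
the `i`-th component; the truncated subtraction makes the condition void for `a ≤ min i (j - i)`. -/
def diagOrder (j a i : ℕ) : ℕ := a - min i (j - i)

/-- All components vanish along the diagonal to the order prescribed by `diagOrder j a`. -/
def VanishesOnDiagTo {Γ : Type*} (j : ℕ) (G : Γ → ℕ → ℂ → ℂ → ℂ → ℂ) (a : ℕ) : Prop :=
  ∀ γ i, i ≤ j → DiagOrderGE G γ i (diagOrder j a i)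

section LeadingForms

variable {j : ℕ} {k : ℤ} {Γ : Type*} {G : Γ → ℕ → ℂ → ℂ → ℂ → ℂ} {act : Γ → SL(2, ℤ) → Γ}
  {γ γ' : Γ} {i m n a : ℕ} {e : ℕ → ℕ} {τ w : ℂ}

lemma eventually_mem_siegelCoords (hτ : 0 < τ.im) (hw : 0 < w.im) :
    ∀ᶠ z in 𝓝 (0 : ℂ), (τ, z, w) ∈ siegelCoords := by
  have hcont : ContinuousAt (fun z : ℂ ↦ (τ, z, w)) 0 := by fun_prop
  exact hcont (isOpen_siegelCoords.mem_nhds (zero_mem_siegelCoords hτ hw))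

lemma SlashFamily.diagOrderGE_sub (hG : SlashFamily j k G act) (hi : i ≤ j)
    (h : ∀ γ, DiagOrderGE G γ i n) (γ : Γ) : DiagOrderGE G γ (j - i) n := fun τ w hτ hw ↦ by
  obtain ⟨γ', ε, hε, hswap⟩ := hG.exists_swap γ
  have heq : (fun z ↦ G γ' i w z τ) =ᶠ[𝓝 0] (fun _ ↦ ε) * fun z ↦ G γ (j - i) τ z w := by
    filter_upwards [eventually_mem_siegelCoords hw hτ] with z hz
    exact hswap i hi w z τ hz
  have horder := h γ' w τ hw hτ
  rwa [analyticOrderAt_congr heq, analyticOrderAt_mul analyticAt_const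
    (hG.analyticAt_mid γ (j - i) hτ hw), analyticAt_const.analyticOrderAt_eq_zero.2 hε,
    zero_add] at horder

lemma diagCoeff_congr (hτ : 0 < τ.im) (hw : 0 < w.im)
    (h : ∀ z, (τ, z, w) ∈ siegelCoords → G γ i τ z w = G γ' i τ z w) :
    diagCoeff G γ i m τ w = diagCoeff G γ' i m τ w := by
  have heq : (fun z ↦ G γ i τ z w) =ᶠ[𝓝 0] fun z ↦ G γ' i τ z w :=
    (eventually_mem_siegelCoords hτ hw).mono h
  rw [diagCoeff, diagCoeff, heq.iteratedDeriv_eq]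

/-- The coefficient of `z ^ (a - e i)` in the `i`-th component if this is the exponent prescribed
by `diagOrder j a i`, and zero otherwise. -/
def leadingDiagCoeff (j : ℕ) (G : Γ → ℕ → ℂ → ℂ → ℂ → ℂ) (a : ℕ) (e : ℕ → ℕ) (γ : Γ) (i : ℕ)
    (τ w : ℂ) : ℂ :=
  if diagOrder j a i + e i = a then diagCoeff G γ i (diagOrder j a i) τ w else 0

open Polynomial in
/-- The polynomial in `η` that is the coefficient of `z ^ a` in `∑ i, G γ i * (z * η) ^ e i`. -/
def leadingPoly (j : ℕ) (G : Γ → ℕ → ℂ → ℂ → ℂ → ℂ) (a : ℕ) (e : ℕ → ℕ) (γ : Γ) (τ w : ℂ) : ℂ[X] :=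
  ∑ i ∈ Finset.range (j + 1), C (leadingDiagCoeff j G a e γ i τ w) * X ^ e i

lemma eval_leadingPoly (η : ℂ) : (leadingPoly j G a e γ τ w).eval η =
    ∑ i ∈ Finset.range (j + 1), leadingDiagCoeff j G a e γ i τ w * η ^ e i := by
  simp [leadingPoly, Polynomial.eval_finsetSum]

lemma eval_derivative_leadingPoly (η : ℂ) : (leadingPoly j G a e γ τ w).derivative.eval η =
    ∑ i ∈ Finset.range (j + 1),
      leadingDiagCoeff j G a e γ i τ w * (e i * η ^ (e i - 1)) := by
  simp [leadingPoly, Polynomial.eval_finsetSum, Polynomial.derivative_X_pow]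

lemma coeff_leadingPoly (he : Set.InjOn e (Set.Iic j)) (hi : i ≤ j) :
    (leadingPoly j G a e γ τ w).coeff (e i) = leadingDiagCoeff j G a e γ i τ w := by
  rw [leadingPoly, Polynomial.finsetSum_coeff, Finset.sum_eq_single_of_mem i (by simp; lia)]
  · simp
  · intro l hl hne
    have hlj : l ≤ j := Finset.mem_range_succ_iff.1 hl
    rw [Polynomial.coeff_C_mul_X_pow, if_neg fun h ↦ hne (he hlj hi h.symm)]

lemma diagCoeff_eq_zero_of_leadingPoly_eq_zero (he : Set.InjOn e (Set.Iic j)) (hi : i ≤ j)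
    (hia : diagOrder j a i + e i = a) (h : leadingPoly j G a e γ τ w = 0) :
    diagCoeff G γ i (diagOrder j a i) τ w = 0 := by
  simpa [h, leadingDiagCoeff, hia, eq_comm] using coeff_leadingPoly (G := G) (γ := γ) (τ := τ)
    (w := w) (a := a) he hi

lemma leadingPoly_act_congr (hG : SlashFamily j k G act) {ρ σ : SL(2, ℤ)}
    (h : modTwo ρ = modTwo σ) (hτ : 0 < τ.im) (hw : 0 < w.im) :
    leadingPoly j G a e (act γ ρ) τ w = leadingPoly j G a e (act γ σ) τ w := by
  simp only [leadingPoly, leadingDiagCoeff,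
    diagCoeff_congr hτ hw fun z hz ↦ hG.act_congr γ h _ τ z w hz]

lemma differentiableOn_leadingDiagCoeff (hG : SlashFamily j k G act) (hH : VanishesOnDiagTo j G a)
    (hi : i ≤ j) (hτ : 0 < τ.im) : DifferentiableOn ℂ (leadingDiagCoeff j G a e γ i τ) ℍₒ := by
  unfold leadingDiagCoeff
  split_ifs
  · exact hG.differentiableOn_diagCoeff (hH γ i hi) hτ
  · exact differentiableOn_const 0

lemma tendsto_leadingPoly (hG : SlashFamily j k G act) (hH : VanishesOnDiagTo j G a)
    (he : ∀ i ≤ j, a ≤ diagOrder j a i + e i) (γ : Γ) (hτ : 0 < τ.im) (hw : 0 < w.im)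
    {α : Type*} {l : Filter α} {u b z : α → ℂ} {T : α → ℕ → ℂ} {η : ℂ} (hu : Tendsto u l (𝓝 τ))
    (hb : Tendsto b l (𝓝 w)) (hz : Tendsto z l (𝓝[≠] 0))
    (hT : ∀ i ≤ j, Tendsto (T · i) l (𝓝 (η ^ e i))) :
    Tendsto (fun t ↦ (∑ i ∈ Finset.range (j + 1), G γ i (u t) (z t) (b t) * (z t ^ e i * T t i))
      / z t ^ a) l (𝓝 ((leadingPoly j G a e γ τ w).eval η)) := by
  simp only [Finset.sum_div, eval_leadingPoly]
  refine tendsto_finsetSum _ fun i hi ↦ ?_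
  have hi : i ≤ j := Finset.mem_range_succ_iff.1 hi
  have hz' := tendsto_nhdsWithin_iff.1 hz
  set r := diagOrder j a i + e i - a with hr
  have hcoeff : leadingDiagCoeff j G a e γ i τ w * η ^ e i =
      diagCoeff G γ i (diagOrder j a i) τ w * η ^ e i * 0 ^ r := by
    have hle := he i hi
    by_cases h : diagOrder j a i + e i = a
    · simp [leadingDiagCoeff, h, hr]
    · rw [leadingDiagCoeff, if_neg h, zero_pow (by lia), mul_zero, zero_mul]
  rw [hcoeff]
  refine (((hG.tendsto_div_pow (hH γ i hi) hτ hw hu hb hz).mul (hT i hi)).mul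
    (hz'.1.pow r)).congr' ?_
  filter_upwards [hz'.2] with t ht
  have hpow : z t ^ r * z t ^ a = z t ^ diagOrder j a i * z t ^ e i := by
    rw [← pow_add, ← pow_add, hr, Nat.sub_add_cancel (he i hi)]
  have hzt : z t ≠ 0 := ht
  field_simp
  linear_combination G γ i (u t) (z t) (b t) * T t i * hpow

lemma eval_leadingPoly_act (hG : SlashFamily j k G act) (hH : VanishesOnDiagTo j G a)
    (he : ∀ i ≤ j, a ≤ diagOrder j a i + e i) (σ : SL(2, ℤ)) (hτ : 0 < τ.im) (hw : 0 < w.im)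
    {T : ℂ → ℕ → ℂ} {c x η : ℂ} (hT : ∀ i ≤ j, Tendsto (T · i) (𝓝[≠] 0) (𝓝 (x ^ e i)))
    (h : ∀ z, (τ, z, w) ∈ siegelCoords →
      ∑ i ∈ Finset.range (j + 1), G (act γ σ) i τ z w * (z ^ e i * η ^ e i)
        = c * ∑ i ∈ Finset.range (j + 1),
          G γ i (τ - σ 1 0 * z ^ 2 / autFactor σ w) (z / autFactor σ w) (mobius σ w)
            * ((z / autFactor σ w) ^ e i * T z i)) :
    (leadingPoly j G a e (act γ σ) τ w).eval η =
      c / autFactor σ w ^ a * (leadingPoly j G a e γ τ (mobius σ w)).eval x := by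
  have hJ := autFactor_ne_zero σ hw
  have hid : Tendsto (fun z : ℂ ↦ z) (𝓝[≠] 0) (𝓝 0) := nhdsWithin_le_nhds
  have hz : Tendsto (fun z ↦ z / autFactor σ w) (𝓝[≠] 0) (𝓝[≠] 0) := by
    refine tendsto_nhdsWithin_iff.2 ⟨by simpa using hid.div_const (autFactor σ w), ?_⟩
    filter_upwards [self_mem_nhdsWithin] with z hz using div_ne_zero hz hJ
  have hu : Tendsto (fun z ↦ τ - σ 1 0 * z ^ 2 / autFactor σ w) (𝓝[≠] 0) (𝓝 τ) := by
    simpa using (((hid.pow 2).const_mul (σ 1 0 : ℂ)).div_const (autFactor σ w)).const_sub τ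
  have hleft := tendsto_leadingPoly hG hH he (act γ σ) hτ hw tendsto_const_nhds
    tendsto_const_nhds tendsto_id (η := η) (T := fun _ i ↦ η ^ e i) fun _ _ ↦ tendsto_const_nhds
  have hright := tendsto_leadingPoly hG hH he γ hτ (mobius_im_pos σ hw) hu tendsto_const_nhds hz hT
  refine tendsto_nhds_unique hleft ((hright.const_mul (c / autFactor σ w ^ a)).congr' ?_)
  filter_upwards [nhdsWithin_le_nhds (eventually_mem_siegelCoords hτ hw), self_mem_nhdsWithin]
    with z hz hz0
  have hz0 : z ≠ 0 := hz0
  simp only [id]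
  rw [h z hz, div_pow]
  field_simp

lemma eval_leadingPoly_id_act (hG : SlashFamily j k G act) (hH : VanishesOnDiagTo j G a)
    (σ : SL(2, ℤ)) (hτ : 0 < τ.im) (hw : 0 < w.im) (η : ℂ) :
    (leadingPoly j G a id (act γ σ) τ w).eval η =
      autFactor σ w ^ (-(k + a)) * (leadingPoly j G a id γ τ (mobius σ w)).eval η := by
  have hJ := autFactor_ne_zero σ hw
  rw [neg_add, zpow_add₀ hJ, _root_.zpow_neg _ (a : ℤ), zpow_natCast, ← div_eq_mul_inv]
  refine eval_leadingPoly_act hG hH (by simp only [diagOrder, id]; lia) σ hτ hw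
    (T := fun z i ↦ (1 - σ 1 0 * z / autFactor σ w * (z * η)) ^ (j - i) * η ^ i)
    (fun i _ ↦ ?_) fun z hz ↦ ?_
  · exact tendsto_nhdsWithin_of_tendsto_nhds (Continuous.tendsto' (by fun_prop) _ _ (by simp))
  · have hslash := hG.slash γ σ τ z w hz 1 (z * η)
    simp only [one_pow, mul_one, mul_pow z, id] at hslash ⊢
    rw [hslash]
    congr 1
    refine Finset.sum_congr rfl fun i _ ↦ ?_
    rw [mul_div_right_comm z, mul_pow]
    ring

lemma leadingPoly_sub_act (hG : SlashFamily j k G act) (hH : VanishesOnDiagTo j G a)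
    (σ : SL(2, ℤ)) (hτ : 0 < τ.im) (hw : 0 < w.im) :
    leadingPoly j G a (j - ·) (act γ σ) τ w = .C (autFactor σ w ^ (-(k + j + a))) *
      (leadingPoly j G a (j - ·) γ τ (mobius σ w)).comp
        (.C (autFactor σ w ^ 2) * .X - .C (σ 1 0 * autFactor σ w)) := by
  have hJ := autFactor_ne_zero σ hw
  refine Polynomial.funext fun η ↦ ?_
  have hfactor : autFactor σ w ^ (-(k + j + a)) =
      autFactor σ w ^ (-k) / autFactor σ w ^ j / autFactor σ w ^ a := by
    rw [neg_add, neg_add, zpow_add₀ hJ, zpow_add₀ hJ, _root_.zpow_neg _ (a : ℤ),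
      _root_.zpow_neg _ (j : ℤ), zpow_natCast, zpow_natCast, div_eq_mul_inv, div_eq_mul_inv]
  simp only [Polynomial.eval_mul, Polynomial.eval_C, Polynomial.eval_comp, Polynomial.eval_sub,
    Polynomial.eval_X]
  rw [hfactor]
  set x := autFactor σ w ^ 2 * η - σ 1 0 * autFactor σ w with hx
  refine eval_leadingPoly_act hG hH (by simp only [diagOrder]; lia) σ hτ hw
    (T := fun _ i ↦ x ^ (j - i)) (fun _ _ ↦ tendsto_const_nhds) fun z hz ↦ ?_
  have hslash := hG.slash γ σ τ z w hz (z * η) 1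
  simp only [one_pow, mul_one, mul_pow z] at hslash ⊢
  rw [hslash, div_mul_eq_mul_div (autFactor σ w ^ (-k)), mul_div_assoc (autFactor σ w ^ (-k)),
    Finset.sum_div]
  congr 1
  refine Finset.sum_congr rfl fun i hi ↦ ?_
  have hpow : autFactor σ w ^ j = autFactor σ w ^ (j - i) * autFactor σ w ^ i := by
    rw [← pow_add, Nat.sub_add_cancel (Finset.mem_range_succ_iff.1 hi)]
  have hbase : z / autFactor σ w * x = autFactor σ w * (z * η - σ 1 0 * z / autFactor σ w) := by
    rw [hx]
    field_simp
  rw [← mul_pow, hbase, mul_pow, hpow, one_div, inv_pow]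
  field_simp

end LeadingForms

/-! ### Vanishing of slash families of small weight -/

open Polynomial in
lemma eq_zero_of_forall_double_root {R : Type*} [CommRing R] [IsDomain R] {p : R[X]} {s : Finset R}
    (hdeg : p.natDegree < 2 * s.card) (h : ∀ x ∈ s, p.IsRoot x ∧ p.derivative.IsRoot x) :
    p = 0 := by
  classical
  by_contra hp
  have hle : 2 • s.val ≤ p.roots := Multiset.le_iff_count.2 fun x ↦ by
    rw [Multiset.count_nsmul, Polynomial.count_roots]
    by_cases hx : x ∈ s
    · have hmult := (Polynomial.one_lt_rootMultiplicity_iff_isRoot hp).2 (h x hx)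
      have hcount := Multiset.nodup_iff_count_le_one.1 s.nodup x
      lia
    · simp [Multiset.count_eq_zero.2 (show x ∉ s.val from hx)]
  have hcard := (Multiset.card_le_card hle).trans p.card_roots'
  rw [Multiset.card_nsmul, Finset.card_val] at hcard
  lia

section Vanishing

variable {j : ℕ} {k : ℤ} {Γ : Type*} {G : Γ → ℕ → ℂ → ℂ → ℂ → ℂ} {act : Γ → SL(2, ℤ) → Γ}
  {γ : Γ} {i a : ℕ} {e : ℕ → ℕ} {τ z w : ℂ}

lemma expDecay_leadingDiagCoeff (hG : SlashFamily j k G act) (hτ : 0 < τ.im) {v : ℕ}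
    (h : diagOrder j a i + e i = a → ∀ l, i ≤ l → l ≤ j → v ≤ 1 ∨ ∀ γ, DiagOrderGE G γ l v) :
    ExpDecay v (leadingDiagCoeff j G a e γ i τ) := by
  unfold leadingDiagCoeff
  split_ifs with hi
  · exact expDecay_iff.2 (hG.exists_norm_diagCoeff_le_exp γ _ hτ (h hi))
  · exact Asymptotics.isBigO_zero _ _

lemma expDecay_leadingDiagCoeff_one (hG : SlashFamily j k G act) (hτ : 0 < τ.im) :
    ExpDecay 1 (leadingDiagCoeff j G a e γ i τ) :=
  expDecay_leadingDiagCoeff hG hτ fun _ _ _ _ ↦ .inl le_rfl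

lemma expDecay_leadingDiagCoeff_sub (hG : SlashFamily j k G act) (hH : VanishesOnDiagTo j G a)
    (hτ : 0 < τ.im) (hi : i ≤ j) :
    ExpDecay (a - (j - i)) (leadingDiagCoeff j G a (j - ·) γ i τ) :=
  expDecay_leadingDiagCoeff hG hτ fun hia l hil hlj ↦
    .inr fun γ ↦ (hH γ l hlj).mono (by simp only [diagOrder] at hia ⊢; lia)

lemma differentiableOn_eval_leadingPoly (hG : SlashFamily j k G act) (hH : VanishesOnDiagTo j G a)
    (hτ : 0 < τ.im) {f : ℂ → ℂ} (hf : DifferentiableOn ℂ f ℍₒ) :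
    DifferentiableOn ℂ (fun w ↦ (leadingPoly j G a e γ τ w).eval (f w)) ℍₒ := by
  simp only [eval_leadingPoly]
  exact .fun_sum fun i hi ↦ (differentiableOn_leadingDiagCoeff hG hH
    (Finset.mem_range_succ_iff.1 hi) hτ).mul (hf.pow _)

lemma differentiableOn_eval_derivative_leadingPoly (hG : SlashFamily j k G act)
    (hH : VanishesOnDiagTo j G a) (hτ : 0 < τ.im) {f : ℂ → ℂ} (hf : DifferentiableOn ℂ f ℍₒ) :
    DifferentiableOn ℂ (fun w ↦ (leadingPoly j G a e γ τ w).derivative.eval (f w)) ℍₒ := by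
  simp only [eval_derivative_leadingPoly]
  exact .fun_sum fun i hi ↦ (differentiableOn_leadingDiagCoeff hG hH
    (Finset.mem_range_succ_iff.1 hi) hτ).mul ((hf.pow _).const_mul _)

lemma isSlashOrbit_eval_leadingPoly_id (hG : SlashFamily j k G act) (hH : VanishesOnDiagTo j G a)
    (γ : Γ) (hτ : 0 < τ.im) (η : ℂ) :
    IsSlashOrbit modTwo (k + a) fun σ w ↦ (leadingPoly j G a id (act γ σ) τ w).eval η where
  differentiableOn _ := differentiableOn_eval_leadingPoly hG hH hτ (differentiableOn_const η)
  slash ρ σ w hw := by rw [hG.act_mul, eval_leadingPoly_id_act hG hH σ hτ hw]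
  eq_of_map_eq ρ σ h w hw := by rw [leadingPoly_act_congr hG h hτ hw]

lemma leadingPoly_id_eq_zero (hG : SlashFamily j k G act) (hH : VanishesOnDiagTo j G a)
    (hka : k + a ≤ 5) (γ : Γ) (hτ : 0 < τ.im) (hw : 0 < w.im) :
    leadingPoly j G a id γ τ w = 0 := by
  refine Polynomial.funext fun η ↦ ?_
  have hdecay (σ) : ExpDecay 1 fun w ↦ (leadingPoly j G a id (act γ σ) τ w).eval η := by
    simp only [eval_leadingPoly]
    exact ExpDecay.sum fun i _ ↦ (expDecay_leadingDiagCoeff_one hG hτ).mul (expDecay_const _)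
  simpa only [hG.act_one, Polynomial.eval_zero] using
    (isSlashOrbit_eval_leadingPoly_id hG hH γ hτ η).eq_zero_of_expDecay (x := 1) (y := 1)
      (by simpa only [ite_self] using hdecay) (by push_cast; lia) 1 hw

lemma isSlashOrbit_eval_leadingPoly_quasiE2 (hG : SlashFamily j k G act)
    (hH : VanishesOnDiagTo j G a) (γ : Γ) (hτ : 0 < τ.im) :
    IsSlashOrbit modTwo (k + j + a) fun σ w ↦
      (leadingPoly j G a (j - ·) (act γ σ) τ w).eval (quasiE2 σ w) where
  differentiableOn σ := differentiableOn_eval_leadingPoly hG hH hτ (differentiableOn_quasiE2 σ)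
  slash ρ σ w hw := by
    rw [hG.act_mul, leadingPoly_sub_act hG hH σ hτ hw, quasiE2_mobius ρ σ hw]
    simp
  eq_of_map_eq ρ σ h w hw := by
    rw [leadingPoly_act_congr hG h hτ hw, quasiE2_eq_of_modTwo_eq h hw]

lemma isSlashOrbit_eval_derivative_leadingPoly_quasiE2 (hG : SlashFamily j k G act)
    (hH : VanishesOnDiagTo j G a) (γ : Γ) (hτ : 0 < τ.im) :
    IsSlashOrbit modTwo (k + j + a - 2) fun σ w ↦
      (leadingPoly j G a (j - ·) (act γ σ) τ w).derivative.eval (quasiE2 σ w) where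
  differentiableOn σ :=
    differentiableOn_eval_derivative_leadingPoly hG hH hτ (differentiableOn_quasiE2 σ)
  slash ρ σ w hw := by
    rw [hG.act_mul, leadingPoly_sub_act hG hH σ hτ hw, quasiE2_mobius ρ σ hw,
      show -(k + j + a - 2) = -(k + j + a) + 2 by ring, zpow_add₀ (autFactor_ne_zero σ hw)]
    simp only [Polynomial.derivative_C_mul, Polynomial.derivative_comp, Polynomial.derivative_sub,
      Polynomial.derivative_X, Polynomial.derivative_C, Polynomial.eval_mul, Polynomial.eval_comp,
      Polynomial.eval_sub, Polynomial.eval_C, Polynomial.eval_X, mul_one, sub_zero, zpow_ofNat]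
    ring
  eq_of_map_eq ρ σ h w hw := by
    rw [leadingPoly_act_congr hG h hτ hw, quasiE2_eq_of_modTwo_eq h hw]

lemma expDecay_eval_leadingPoly_quasiE2 (hG : SlashFamily j k G act) (hH : VanishesOnDiagTo j G a)
    (hτ : 0 < τ.im) (σ : SL(2, ℤ)) :
    ExpDecay (if Even (σ 1 0) then 1 else a)
      fun w ↦ (leadingPoly j G a (j - ·) γ τ w).eval (quasiE2 σ w) := by
  simp only [eval_leadingPoly]
  refine ExpDecay.sum fun i hi ↦ ?_
  have hi : i ≤ j := Finset.mem_range_succ_iff.1 hi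
  have hdecay := (expDecay_quasiE2 σ).pow (j - i)
  split_ifs at hdecay ⊢
  · exact (expDecay_leadingDiagCoeff_one hG hτ).mul hdecay
  · exact ((expDecay_leadingDiagCoeff_sub hG hH hτ hi).mul hdecay).weaken (by lia)

lemma expDecay_eval_derivative_leadingPoly_quasiE2 (hG : SlashFamily j k G act)
    (hH : VanishesOnDiagTo j G a) (hτ : 0 < τ.im) (σ : SL(2, ℤ)) :
    ExpDecay (if Even (σ 1 0) then 1 else a - 1)
      fun w ↦ (leadingPoly j G a (j - ·) γ τ w).derivative.eval (quasiE2 σ w) := by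
  simp only [eval_derivative_leadingPoly]
  refine ExpDecay.sum fun i hi ↦ ?_
  have hi : i ≤ j := Finset.mem_range_succ_iff.1 hi
  have hdecay := (expDecay_const (j - i : ℕ)).mul ((expDecay_quasiE2 σ).pow (j - i - 1))
  split_ifs at hdecay ⊢
  · exact (expDecay_leadingDiagCoeff_one hG hτ).mul hdecay
  · exact ((expDecay_leadingDiagCoeff_sub hG hH hτ hi).mul hdecay).weaken (by lia)

lemma natDegree_leadingPoly_sub_le : (leadingPoly j G a (j - ·) γ τ w).natDegree ≤ j / 2 := by
  refine Polynomial.natDegree_sum_le_of_forall_le _ _ fun i _ ↦ ?_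
  rw [leadingDiagCoeff]
  split_ifs with h
  · refine (Polynomial.natDegree_C_mul_X_pow_le _ _).trans ?_
    simp only [diagOrder] at h
    lia
  · simp

lemma isRoot_leadingPoly_quasiE2 (hG : SlashFamily j k G act) (hH : VanishesOnDiagTo j G a)
    (hjk : j + 4 * k ≤ 17) (hka : 6 ≤ k + a) (γ : Γ) (hτ : 0 < τ.im) (hw : 0 < w.im)
    (σ : SL(2, ℤ)) :
    (leadingPoly j G a (j - ·) γ τ w).IsRoot (quasiE2 σ w) ∧
      (leadingPoly j G a (j - ·) γ τ w).derivative.IsRoot (quasiE2 σ w) := by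
  have ha : 1 ≤ a := by lia
  rw [show γ = act (act γ σ⁻¹) σ by rw [← hG.act_mul, inv_mul_cancel, hG.act_one]]
  exact ⟨(isSlashOrbit_eval_leadingPoly_quasiE2 hG hH _ hτ).eq_zero_of_expDecay
      (fun σ ↦ expDecay_eval_leadingPoly_quasiE2 hG hH hτ σ) (by push_cast; lia) σ hw,
    (isSlashOrbit_eval_derivative_leadingPoly_quasiE2 hG hH _ hτ).eq_zero_of_expDecay
      (fun σ ↦ expDecay_eval_derivative_leadingPoly_quasiE2 hG hH hτ σ) (by push_cast [ha]; lia)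
      σ hw⟩

lemma diagCoeff_eq_zero_of_two_mul_le (hG : SlashFamily j k G act) (hH : VanishesOnDiagTo j G a)
    (hka : k + a ≤ 5) (hi : 2 * i ≤ j) (hia : i ≤ a) (γ : Γ) (hτ : 0 < τ.im) (hw : 0 < w.im) :
    diagCoeff G γ i (diagOrder j a i) τ w = 0 :=
  diagCoeff_eq_zero_of_leadingPoly_eq_zero Function.injective_id.injOn (by lia)
    (by simp only [diagOrder, id]; lia) (leadingPoly_id_eq_zero hG hH hka γ hτ hw)

lemma diagCoeff_eq_zero_of_le_two_mul (hG : SlashFamily j k G act) (hH : VanishesOnDiagTo j G a)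
    (hj : j ≤ 11) (hjk : j + 4 * k ≤ 17) (hka : 6 ≤ k + a) (hij : i ≤ j) (hi : j ≤ 2 * i)
    (γ : Γ) (hτ : 0 < τ.im) (hw : 0 < w.im) :
    diagCoeff G γ i (diagOrder j a i) τ w = 0 := by
  refine eq_zero_of_quasiE2_pairwise_ne (hG.differentiableOn_diagCoeff (hH γ i hij) hτ)
    (fun w hw h₁ h₂ h₃ ↦ ?_) hw
  refine diagCoeff_eq_zero_of_leadingPoly_eq_zero (e := (j - ·))
    (fun x hx y hy h ↦ by simp only [Set.mem_Iic] at hx hy h; lia) hij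
    (by simp only [diagOrder]; lia) (eq_zero_of_forall_double_root (s := {quasiE2 1 w,
      quasiE2 ModularGroup.S w, quasiE2 (ModularGroup.S * ModularGroup.T) w}) ?_ ?_)
  · rw [Finset.card_eq_three.2 ⟨_, _, _, h₁, h₂, h₃, rfl⟩]
    have hdeg := natDegree_leadingPoly_sub_le (j := j) (G := G) (a := a) (γ := γ) (τ := τ) (w := w)
    lia
  · simp only [Finset.forall_mem_insert, Finset.mem_singleton, forall_eq]
    exact ⟨isRoot_leadingPoly_quasiE2 hG hH hjk hka γ hτ hw _,
      isRoot_leadingPoly_quasiE2 hG hH hjk hka γ hτ hw _,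
      isRoot_leadingPoly_quasiE2 hG hH hjk hka γ hτ hw _⟩

lemma VanishesOnDiagTo.succ (hG : SlashFamily j k G act) (hH : VanishesOnDiagTo j G a)
    {p : ℕ → Prop} (hp : ∀ i ≤ j, p i ∨ p (j - i))
    (h : ∀ i ≤ j, p i → min i (j - i) ≤ a → ∀ γ τ w, 0 < τ.im → 0 < w.im →
      diagCoeff G γ i (diagOrder j a i) τ w = 0) : VanishesOnDiagTo j G (a + 1) := by
  have hord (i) (hi : i ≤ j) (hpi : p i) (γ) : DiagOrderGE G γ i (diagOrder j (a + 1) i) := by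
    by_cases hia : min i (j - i) ≤ a
    · have hsucc : diagOrder j (a + 1) i = diagOrder j a i + 1 := by simp only [diagOrder]; lia
      rw [hsucc]
      exact hG.diagOrderGE_succ (hH γ i hi) (h i hi hpi hia γ)
    · have hzero : diagOrder j (a + 1) i = 0 := by simp only [diagOrder]; lia
      rw [hzero]
      exact diagOrderGE_zero G γ i
  intro γ i hi
  rcases hp i hi with hpi | hpi
  · exact hord i hi hpi γ
  · have hsub : diagOrder j (a + 1) (j - i) = diagOrder j (a + 1) i := by
      simp only [diagOrder]; lia
    simpa only [hsub, Nat.sub_sub_self hi] using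
      hG.diagOrderGE_sub (Nat.sub_le j i) (hord (j - i) (Nat.sub_le j i) hpi) γ

lemma SlashFamily.vanishesOnDiagTo (hG : SlashFamily j k G act) (hj : j ≤ 11)
    (hjk : j + 4 * k ≤ 17) (a : ℕ) : VanishesOnDiagTo j G a := by
  induction a with
  | zero => exact fun γ i _ ↦ by simpa [diagOrder] using diagOrderGE_zero G γ i
  | succ a hH =>
    by_cases hka : k + a ≤ 5
    · exact hH.succ hG (p := fun i ↦ 2 * i ≤ j) (fun i _ ↦ by lia) fun i _ hi hia γ τ w hτ hw ↦
        diagCoeff_eq_zero_of_two_mul_le hG hH hka hi (by lia) γ hτ hw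
    · exact hH.succ hG (p := fun i ↦ j ≤ 2 * i) (fun i _ ↦ by lia) fun i hij hi _ γ τ w hτ hw ↦
        diagCoeff_eq_zero_of_le_two_mul hG hH hj hjk (by lia) hij hi γ hτ hw

lemma convex_setOf_im_sq_lt (r : ℝ) : Convex ℝ {z : ℂ | z.im ^ 2 < r} := by
  have hconvex : Convex ℝ {y : ℝ | y ^ 2 < r} := by
    simpa using (even_two.convexOn_pow (𝕜 := ℝ)).convex_lt r
  exact hconvex.linear_preimage Complex.imLm

theorem SlashFamily.eq_zero (hG : SlashFamily j k G act) (hj : j ≤ 11) (hjk : j + 4 * k ≤ 17)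
    (γ : Γ) (i : ℕ) (h : (τ, z, w) ∈ siegelCoords) : G γ i τ z w = 0 := by
  rcases lt_or_ge j i with hi | hi
  · exact hG.eq_zero_of_lt γ i hi τ z w
  have hτ : 0 < τ.im := h.1
  have hw : 0 < w.im := (swap_mem_siegelCoords h).1
  have horder : analyticOrderAt (fun z ↦ G γ i τ z w) 0 = ⊤ := by
    refine ENat.eq_top_iff_forall_ge.2 fun m ↦ le_trans ?_
      (hG.vanishesOnDiagTo hj hjk (m + j) γ i hi τ w hτ hw)
    exact_mod_cast (by simp only [diagOrder]; lia : m ≤ diagOrder j (m + j) i)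
  have hanalytic : AnalyticOnNhd ℂ (fun z ↦ G γ i τ z w) {z | z.im ^ 2 < τ.im * w.im} :=
    DifferentiableOn.analyticOnNhd
      (fun z hz ↦ (hG.differentiableAt_mid γ i ⟨hτ, hz⟩).differentiableWithinAt)
      (isOpen_lt (Complex.continuous_im.pow 2) continuous_const)
  exact hanalytic.eqOn_zero_of_preconnected_of_eventuallyEq_zero
    (convex_setOf_im_sq_lt _).isPreconnected (by simpa using mul_pos hτ hw)
    (analyticOrderAt_eq_top.1 horder) h.2

end Vanishing

/-! ### The Siegel modular group -/

lemma J4_mul_J4 : J4 * J4 = -1 := by decide +kernel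

lemma mul_mem_Sp4Z {γ δ : Matrix (Fin 4) (Fin 4) ℤ} (hγ : γ ∈ Sp4Z) (hδ : δ ∈ Sp4Z) :
    γ * δ ∈ Sp4Z := by
  have hassoc : (γ * δ)ᵀ * J4 * (γ * δ) = δᵀ * (γᵀ * J4 * γ) * δ := by
    rw [Matrix.transpose_mul]
    noncomm_ring
  exact hassoc.trans ((congrArg (δᵀ * · * δ) hγ).trans hδ)

lemma neg_J4_mul_transpose_mul_J4_mul {γ : Matrix (Fin 4) (Fin 4) ℤ} (hγ : γ ∈ Sp4Z) :
    -(J4 * γᵀ * J4) * γ = 1 := by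
  have hassoc : -(J4 * γᵀ * J4) * γ = -(J4 * (γᵀ * J4 * γ)) := by noncomm_ring
  rw [hassoc, show γᵀ * J4 * γ = J4 from hγ, J4_mul_J4, neg_neg]

lemma mem_Sp4Z_of_mul_eq_one {γ δ : Matrix (Fin 4) (Fin 4) ℤ} (hγ : γ ∈ Sp4Z) (h : γ * δ = 1) :
    δ ∈ Sp4Z := by
  have ht : δᵀ * γᵀ = 1 := by rw [← Matrix.transpose_mul, h, Matrix.transpose_one]
  calc δᵀ * J4 * δ = δᵀ * (γᵀ * J4 * γ) * δ := by rw [show γᵀ * J4 * γ = J4 from hγ]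
    _ = (δᵀ * γᵀ) * J4 * (γ * δ) := by noncomm_ring
    _ = J4 := by rw [ht, h, one_mul, mul_one]

instance : One Sp4Z := ⟨⟨1, by simp [Sp4Z]⟩⟩

instance : Mul Sp4Z := ⟨fun γ δ ↦ ⟨γ.1 * δ.1, mul_mem_Sp4Z γ.2 δ.2⟩⟩

instance : Inv Sp4Z := ⟨fun γ ↦ ⟨-(J4 * γ.1ᵀ * J4),
  mem_Sp4Z_of_mul_eq_one γ.2 (mul_eq_one_comm.1 (neg_J4_mul_transpose_mul_J4_mul γ.2))⟩⟩

instance : Group Sp4Z :=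
  Group.ofLeftAxioms (fun _ _ _ ↦ Subtype.ext (Matrix.mul_assoc _ _ _))
    (fun _ ↦ Subtype.ext (Matrix.one_mul _))
    (fun γ ↦ Subtype.ext (neg_J4_mul_transpose_mul_J4_mul γ.2))

lemma coe_one_Sp4Z : ((1 : Sp4Z) : Matrix (Fin 4) (Fin 4) ℤ) = 1 := rfl

lemma coe_mul_Sp4Z (γ δ : Sp4Z) : ((γ * δ : Sp4Z) : Matrix (Fin 4) (Fin 4) ℤ) = γ * δ := rfl

/-- Reduction of `Sp(4, ℤ)` modulo 2. -/
def modTwoSp : Sp4Z →* Matrix (Fin 4) (Fin 4) (ZMod 2) where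
  toFun γ := γ.1.map (Int.castRingHom (ZMod 2))
  map_one' := by rw [coe_one_Sp4Z, Matrix.map_one _ (map_zero _) (map_one _)]
  map_mul' γ δ := by rw [coe_mul_Sp4Z, Matrix.map_mul]

lemma modTwoSp_apply (γ : Sp4Z) (i j : Fin 4) : modTwoSp γ i j = (γ.1 i j : ZMod 2) := rfl

lemma coe_mem_Sp4Z2_iff (γ : Sp4Z) : (γ : Matrix (Fin 4) (Fin 4) ℤ) ∈ Sp4Z2 ↔ modTwoSp γ = 1 := by
  rw [← Matrix.ext_iff]
  simp only [Sp4Z2, Set.mem_ofPred_eq, γ.2, true_and, modTwoSp_apply, Matrix.one_apply]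

lemma blk_mul (γ δ : Matrix (Fin 4) (Fin 4) ℤ) (r s : Fin 2) :
    blk (γ * δ) r s = blk γ r 0 * blk δ 0 s + blk γ r 1 * blk δ 1 s := by
  ext i j
  simp only [blk, Matrix.of_apply, Matrix.mul_apply, Matrix.add_apply, Fin.sum_univ_four,
    Fin.sum_univ_two]
  push_cast
  exact add_assoc _ _ _

lemma blk_transpose (γ : Matrix (Fin 4) (Fin 4) ℤ) (r s : Fin 2) : blk γᵀ r s = (blk γ s r)ᵀ := rfl

lemma blk_J4 (r s : Fin 2) : blk J4 r s = !![0, 1; -1, 0] r s := by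
  ext i j
  fin_cases r <;> fin_cases s <;> fin_cases i <;> fin_cases j <;> simp [blk, J4]

lemma blk_relation {γ : Matrix (Fin 4) (Fin 4) ℤ} (hγ : γ ∈ Sp4Z) (r s : Fin 2) :
    (blk γ 0 r)ᵀ * blk γ 1 s - (blk γ 1 r)ᵀ * blk γ 0 s = !![0, 1; -1, 0] r s := by
  rw [← blk_J4, ← show γᵀ * J4 * γ = J4 from hγ]
  simp [blk_mul, blk_transpose, blk_J4, sub_eq_neg_add]

/-! ### The action on the Siegel upper half space -/

/-- The numerator `aτ + b` of the action `(aτ + b)(cτ + d)⁻¹`. -/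
def num (γ : Matrix (Fin 4) (Fin 4) ℤ) (τ : Fin 2 → Fin 2 → ℂ) : Matrix (Fin 2) (Fin 2) ℂ :=
  blk γ 0 0 * Matrix.of τ + blk γ 0 1

section Action

variable {γ δ : Sp4Z} {τ : Fin 2 → Fin 2 → ℂ}

lemma of_moeb (γ : Matrix (Fin 4) (Fin 4) ℤ) (τ : Fin 2 → Fin 2 → ℂ) :
    Matrix.of (moeb γ τ) = num γ τ * (den γ τ)⁻¹ := rfl

lemma transpose_num_mul_den_sub (γ : Sp4Z) (ρ τ : Fin 2 → Fin 2 → ℂ) :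
    (num γ ρ)ᵀ * den γ τ - (den γ ρ)ᵀ * num γ τ = (Matrix.of ρ)ᵀ - Matrix.of τ := by
  have hrel := blk_relation γ.2
  have hexpand : (num γ ρ)ᵀ * den γ τ - (den γ ρ)ᵀ * num γ τ =
      (Matrix.of ρ)ᵀ * ((blk γ 0 0)ᵀ * blk γ 1 0 - (blk γ 1 0)ᵀ * blk γ 0 0) * Matrix.of τ +
        (Matrix.of ρ)ᵀ * ((blk γ 0 0)ᵀ * blk γ 1 1 - (blk γ 1 0)ᵀ * blk γ 0 1) +
        ((blk γ 0 1)ᵀ * blk γ 1 0 - (blk γ 1 1)ᵀ * blk γ 0 0) * Matrix.of τ +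
        ((blk γ 0 1)ᵀ * blk γ 1 1 - (blk γ 1 1)ᵀ * blk γ 0 1) := by
    simp only [num, den, Matrix.transpose_add, Matrix.transpose_mul]
    noncomm_ring
  rw [hexpand, hrel, hrel, hrel, hrel]
  simp [sub_eq_add_neg]

lemma apply_one_zero_of_mem_H2 (hτ : τ ∈ H2) : τ 1 0 = τ 0 1 := hτ.1.apply 0 1

lemma im_star_dotProduct_mulVec (hτ : τ 1 0 = τ 0 1) (v : Fin 2 → ℂ) :
    (star v ⬝ᵥ (Matrix.of τ *ᵥ v)).im =
      star (fun i ↦ (v i).re) ⬝ᵥ ((Matrix.of fun i j ↦ (τ i j).im) *ᵥ fun i ↦ (v i).re) +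
        star (fun i ↦ (v i).im) ⬝ᵥ ((Matrix.of fun i j ↦ (τ i j).im) *ᵥ fun i ↦ (v i).im) := by
  simp only [Matrix.mulVec, dotProduct, Fin.sum_univ_two, Matrix.of_apply, hτ, Pi.star_apply,
    RCLike.star_def, star_trivial, Complex.add_im, Complex.mul_im, Complex.mul_re, Complex.add_re,
    Complex.conj_re, Complex.conj_im]
  ring

lemma mem_H2_iff :
    τ ∈ H2 ↔ (Matrix.of τ).IsSymm ∧ ∀ v ≠ 0, 0 < (star v ⬝ᵥ (Matrix.of τ *ᵥ v)).im := by
  refine and_congr_right fun hs ↦ ?_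
  have hτ : τ 1 0 = τ 0 1 := hs.apply 0 1
  rw [Matrix.posDef_iff_dotProduct_mulVec]
  refine ⟨fun ⟨_, hpos⟩ v hv ↦ ?_, fun h ↦ ⟨?_, fun x hx ↦ ?_⟩⟩
  · have hnonneg (x : Fin 2 → ℝ) :
        0 ≤ star x ⬝ᵥ ((Matrix.of fun i j ↦ (τ i j).im) *ᵥ x) := by
      rcases eq_or_ne x 0 with rfl | hx
      · simp
      · exact (hpos hx).le
    rw [im_star_dotProduct_mulVec hτ]
    by_cases hre : (fun i ↦ (v i).re) = 0
    · have him : (fun i ↦ (v i).im) ≠ 0 := fun him ↦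
        hv (funext fun i ↦ Complex.ext (congrFun hre i) (congrFun him i))
      exact add_pos_of_nonneg_of_pos (hnonneg _) (hpos him)
    · exact add_pos_of_pos_of_nonneg (hpos hre) (hnonneg _)
  · ext i j
    exact congrArg Complex.im (hs.apply i j)
  · have hne : (fun i ↦ (x i : ℂ)) ≠ 0 := fun h0 ↦
      hx (funext fun i ↦ Complex.ofReal_eq_zero.1 (congrFun h0 i))
    have hpos := h _ hne
    rw [im_star_dotProduct_mulVec hτ] at hpos
    simpa [← Pi.zero_def] using hpos

lemma conjTranspose_blk (γ : Matrix (Fin 4) (Fin 4) ℤ) (r s : Fin 2) :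
    (blk γ r s)ᴴ = (blk γ r s)ᵀ := by
  ext i j
  simp [blk]

lemma isHermitian_conjTranspose_den_mul_num_sub (γ : Sp4Z) (τ : Fin 2 → Fin 2 → ℂ) :
    ((den γ τ)ᴴ * num γ τ - Matrix.of τ).IsHermitian := by
  have h := transpose_num_mul_den_sub γ (star τ) τ
  have hτ : (Matrix.of (star τ))ᵀ = (Matrix.of τ)ᴴ := rfl
  simp only [num, den, Matrix.transpose_add, Matrix.transpose_mul, hτ, ← conjTranspose_blk] at h
  simp only [Matrix.IsHermitian, num, den, Matrix.conjTranspose_sub, Matrix.conjTranspose_mul,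
    Matrix.conjTranspose_add, Matrix.conjTranspose_conjTranspose]
  rwa [← sub_eq_sub_iff_sub_eq_sub]

lemma im_star_den_dotProduct_num (γ : Sp4Z) (τ : Fin 2 → Fin 2 → ℂ) (u : Fin 2 → ℂ) :
    (star (den γ τ *ᵥ u) ⬝ᵥ (num γ τ *ᵥ u)).im = (star u ⬝ᵥ (Matrix.of τ *ᵥ u)).im := by
  have h := (isHermitian_conjTranspose_den_mul_num_sub γ τ).im_star_dotProduct_mulVec_self u
  rw [Matrix.sub_mulVec, dotProduct_sub, ← Matrix.mulVec_mulVec, Matrix.dotProduct_mulVec,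
    ← Matrix.star_mulVec] at h
  simpa [sub_eq_zero] using h

lemma det_den_ne_zero (γ : Sp4Z) (hτ : τ ∈ H2) : (den γ τ).det ≠ 0 := by
  intro h0
  obtain ⟨u, hu, hker⟩ := Matrix.exists_mulVec_eq_zero_iff.2 h0
  have hpos := (mem_H2_iff.1 hτ).2 u hu
  rw [← im_star_den_dotProduct_num γ, hker] at hpos
  simp at hpos

lemma isUnit_det_den (γ : Sp4Z) (hτ : τ ∈ H2) : IsUnit (den γ τ).det :=
  (det_den_ne_zero γ hτ).isUnit

lemma moeb_mem_H2 (γ : Sp4Z) (hτ : τ ∈ H2) : moeb γ τ ∈ H2 := by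
  have hU := isUnit_det_den γ hτ
  have hUt : IsUnit ((den γ τ)ᵀ).det := by rwa [Matrix.det_transpose]
  rw [mem_H2_iff] at hτ ⊢
  obtain ⟨hs, hpos⟩ := hτ
  refine ⟨?_, fun v hv ↦ ?_⟩
  · have hsymm : (num γ τ)ᵀ * den γ τ = (den γ τ)ᵀ * num γ τ := by
      rw [← sub_eq_zero, transpose_num_mul_den_sub, hs.eq, sub_self]
    calc (num γ τ * (den γ τ)⁻¹)ᵀ
        = ((den γ τ)ᵀ)⁻¹ * ((num γ τ)ᵀ * den γ τ) * (den γ τ)⁻¹ := by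
          rw [Matrix.transpose_mul, Matrix.transpose_nonsing_inv, ← Matrix.mul_assoc,
            Matrix.mul_nonsing_inv_cancel_right _ _ hU]
      _ = num γ τ * (den γ τ)⁻¹ := by rw [hsymm, Matrix.nonsing_inv_mul_cancel_left _ _ hUt]
  · obtain ⟨u, rfl⟩ : ∃ u, den γ τ *ᵥ u = v :=
      ⟨(den γ τ)⁻¹ *ᵥ v, by rw [Matrix.mulVec_mulVec, Matrix.mul_nonsing_inv _ hU,
        Matrix.one_mulVec]⟩
    rw [of_moeb, Matrix.mulVec_mulVec, Matrix.nonsing_inv_mul_cancel_right _ _ hU,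
      im_star_den_dotProduct_num]
    exact hpos u fun h0 ↦ hv (by rw [h0, Matrix.mulVec_zero])

lemma of_moeb_mul_den (δ : Sp4Z) (hτ : τ ∈ H2) : Matrix.of (moeb δ τ) * den δ τ = num δ τ := by
  rw [of_moeb, Matrix.nonsing_inv_mul_cancel_right _ _ (isUnit_det_den δ hτ)]

lemma den_mul (γ : Matrix (Fin 4) (Fin 4) ℤ) (δ : Sp4Z) (hτ : τ ∈ H2) :
    den (γ * δ) τ = den γ (moeb δ τ) * den δ τ := by
  rw [den.eq_def γ, Matrix.add_mul, Matrix.mul_assoc, of_moeb_mul_den δ hτ]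
  simp only [den, num, blk_mul]
  noncomm_ring

lemma num_mul (γ : Matrix (Fin 4) (Fin 4) ℤ) (δ : Sp4Z) (hτ : τ ∈ H2) :
    num (γ * δ) τ = num γ (moeb δ τ) * den δ τ := by
  rw [num.eq_def γ, Matrix.add_mul, Matrix.mul_assoc, of_moeb_mul_den δ hτ]
  simp only [den, num, blk_mul]
  noncomm_ring

lemma moeb_mul (γ : Matrix (Fin 4) (Fin 4) ℤ) (δ : Sp4Z) (hτ : τ ∈ H2) :
    moeb (γ * δ) τ = moeb γ (moeb δ τ) := by
  apply Matrix.of.injective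
  rw [of_moeb, of_moeb, den_mul γ δ hτ, num_mul γ δ hτ, Matrix.mul_inv_rev, Matrix.mul_assoc,
    Matrix.mul_nonsing_inv_cancel_left _ _ (isUnit_det_den δ hτ)]

end Action

/-- The symmetric matrix `(τ z; z w)`. -/
def siegelPoint (τ z w : ℂ) : Fin 2 → Fin 2 → ℂ := ![![τ, z], ![z, w]]

lemma siegelPoint_mem_H2 {τ z w : ℂ} (h : (τ, z, w) ∈ siegelCoords) : siegelPoint τ z w ∈ H2 := by
  obtain ⟨hτ, hz⟩ := mem_siegelCoords.1 h
  refine ⟨?_, Matrix.posDef_iff_dotProduct_mulVec.2 ⟨?_, fun v hv ↦ ?_⟩⟩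
  · ext i j
    fin_cases i <;> fin_cases j <;> rfl
  · ext i j
    fin_cases i <;> fin_cases j <;> rfl
  · have hexpand : star v ⬝ᵥ (Matrix.of (fun i j ↦ (siegelPoint τ z w i j).im) *ᵥ v) =
        τ.im * v 0 ^ 2 + 2 * z.im * v 0 * v 1 + w.im * v 1 ^ 2 := by
      simp only [siegelPoint, Matrix.mulVec, dotProduct, Fin.sum_univ_two, Matrix.of_apply,
        Matrix.cons_val_zero, Matrix.cons_val_one, Pi.star_apply, star_trivial]
      ring
    have hsquare : τ.im * (τ.im * v 0 ^ 2 + 2 * z.im * v 0 * v 1 + w.im * v 1 ^ 2) =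
        (τ.im * v 0 + z.im * v 1) ^ 2 + (τ.im * w.im - z.im ^ 2) * v 1 ^ 2 := by ring
    rw [hexpand]
    refine pos_of_mul_pos_right (hsquare ▸ ?_) hτ.le
    rcases eq_or_ne (v 1) 0 with h1 | h1
    · have h0 : v 0 ≠ 0 := fun h0 ↦ hv (funext (Fin.forall_fin_two.2 ⟨h0, h1⟩))
      have := hτ.ne'
      simp only [h1, mul_zero, add_zero, zero_pow two_ne_zero]
      positivity
    · have := sub_pos.2 hz
      positivity

lemma exists_siegelPoint_eq {τ : Fin 2 → Fin 2 → ℂ} (hτ : τ ∈ H2) :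
    ∃ p ∈ siegelCoords, siegelPoint p.1 p.2.1 p.2.2 = τ := by
  have hsymm := apply_one_zero_of_mem_H2 hτ
  refine ⟨(τ 0 0, τ 0 1, τ 1 1), mem_siegelCoords.2 ⟨hτ.2.diag_pos (i := 0), ?_⟩, ?_⟩
  · have hdet := hτ.2.det_pos
    rw [Matrix.det_fin_two] at hdet
    simpa [hsymm, sq] using hdet
  · ext i j
    fin_cases i <;> fin_cases j <;> simp [siegelPoint, hsymm]

/-! ### Symmetric powers and the slash action -/

section SymmetricPower

variable {j : ℕ}

/-- The binary form of degree `j` with coordinate vector `v`. The action `symAct j m` corresponds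
to the substitution of `(x, y) m` for `(x, y)`. -/
def binaryForm (v : Fin (j + 1) → ℂ) (x y : ℂ) : ℂ :=
  ∑ l : Fin (j + 1), v l * x ^ (j - (l : ℕ)) * y ^ (l : ℕ)

lemma binaryForm_injective : Function.Injective (binaryForm (j := j)) := by
  intro v w h
  refine Polynomial.injective_ofFn (j + 1) (Polynomial.funext fun y ↦ ?_)
  simpa [binaryForm, Polynomial.ofFn_eq_sum_monomial, Polynomial.eval_finsetSum] using
    congrFun (congrFun h 1) y

lemma binaryForm_smul (a : ℂ) (v : Fin (j + 1) → ℂ) (x y : ℂ) :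
    binaryForm (a • v) x y = a * binaryForm v x y := by
  simp only [binaryForm, Pi.smul_apply, smul_eq_mul, Finset.mul_sum, mul_assoc]

open Polynomial in
lemma natDegree_linear_pow_mul_linear_pow_le (a b c d : ℂ) (m n : ℕ) :
    ((C a + C b * X) ^ m * (C c + C d * X) ^ n).natDegree ≤ m + n := by
  compute_degree

lemma binaryForm_symCoeff (m : Matrix (Fin 2) (Fin 2) ℂ) (l : Fin (j + 1)) (x y : ℂ) :
    binaryForm (symCoeff j m l) x y =
      (m 0 0 * x + m 1 0 * y) ^ (j - (l : ℕ)) * (m 0 1 * x + m 1 1 * y) ^ (l : ℕ) := by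
  suffices h : Set.EqOn (fun x ↦ binaryForm (symCoeff j m l) x y)
      (fun x ↦ (m 0 0 * x + m 1 0 * y) ^ (j - (l : ℕ)) * (m 0 1 * x + m 1 1 * y) ^ (l : ℕ))
      {0}ᶜ from
    congrFun (Continuous.ext_on (dense_compl_singleton 0) (by unfold binaryForm; fun_prop)
      (by fun_prop) h) x
  intro x (hx : x ≠ 0)
  have hj : j - (l : ℕ) + l = j := Nat.sub_add_cancel l.is_le
  have hdeg := natDegree_linear_pow_mul_linear_pow_le (m 0 0) (m 1 0) (m 0 1) (m 1 1) (j - l) l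
  have heval := Polynomial.eval_eq_sum_range' (Nat.lt_succ_of_le (hdeg.trans_eq hj)) (y / x)
  simp only [Polynomial.eval_mul, Polynomial.eval_pow, Polynomial.eval_add, Polynomial.eval_C,
    Polynomial.eval_X] at heval
  calc binaryForm (symCoeff j m l) x y
      = x ^ j * ∑ i : Fin (j + 1), symCoeff j m l i * (y / x) ^ (i : ℕ) := by
        rw [binaryForm, Finset.mul_sum]
        refine Finset.sum_congr rfl fun i _ ↦ ?_
        rw [← pow_sub_mul_pow x i.is_le, div_pow]
        field_simp
    _ = x ^ (j - (l : ℕ)) * x ^ (l : ℕ) * ((m 0 0 + m 1 0 * (y / x)) ^ (j - (l : ℕ)) *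
          (m 0 1 + m 1 1 * (y / x)) ^ (l : ℕ)) := by
        rw [heval, Finset.sum_range, ← pow_add, hj]
        rfl
    _ = (x * (m 0 0 + m 1 0 * (y / x))) ^ (j - (l : ℕ)) *
          (x * (m 0 1 + m 1 1 * (y / x))) ^ (l : ℕ) := by
        rw [mul_pow, mul_pow, mul_mul_mul_comm]
    _ = _ := by
        have hscale (a b : ℂ) : x * (a + b * (y / x)) = a * x + b * y := by
          field_simp
        rw [hscale, hscale]

lemma binaryForm_symAct (m : Matrix (Fin 2) (Fin 2) ℂ) (v : Fin (j + 1) → ℂ) (x y : ℂ) :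
    binaryForm (symAct j m v) x y =
      binaryForm v (m 0 0 * x + m 1 0 * y) (m 0 1 * x + m 1 1 * y) := by
  have hlinear : symAct j m v = ∑ l, v l • symCoeff j m l := by
    ext i
    simp [symAct, mul_comm]
  simp only [mul_assoc, ← binaryForm_symCoeff, hlinear, binaryForm,
    Finset.sum_apply, Pi.smul_apply, smul_eq_mul, Finset.sum_mul, Finset.mul_sum]
  exact Finset.sum_comm

lemma symAct_mul (m n : Matrix (Fin 2) (Fin 2) ℂ) (v : Fin (j + 1) → ℂ) :
    symAct j (m * n) v = symAct j m (symAct j n v) := by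
  refine binaryForm_injective (funext₂ fun x y ↦ ?_)
  simp only [binaryForm_symAct, Matrix.mul_apply, Fin.sum_univ_two]
  congr 1 <;> ring

lemma symAct_one (v : Fin (j + 1) → ℂ) : symAct j 1 v = v :=
  binaryForm_injective (funext₂ fun x y ↦ by simp [binaryForm_symAct])

lemma symAct_swap (v : Fin (j + 1) → ℂ) : symAct j !![0, 1; 1, 0] v = v ∘ Fin.rev := by
  refine binaryForm_injective (funext₂ fun x y ↦ ?_)
  rw [binaryForm_symAct, binaryForm, ← Equiv.sum_comp Fin.revPerm, binaryForm]
  refine Finset.sum_congr rfl fun l _ ↦ ?_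
  simp [Fin.val_rev, Nat.sub_sub_self l.is_le, mul_right_comm]

lemma symAct_unipotent (a : ℂ) (v : Fin (j + 1) → ℂ) (i : Fin (j + 1)) :
    symAct j !![1, a; 0, 1] v i =
      ∑ l : Fin (j + 1), ((l : ℕ).choose i * a ^ ((l : ℕ) - i) : ℂ) * v l := by
  refine Finset.sum_congr rfl fun l _ ↦ congrArg (· * v l) ?_
  have hcoeff := Polynomial.coeff_X_add_C_pow a l i
  simpa [symCoeff, add_comm, mul_comm] using hcoeff

end SymmetricPower

section Slash

variable {j : ℕ} {k : ℤ} {F : (Fin 2 → Fin 2 → ℂ) → Fin (j + 1) → ℂ} {τ : Fin 2 → Fin 2 → ℂ}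

lemma slashS_mul (γ : Matrix (Fin 4) (Fin 4) ℤ) (δ : Sp4Z) (hτ : τ ∈ H2) :
    slashS j k (γ * δ) F τ = slashS j k δ (slashS j k γ F) τ := by
  simp only [slashS, moeb_mul γ δ hτ, den_mul γ δ hτ, Matrix.mul_inv_rev, symAct_mul, symAct_smul,
    smul_smul, Matrix.det_mul, mul_zpow, mul_comm]

lemma slashS_eq_of_mem_Sp4Z2 (hF : IsSiegelCuspForm j k Sp4Z2 (fun _ ↦ 1) F)
    {δ : Matrix (Fin 4) (Fin 4) ℤ} (hδ : δ ∈ Sp4Z2) (hτ : τ ∈ H2) : slashS j k δ F τ = F τ := by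
  have hd : (den δ τ).det ≠ 0 := det_den_ne_zero ⟨δ, hδ.1⟩ hτ
  rw [slashS, hF.2.1 δ hδ τ hτ, one_smul, wt, symAct_smul, smul_smul, ← zpow_add₀ hd,
    neg_add_cancel, zpow_zero, one_smul, ← symAct_mul, Matrix.nonsing_inv_mul _ hd.isUnit,
    symAct_one]

lemma slashS_congr (hF : IsSiegelCuspForm j k Sp4Z2 (fun _ ↦ 1) F) {γ δ : Sp4Z}
    (h : modTwoSp γ = modTwoSp δ) (hτ : τ ∈ H2) : slashS j k γ F τ = slashS j k δ F τ := by
  have hmem : ((γ * δ⁻¹ : Sp4Z) : Matrix (Fin 4) (Fin 4) ℤ) ∈ Sp4Z2 := by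
    rw [coe_mem_Sp4Z2_iff, map_mul, h, ← map_mul, mul_inv_cancel, map_one]
  have hγ : (γ : Matrix (Fin 4) (Fin 4) ℤ) = (γ * δ⁻¹ : Sp4Z) * δ := by
    rw [← coe_mul_Sp4Z, inv_mul_cancel_right]
  rw [hγ, slashS_mul _ δ hτ, slashS, slashS_eq_of_mem_Sp4Z2 hF hmem (moeb_mem_H2 δ hτ), slashS]

end Slash

/-! ### Generators of the modular group -/

section Generators

variable {j : ℕ} {k : ℤ} {F : (Fin 2 → Fin 2 → ℂ) → Fin (j + 1) → ℂ} {τ z w : ℂ}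

/-- The element `(1 S; 0 1)` of `Sp(4, ℤ)` with `S = (0 s; s b)`. -/
def translation (s b : ℤ) : Sp4Z :=
  ⟨!![1, 0, 0, s; 0, 1, s, b; 0, 0, 1, 0; 0, 0, 0, 1], by
    change _ = _
    ext a c
    fin_cases a <;> fin_cases c <;> simp [J4, Matrix.mul_apply, Fin.sum_univ_four]⟩

/-- The element `(U 0; 0 ᵗU⁻¹)` of `Sp(4, ℤ)` with `U = (1 0; l 1)`. -/
def leviUnipotent (l : ℤ) : Sp4Z :=
  ⟨!![1, 0, 0, 0; l, 1, 0, 0; 0, 0, 1, -l; 0, 0, 0, 1], by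
    change _ = _
    ext a c
    fin_cases a <;> fin_cases c <;> simp [J4, Matrix.mul_apply, Fin.sum_univ_four]⟩

/-- The element `(U 0; 0 U)` of `Sp(4, ℤ)` with `U = (0 1; 1 0)`. -/
def leviSwap : Sp4Z := ⟨!![0, 1, 0, 0; 1, 0, 0, 0; 0, 0, 0, 1; 0, 0, 1, 0], by
    change _ = _
    decide +kernel⟩

/-- The block matrix of `σ` acting on the second diagonal variable and fixing the first. -/
def embedSLMatrix (σ : SL(2, ℤ)) : Matrix (Fin 4) (Fin 4) ℤ :=
  !![1, 0, 0, 0; 0, σ 0 0, 0, σ 0 1; 0, 0, 1, 0; 0, σ 1 0, 0, σ 1 1]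

lemma embedSLMatrix_mem_Sp4Z (σ : SL(2, ℤ)) : embedSLMatrix σ ∈ Sp4Z := by
  have hσ := (Matrix.det_fin_two _).symm.trans σ.det_coe
  change _ = _
  ext a c
  fin_cases a <;> fin_cases c <;>
    simp [embedSLMatrix, J4, Matrix.mul_apply, Fin.sum_univ_four] <;> linarith

lemma embedSLMatrix_one : embedSLMatrix 1 = 1 := by
  ext a c
  fin_cases a <;> fin_cases c <;> simp [embedSLMatrix]

lemma embedSLMatrix_mul (ρ σ : SL(2, ℤ)) :
    embedSLMatrix (ρ * σ) = embedSLMatrix ρ * embedSLMatrix σ := by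
  ext a c
  fin_cases a <;> fin_cases c <;>
    simp [embedSLMatrix, Matrix.mul_apply, Fin.sum_univ_four, Fin.sum_univ_two]

/-- The embedding of `SL(2, ℤ)` into `Sp(4, ℤ)` acting on the second diagonal variable. -/
def embedSL : SL(2, ℤ) →* Sp4Z where
  toFun σ := ⟨embedSLMatrix σ, embedSLMatrix_mem_Sp4Z σ⟩
  map_one' := Subtype.ext embedSLMatrix_one
  map_mul' ρ σ := Subtype.ext (embedSLMatrix_mul ρ σ)

lemma modTwoSp_embedSL_congr {ρ σ : SL(2, ℤ)} (h : modTwo ρ = modTwo σ) :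
    modTwoSp (embedSL ρ) = modTwoSp (embedSL σ) := by
  have hentry (a b : Fin 2) : (ρ a b : ZMod 2) = σ a b := by
    rw [← modTwo_apply, h, modTwo_apply]
  ext a c
  fin_cases a <;> fin_cases c <;> simp [modTwoSp_apply, embedSL, embedSLMatrix, hentry]

lemma den_translation (s b : ℤ) (ρ : Fin 2 → Fin 2 → ℂ) : den (translation s b) ρ = 1 := by
  ext a c
  fin_cases a <;> fin_cases c <;>
    simp [den, blk, translation, Matrix.mul_apply, Fin.sum_univ_two]

lemma moeb_translation (s b : ℤ) :
    moeb (translation s b) (siegelPoint τ z w) = siegelPoint τ (z + s) (w + b) := by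
  apply Matrix.of.injective
  rw [of_moeb, den_translation, inv_one, mul_one]
  ext a c
  fin_cases a <;> fin_cases c <;>
    simp [num, blk, translation, siegelPoint, Matrix.mul_apply, Fin.sum_univ_two]

lemma inv_den_leviUnipotent (l : ℤ) (ρ : Fin 2 → Fin 2 → ℂ) :
    (den (leviUnipotent l) ρ)⁻¹ = !![1, (l : ℂ); 0, 1] := by
  refine Matrix.inv_eq_left_inv ?_
  ext a c
  fin_cases a <;> fin_cases c <;>
    simp [den, blk, leviUnipotent, Matrix.mul_apply, Fin.sum_univ_two]

lemma moeb_leviUnipotent (l : ℤ) :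
    moeb (leviUnipotent l) (siegelPoint τ z w) =
      siegelPoint τ (z + l * τ) (w + (2 * l * z + l ^ 2 * τ)) := by
  apply Matrix.of.injective
  rw [of_moeb, inv_den_leviUnipotent]
  ext a c
  fin_cases a <;> fin_cases c <;>
    simp [num, blk, leviUnipotent, siegelPoint, Matrix.mul_apply, Fin.sum_univ_two] <;> ring

lemma den_leviSwap (ρ : Fin 2 → Fin 2 → ℂ) : den leviSwap ρ = !![0, 1; 1, 0] := by
  ext a c
  fin_cases a <;> fin_cases c <;>
    simp [den, blk, leviSwap, Matrix.mul_apply, Fin.sum_univ_two]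

lemma inv_den_leviSwap (ρ : Fin 2 → Fin 2 → ℂ) : (den leviSwap ρ)⁻¹ = !![0, 1; 1, 0] := by
  rw [den_leviSwap]
  exact Matrix.inv_eq_left_inv (by simp [Matrix.one_fin_two])

lemma moeb_leviSwap : moeb leviSwap (siegelPoint τ z w) = siegelPoint w z τ := by
  apply Matrix.of.injective
  rw [of_moeb, inv_den_leviSwap]
  ext a c
  fin_cases a <;> fin_cases c <;>
    simp [num, blk, leviSwap, siegelPoint, Matrix.mul_apply, Fin.sum_univ_two]

lemma den_embedSL (σ : SL(2, ℤ)) :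
    den (embedSL σ) (siegelPoint τ z w) = !![1, 0; σ 1 0 * z, autFactor σ w] := by
  ext a c
  fin_cases a <;> fin_cases c <;>
    simp [den, blk, embedSL, embedSLMatrix, siegelPoint, autFactor, Matrix.mul_apply,
      Fin.sum_univ_two]

lemma inv_den_embedSL (σ : SL(2, ℤ)) (hw : 0 < w.im) :
    (den (embedSL σ) (siegelPoint τ z w))⁻¹ =
      !![1, 0; -(σ 1 0 * z / autFactor σ w), 1 / autFactor σ w] := by
  have hJ := autFactor_ne_zero σ hw
  rw [den_embedSL]
  refine Matrix.inv_eq_left_inv ?_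
  simp [Matrix.one_fin_two, hJ, inv_mul_eq_div]

lemma moeb_embedSL (σ : SL(2, ℤ)) (hw : 0 < w.im) :
    moeb (embedSL σ) (siegelPoint τ z w) =
      siegelPoint (τ - σ 1 0 * z ^ 2 / autFactor σ w) (z / autFactor σ w) (mobius σ w) := by
  have hJ := autFactor_ne_zero σ hw
  have hσ : (σ 0 0 : ℂ) * σ 1 1 - σ 0 1 * σ 1 0 = 1 := by
    exact_mod_cast (Matrix.det_fin_two _).symm.trans σ.det_coe
  apply Matrix.of.injective
  rw [of_moeb, inv_den_embedSL σ hw]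
  ext a c
  fin_cases a <;> fin_cases c <;>
    simp [num, blk, embedSL, embedSLMatrix, siegelPoint, mobius, Matrix.mul_apply,
      Fin.sum_univ_two]
  · field_simp
    ring
  · field_simp
  · field_simp
    rw [autFactor]
    linear_combination z * hσ
  · field_simp

lemma slashS_mul_translation (γ : Matrix (Fin 4) (Fin 4) ℤ) (s b : ℤ)
    (h : (τ, z, w) ∈ siegelCoords) :
    slashS j k (γ * translation s b) F (siegelPoint τ z w) =
      slashS j k γ F (siegelPoint τ (z + s) (w + b)) := by
  rw [slashS_mul γ _ (siegelPoint_mem_H2 h), slashS, den_translation, moeb_translation, inv_one,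
    symAct_one, Matrix.det_one, _root_.one_zpow, one_smul]

lemma slashS_mul_leviUnipotent (γ : Matrix (Fin 4) (Fin 4) ℤ) (l : ℤ)
    (h : (τ, z, w) ∈ siegelCoords) :
    slashS j k (γ * leviUnipotent l) F (siegelPoint τ z w) =
      symAct j !![1, (l : ℂ); 0, 1]
        (slashS j k γ F (siegelPoint τ (z + l * τ) (w + (2 * l * z + l ^ 2 * τ)))) := by
  have hdet : (den (leviUnipotent l) (siegelPoint τ z w)).det = 1 := by
    rw [← inv_inv (Matrix.det _), ← Ring.inverse_eq_inv', ← Matrix.det_nonsing_inv,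
      inv_den_leviUnipotent]
    simp
  rw [slashS_mul γ _ (siegelPoint_mem_H2 h), slashS, hdet, inv_den_leviUnipotent,
    moeb_leviUnipotent, _root_.one_zpow, one_smul]

lemma slashS_mul_leviSwap (γ : Matrix (Fin 4) (Fin 4) ℤ) (h : (τ, z, w) ∈ siegelCoords) :
    slashS j k (γ * leviSwap) F (siegelPoint τ z w) =
      (-1 : ℂ) ^ (-k) • (slashS j k γ F (siegelPoint w z τ) ∘ Fin.rev) := by
  rw [slashS_mul γ _ (siegelPoint_mem_H2 h), slashS, inv_den_leviSwap, den_leviSwap,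
    moeb_leviSwap, symAct_swap, Matrix.det_fin_two_of]
  simp

lemma binaryForm_slashS_mul_embedSL (γ : Matrix (Fin 4) (Fin 4) ℤ) (σ : SL(2, ℤ))
    (h : (τ, z, w) ∈ siegelCoords) (x y : ℂ) :
    binaryForm (slashS j k (γ * embedSL σ) F (siegelPoint τ z w)) x y =
      autFactor σ w ^ (-k) *
        binaryForm (slashS j k γ F (siegelPoint (τ - σ 1 0 * z ^ 2 / autFactor σ w)
          (z / autFactor σ w) (mobius σ w)))
          (x - σ 1 0 * z / autFactor σ w * y) (y / autFactor σ w) := by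
  have hw : 0 < w.im := (mem_siegelCoords.1 (swap_mem_siegelCoords h)).1
  rw [slashS_mul γ _ (siegelPoint_mem_H2 h), slashS, binaryForm_smul, binaryForm_symAct,
    inv_den_embedSL σ hw, moeb_embedSL σ hw, den_embedSL]
  simp [Matrix.det_fin_two_of, sub_eq_add_neg, div_eq_inv_mul]

end Generators

/-! ### Components of the slash translates -/

section Differentiability

open scoped Matrix.Norms.Operator

variable {E : Type*} [NormedAddCommGroup E] [NormedSpace ℂ E] {s : Set E}

lemma differentiableOn_coeff_mul {P Q : E → Polynomial ℂ}
    (hP : ∀ i, DifferentiableOn ℂ (fun p ↦ (P p).coeff i) s)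
    (hQ : ∀ i, DifferentiableOn ℂ (fun p ↦ (Q p).coeff i) s) (i : ℕ) :
    DifferentiableOn ℂ (fun p ↦ (P p * Q p).coeff i) s := by
  simp only [Polynomial.coeff_mul]
  exact DifferentiableOn.fun_sum fun a _ ↦ (hP _).mul (hQ _)

lemma differentiableOn_coeff_pow {P : E → Polynomial ℂ}
    (hP : ∀ i, DifferentiableOn ℂ (fun p ↦ (P p).coeff i) s) (n i : ℕ) :
    DifferentiableOn ℂ (fun p ↦ (P p ^ n).coeff i) s := by
  induction n generalizing i with
  | zero =>
    simp only [_root_.pow_zero]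
    fun_prop
  | succ n ih =>
    simp only [_root_.pow_succ]
    exact differentiableOn_coeff_mul ih hP i

lemma differentiableOn_coeff_linear {a b : E → ℂ} (ha : DifferentiableOn ℂ a s)
    (hb : DifferentiableOn ℂ b s) (i : ℕ) :
    DifferentiableOn ℂ
      (fun p ↦ (Polynomial.C (a p) + Polynomial.C (b p) * Polynomial.X).coeff i) s := by
  simp only [Polynomial.coeff_add, Polynomial.coeff_C, Polynomial.coeff_C_mul]
  split_ifs <;> fun_prop

lemma differentiableOn_symAct {j : ℕ} {m : E → Matrix (Fin 2) (Fin 2) ℂ}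
    {v : E → Fin (j + 1) → ℂ} (hm : DifferentiableOn ℂ m s)
    (hv : DifferentiableOn ℂ v s) : DifferentiableOn ℂ (fun p ↦ symAct j (m p) (v p)) s := by
  have hentry (a b : Fin 2) : DifferentiableOn ℂ (fun p ↦ m p a b) s :=
    differentiableOn_pi.1 (differentiableOn_pi.1 hm a) b
  refine differentiableOn_pi.2 fun i ↦ DifferentiableOn.fun_sum fun l _ ↦
    DifferentiableOn.mul ?_ (differentiableOn_pi.1 hv l)
  exact differentiableOn_coeff_mul
    (differentiableOn_coeff_pow (differentiableOn_coeff_linear (hentry _ _) (hentry _ _)) _)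
    (differentiableOn_coeff_pow (differentiableOn_coeff_linear (hentry _ _) (hentry _ _)) _) i

lemma differentiableOn_matrix_inv {n : Type*} [Fintype n] [DecidableEq n] {m : E → Matrix n n ℂ}
    (hm : DifferentiableOn ℂ m s) (h : ∀ p ∈ s, IsUnit (m p).det) :
    DifferentiableOn ℂ (fun p ↦ (m p)⁻¹) s := by
  simp only [Matrix.nonsing_inv_eq_ringInverse]
  exact hm.inverse fun p hp ↦ (Matrix.isUnit_iff_isUnit_det _).2 (h p hp)

lemma differentiable_linear_of (A B : Matrix (Fin 2) (Fin 2) ℂ) :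
    Differentiable ℂ fun τ : Fin 2 → Fin 2 → ℂ ↦ A * Matrix.of τ + B :=
  (differentiable_id (E := Matrix (Fin 2) (Fin 2) ℂ)).const_mul A |>.add_const B

lemma differentiableOn_inv_den (γ : Sp4Z) : DifferentiableOn ℂ (fun τ ↦ (den γ τ)⁻¹) H2 :=
  differentiableOn_matrix_inv (differentiable_linear_of _ _).differentiableOn
    fun _ ↦ isUnit_det_den γ

lemma differentiableOn_moeb (γ : Sp4Z) : DifferentiableOn ℂ (moeb γ) H2 :=
  (differentiable_linear_of _ _).differentiableOn.mul (differentiableOn_inv_den γ)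

lemma differentiable_det_den (γ : Matrix (Fin 4) (Fin 4) ℤ) :
    Differentiable ℂ fun τ ↦ (den γ τ).det := by
  have hentry (a b : Fin 2) : Differentiable ℂ fun τ ↦ den γ τ a b :=
    differentiable_pi.1 (differentiable_pi.1 (differentiable_linear_of _ _) a) b
  simp only [Matrix.det_fin_two]
  fun_prop

lemma differentiableOn_slashS {j : ℕ} {k : ℤ} {F : (Fin 2 → Fin 2 → ℂ) → Fin (j + 1) → ℂ}
    (hF : DifferentiableOn ℂ F H2) (γ : Sp4Z) : DifferentiableOn ℂ (slashS j k γ F) H2 :=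
  (differentiable_det_den γ).differentiableOn.zpow (Or.inl fun _ ↦ det_den_ne_zero γ) |>.smul <|
    differentiableOn_symAct (differentiableOn_inv_den γ)
      (hF.comp (differentiableOn_moeb γ) fun _ ↦ moeb_mem_H2 γ)

end Differentiability

section Components

variable {j : ℕ} {k : ℤ} {F : (Fin 2 → Fin 2 → ℂ) → Fin (j + 1) → ℂ} {τ z w : ℂ}

/-- The `i`-th component of `F|γ` in the coordinates `τ, z, w` of `H2`, extended by `0` to
`i > j`. -/
def slashComponent (j : ℕ) (k : ℤ) (F : (Fin 2 → Fin 2 → ℂ) → Fin (j + 1) → ℂ) (γ : Sp4Z) (i : ℕ)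
    (τ z w : ℂ) : ℂ :=
  if h : i < j + 1 then slashS j k γ F (siegelPoint τ z w) ⟨i, h⟩ else 0

lemma slashComponent_fin (γ : Sp4Z) (i : Fin (j + 1)) (τ z w : ℂ) :
    slashComponent j k F γ i τ z w = slashS j k γ F (siegelPoint τ z w) i :=
  dif_pos i.2

lemma slashComponent_eq_zero {i : ℕ} (γ : Sp4Z) (h : j < i) (τ z w : ℂ) :
    slashComponent j k F γ i τ z w = 0 :=
  dif_neg (by lia)

lemma sum_slashComponent (γ : Sp4Z) (τ z w x y : ℂ) :
    ∑ i ∈ Finset.range (j + 1), slashComponent j k F γ i τ z w * x ^ (j - i) * y ^ i =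
      binaryForm (slashS j k γ F (siegelPoint τ z w)) x y := by
  rw [Finset.sum_range]
  simp only [slashComponent_fin, binaryForm]

lemma slashComponent_congr (hF : IsSiegelCuspForm j k Sp4Z2 (fun _ ↦ 1) F) {γ δ : Sp4Z}
    (hγδ : modTwoSp γ = modTwoSp δ) (i : ℕ) (h : (τ, z, w) ∈ siegelCoords) :
    slashComponent j k F γ i τ z w = slashComponent j k F δ i τ z w := by
  simp only [slashComponent, slashS_congr hF hγδ (siegelPoint_mem_H2 h)]

lemma slashComponent_mul_of_modTwoSp_eq_one (hF : IsSiegelCuspForm j k Sp4Z2 (fun _ ↦ 1) F)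
    (γ : Sp4Z) {δ : Sp4Z} (hδ : modTwoSp δ = 1) (i : ℕ) (h : (τ, z, w) ∈ siegelCoords) :
    slashComponent j k F (γ * δ) i τ z w = slashComponent j k F γ i τ z w :=
  slashComponent_congr hF (by rw [map_mul, hδ, mul_one]) i h

lemma slashComponent_mul_translation (γ : Sp4Z) (s b : ℤ) (i : ℕ)
    (h : (τ, z, w) ∈ siegelCoords) :
    slashComponent j k F (γ * translation s b) i τ z w =
      slashComponent j k F γ i τ (z + s) (w + b) := by
  simp only [slashComponent, coe_mul_Sp4Z, slashS_mul_translation _ s b h]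

lemma slashComponent_mul_leviUnipotent (γ : Sp4Z) (m i : ℕ) (h : (τ, z, w) ∈ siegelCoords) :
    slashComponent j k F (γ * leviUnipotent m) i τ z w =
      shear j m (slashComponent j k F γ) i τ z w := by
  rw [shear]
  rcases le_or_gt i j with hi | hi
  · lift i to Fin (j + 1) using Nat.lt_succ_of_le hi
    rw [Finset.sum_range]
    simp only [slashComponent_fin, coe_mul_Sp4Z, slashS_mul_leviUnipotent _ _ h,
      symAct_unipotent, Int.cast_natCast]
  · rw [slashComponent_eq_zero _ hi, Finset.sum_eq_zero fun l hl ↦ ?_]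
    rw [Nat.choose_eq_zero_of_lt ((Finset.mem_range_succ_iff.1 hl).trans_lt hi), Nat.cast_zero,
      zero_mul, zero_mul]

lemma slashComponent_mul_leviSwap (γ : Sp4Z) {i : ℕ} (hi : i ≤ j)
    (h : (τ, z, w) ∈ siegelCoords) :
    slashComponent j k F (γ * leviSwap) i τ z w =
      (-1) ^ (-k) * slashComponent j k F γ (j - i) w z τ := by
  lift i to Fin (j + 1) using Nat.lt_succ_of_le hi
  have hrev : j - (i : ℕ) = Fin.rev i := by rw [Fin.val_rev, Nat.add_sub_add_right]
  rw [hrev, slashComponent_fin, slashComponent_fin, coe_mul_Sp4Z, slashS_mul_leviSwap _ h]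
  rfl

lemma differentiable_siegelPoint :
    Differentiable ℂ fun p : ℂ × ℂ × ℂ ↦ siegelPoint p.1 p.2.1 p.2.2 := by
  refine differentiable_pi.2 fun a ↦ differentiable_pi.2 fun b ↦ ?_
  fin_cases a <;> fin_cases b <;>
    simp only [siegelPoint, Fin.zero_eta, Fin.mk_one, Matrix.cons_val] <;> fun_prop

lemma differentiableOn_slashComponent (hF : DifferentiableOn ℂ F H2) (γ : Sp4Z) (i : ℕ) :
    DifferentiableOn ℂ (fun p ↦ slashComponent j k F γ i p.1 p.2.1 p.2.2) siegelCoords := by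
  unfold slashComponent
  split_ifs with hi
  · exact differentiableOn_pi.1 ((differentiableOn_slashS hF γ).comp
      differentiable_siegelPoint.differentiableOn fun _ ↦ siegelPoint_mem_H2) ⟨i, hi⟩
  · exact differentiableOn_const _

lemma diagH_eq_siegelPoint (τ w : ℂ) : diagH τ w = siegelPoint τ 0 w := by
  ext a b
  fin_cases a <;> fin_cases b <;> rfl

lemma tendsto_slashComponent (hF : IsSiegelCuspForm j k Sp4Z2 (fun _ ↦ 1) F) (γ : Sp4Z) (i : ℕ)
    (hτ : 0 < τ.im) :
    Tendsto (fun t : ℝ ↦ slashComponent j k F γ i τ 0 (t * I)) atTop (𝓝 0) := by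
  unfold slashComponent
  split_ifs with hi
  · simp only [← diagH_eq_siegelPoint]
    exact tendsto_pi_nhds.1 (hF.2.2.1 γ γ.2 τ hτ) ⟨i, hi⟩
  · exact tendsto_const_nhds

/-- The translates are indexed by `Sp(4, ℤ)`, on which `SL(2, ℤ)` acts by right multiplication
through `embedSL`. -/
theorem slashFamily_slashComponent (hF : IsSiegelCuspForm j k Sp4Z2 (fun _ ↦ 1) F) :
    SlashFamily j k (slashComponent j k F) (fun γ σ ↦ γ * embedSL σ) where
  differentiableOn := differentiableOn_slashComponent hF.1
  eq_zero_of_lt γ i := slashComponent_eq_zero γ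
  tendsto_cusp γ i τ := tendsto_slashComponent hF γ i
  add_two_right γ i τ z w h := by
    have hcongr := slashComponent_mul_of_modTwoSp_eq_one hF γ (δ := translation 0 2)
      (by decide +kernel) i h
    simpa [hcongr] using (slashComponent_mul_translation (F := F) (k := k) γ 0 2 i h).symm
  add_two_mid γ i τ z w h := by
    have hcongr := slashComponent_mul_of_modTwoSp_eq_one hF γ (δ := translation 2 0)
      (by decide +kernel) i h
    simpa [hcongr] using (slashComponent_mul_translation (F := F) (k := k) γ 2 0 i h).symm
  exists_add_one_mid γ := ⟨γ * translation 1 0, fun i τ z w h ↦ by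
    simpa using slashComponent_mul_translation (F := F) (k := k) γ 1 0 i h⟩
  exists_shear_one γ := ⟨γ * leviUnipotent (1 : ℕ), fun i τ z w ↦
    slashComponent_mul_leviUnipotent γ 1 i⟩
  shear_two γ i τ z w h := by
    rw [← slashComponent_mul_leviUnipotent γ 2 i h,
      slashComponent_mul_of_modTwoSp_eq_one hF γ (by decide +kernel) i h]
  exists_swap γ := ⟨γ * leviSwap, (-1) ^ (-k), zpow_ne_zero _ (by norm_num),
    fun i hi τ z w ↦ slashComponent_mul_leviSwap γ hi⟩
  act_one γ := by rw [map_one, mul_one]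
  act_mul γ ρ σ := by rw [map_mul, mul_assoc]
  act_congr γ ρ σ hρσ i τ z w :=
    slashComponent_congr hF (by rw [map_mul, map_mul, modTwoSp_embedSL_congr hρσ]) i
  slash γ σ τ z w h x y := by
    rw [sum_slashComponent, sum_slashComponent, coe_mul_Sp4Z, binaryForm_slashS_mul_embedSL _ _ h]

end Components

theorem vanishing_Sjk_level_two_small_general {j : ℕ} (hj : j ≤ 11) {k : ℤ}
    (hjk : (j : ℤ) + 4 * k ≤ 17) {Γ : Set (Matrix (Fin 4) (Fin 4) ℤ)} (hΓ : Sp4Z2 ⊆ Γ)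
    {χ : Matrix (Fin 4) (Fin 4) ℤ → ℂ} (hχ : ∀ γ ∈ Sp4Z2, χ γ = 1) : SiegelCusp j k Γ χ = ⊥ := by
  refine (Submodule.eq_bot_iff _).2 fun F hF ↦ funext fun τ ↦ ?_
  have hF2 : IsSiegelCuspForm j k Sp4Z2 (fun _ ↦ 1) F :=
    ⟨hF.1, fun γ hγ τ hτ ↦ by simpa only [hχ γ hγ] using hF.2.1 γ (hΓ hγ) τ hτ, hF.2.2⟩
  by_cases hτ : τ ∈ H2
  · obtain ⟨p, hp, rfl⟩ := exists_siegelPoint_eq hτ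
    have hone : ((1 : Sp4Z) : Matrix (Fin 4) (Fin 4) ℤ) ∈ Sp4Z2 := by
      rw [coe_mem_Sp4Z2_iff, map_one]
    ext i
    rw [← slashS_eq_of_mem_Sp4Z2 hF2 hone hτ, ← slashComponent_fin,
      (slashFamily_slashComponent hF2).eq_zero hj hjk 1 i hp, Pi.zero_apply, Pi.zero_apply]
  · exact hF.2.2.2 τ hτ

/-- For all integers `j` with `0 ≤ j ≤ 8` and all integers `k ≤ 2`, the space
`S_{j,k}(Γ₂[2])` is zero. -/
theorem vanishing_Sjk_level_two_small (j : ℕ) (hj : j ≤ 8) (k : ℤ) (hk : k ≤ 2) :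
    SiegelCusp j k Sp4Z2 (fun _ => 1) = ⊥ :=
  vanishing_Sjk_level_two_small_general (by lia) (by lia) subset_rfl fun _ _ ↦ rfl
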